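/- Let 1<p<∞. There exists a constant C_p>0 such that for every smooth, divergence-free, axially symmetric vector field u = u^r(r,z)e_r + u^θ(r,z)e_θ + u^z(r,z)e_z on ℝ³ with sufficient decay, writing w^θ = ∂_z u^r − ∂_r u^z for the angular component of the vorticity ∇×u and b = u^r e_r + u^z e_z for the swirl-free part of u, one has ‖∇b‖_{L^p(ℝ³)} ≤ C_p ‖w^θ‖_{L^p(ℝ³)} and ‖∇²b‖_{L^p(ℝ³)} ≤ C_p ( ‖∇w^θ‖_{L^p(ℝ³)} + ‖w^θ/r‖_{L^p(ℝ³)} ). -/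

import Mathlib

open MeasureTheory Set ENNReal

noncomputable section

abbrev E3 : Type := EuclideanSpace ℝ (Fin 3)

def pd (i : Fin 3) (f : E3 → ℝ) (x : E3) : ℝ :=
  fderiv ℝ f x (EuclideanSpace.single i 1)

/-- Distance to the `x₃`-axis. -/
def rad (x : E3) : ℝ := Real.sqrt (x 0 ^ 2 + x 1 ^ 2)

/-- Partial derivative in the `r` variable of a function of `(r, z)`. -/
def pdr (f : ℝ → ℝ → ℝ) (r z : ℝ) : ℝ := deriv (fun r' => f r' z) r

/-- Partial derivative in the `z` variable of a function of `(r, z)`. -/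
def pdz (f : ℝ → ℝ → ℝ) (r z : ℝ) : ℝ := deriv (fun z' => f r z') z

/-- A vector field is axially symmetric with cylindrical components `vr, vθ, vz`. -/
def AxisymVec (v : E3 → E3) (vr vθ vz : ℝ → ℝ → ℝ) : Prop :=
  ∀ x : E3, rad x ≠ 0 →
    v x 0 = vr (rad x) (x 2) * (x 0 / rad x) - vθ (rad x) (x 2) * (x 1 / rad x) ∧
    v x 1 = vr (rad x) (x 2) * (x 1 / rad x) + vθ (rad x) (x 2) * (x 0 / rad x) ∧
    v x 2 = vz (rad x) (x 2)

/-- The swirl-free part `b = u^r e_r + u^z e_z` of an axially symmetric field,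
built from the cylindrical components `ur, uz`. -/
def swirlFreePart (ur uz : ℝ → ℝ → ℝ) (x : E3) : E3 :=
  (WithLp.equiv 2 (Fin 3 → ℝ)).symm
    ![ur (rad x) (x 2) * (x 0 / rad x),
      ur (rad x) (x 2) * (x 1 / rad x),
      uz (rad x) (x 2)]

/-- The angular component `w^θ = ∂_z u^r − ∂_r u^z` of the vorticity, as a function
on `ℝ³`. -/
def wTheta (ur uz : ℝ → ℝ → ℝ) (x : E3) : ℝ :=
  pdz ur (rad x) (x 2) - pdr uz (rad x) (x 2)

/-!
The `L^p` bound for second-order Riesz transforms is obtained without singular integrals. Let `f`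
and the `gᵢ` be Schwartz functions on a Euclidean space with `Δ f = ∑ i, ∂_{vᵢ} ∂_{wᵢ} gᵢ`, and let
`h` be a test function. Differentiate `∫ (heat (2t) f) h` in `t`: the heat equation produces the
terms `∫ (heat (2t) ∂_{vᵢ} ∂_{wᵢ} gᵢ) h`, and the semigroup property followed by an integration by
parts puts one derivative and half of the heat flow on each factor. Integration over `t > 0` thus
bounds `|∫ f h|` by a multiple of `∑ i, ∫∫ |∇ heat t gᵢ| |∇ heat t h| dx dt`, and such a dissipation
integral is at most `C ‖gᵢ‖_p ‖h‖_q`, since for a suitable Bellman function `B` the mass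
`∫ B (heat t gᵢ, heat t h)` decreases at least that fast. By duality `‖f‖_p ≤ C ∑ i, ‖gᵢ‖_p`.

A divergence-free field `b` satisfies `Δ bₗ = ∑ k, ∂ₖ (∂ₖ bₗ - ∂ₗ bₖ)`, so its first and second
derivatives are controlled by the entries of its curl and by their first derivatives. The swirl-free
part of an axially symmetric field is its part invariant under the reflection across a plane through
the axis, so it inherits smoothness, decay and incompressibility, also on the axis. Its curl entries
are `w^θ` times `0` or a horizontal component of `± e_r`, whose gradient is `O(1/r)`.
-/

section HeatFlow

open Filter Topology Module

variable {E : Type*} [NormedAddCommGroup E] [InnerProductSpace ℝ E]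

/-- The heat kernel `(4πt)^(-n/2) exp(-|z|²/(4t))` of an `n`-dimensional Euclidean space, for
times `t > 0`. -/
def heatKer (t : ℝ) (z : E) : ℝ :=
  (4 * Real.pi * t) ^ (-(finrank ℝ E / 2 : ℝ)) * Real.exp (-(4 * t)⁻¹ * ‖z‖ ^ 2)

/-- The gradient of the heat kernel in the space variable. -/
def heatKerGrad (t : ℝ) (z : E) : E := (-(heatKer t z / (2 * t))) • z

lemma heatKer_pos {t : ℝ} (ht : 0 < t) (z : E) : 0 < heatKer t z := by
  unfold heatKer; positivity

lemma heatKer_neg (t : ℝ) (z : E) : heatKer t (-z) = heatKer t z := by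
  simp only [heatKer, norm_neg]

lemma heatKer_sub_comm (t : ℝ) (x y : E) : heatKer t (x - y) = heatKer t (y - x) := by
  rw [← heatKer_neg, neg_sub]

lemma heatKer_le {t : ℝ} (ht : 0 < t) (z : E) :
    heatKer t z ≤ (4 * Real.pi * t) ^ (-(finrank ℝ E / 2 : ℝ)) := by
  refine mul_le_of_le_one_right (by positivity) (Real.exp_le_one_iff.2 ?_)
  rw [neg_mul, neg_nonpos]
  positivity

lemma continuous_heatKer (t : ℝ) : Continuous (heatKer (E := E) t) := by
  unfold heatKer; fun_prop

lemma heatKer_sq_smul {s : ℝ} (hs : 0 < s) (z : E) :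
    heatKer (s ^ 2) (s • z) = (s ^ finrank ℝ E)⁻¹ * heatKer 1 z := by
  have hpow : (s ^ 2) ^ (-(finrank ℝ E / 2 : ℝ)) = (s ^ finrank ℝ E)⁻¹ := by
    rw [← Real.rpow_natCast s 2, ← Real.rpow_mul hs.le, ← Real.rpow_natCast,
      ← Real.rpow_neg hs.le]
    congr 1
    push_cast
    rw [mul_neg, mul_div_cancel₀ _ two_ne_zero]
  have hexp : -(4 * s ^ 2)⁻¹ * (s * ‖z‖) ^ 2 = -(4 * 1)⁻¹ * ‖z‖ ^ 2 := by field_simp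
  rw [heatKer, heatKer, norm_smul, Real.norm_of_nonneg hs.le, hexp,
    Real.mul_rpow (by positivity) (sq_nonneg s), hpow, mul_right_comm, mul_comm, mul_one, mul_one]

lemma heatKer_mul_heatKer {s t : ℝ} (hs : 0 < s) (ht : 0 < t) (x y : E) :
    heatKer s (x - y) * heatKer t y =
      heatKer (s + t) x * heatKer (s * t / (s + t)) (y - (t / (s + t)) • x) := by
  -- Completing the square.
  have hexp : -(4 * s)⁻¹ * ‖x - y‖ ^ 2 + -(4 * t)⁻¹ * ‖y‖ ^ 2 =
      -(4 * (s + t))⁻¹ * ‖x‖ ^ 2 +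
        -(4 * (s * t / (s + t)))⁻¹ * ‖y - (t / (s + t)) • x‖ ^ 2 := by
    rw [norm_sub_sq_real, norm_sub_sq_real, inner_smul_right, norm_smul, mul_pow,
      Real.norm_eq_abs, sq_abs, real_inner_comm]
    field_simp
    ring
  have hconst : 4 * Real.pi * s * (4 * Real.pi * t) =
      4 * Real.pi * (s + t) * (4 * Real.pi * (s * t / (s + t))) := by field_simp
  simp only [heatKer]
  rw [mul_mul_mul_comm, ← Real.exp_add, hexp, Real.exp_add,
    ← Real.mul_rpow (by positivity) (by positivity), hconst,
    Real.mul_rpow (by positivity) (by positivity), mul_mul_mul_comm]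

lemma hasFDerivAt_heatKer (t : ℝ) (z : E) :
    HasFDerivAt (heatKer t) (innerSL ℝ (heatKerGrad t z)) z := by
  have h := (((hasStrictFDerivAt_norm_sq z).hasFDerivAt.const_mul (-(4 * t)⁻¹)).exp.const_mul
    ((4 * Real.pi * t) ^ (-(finrank ℝ E / 2 : ℝ))))
  refine h.congr_fderiv ?_
  ext v
  simp only [smul_apply, innerSL_apply_apply, heatKerGrad, heatKer, real_inner_smul_left,
    smul_eq_mul, nsmul_eq_mul, Nat.cast_ofNat, mul_inv]
  ring

lemma continuous_heatKerGrad (t : ℝ) : Continuous (heatKerGrad (E := E) t) :=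
  ((continuous_heatKer t).div_const _).neg.smul continuous_id

lemma mul_exp_neg_sq_le {a : ℝ} (ha : 0 < a) (r : ℝ) :
    r * Real.exp (-a * r ^ 2) ≤ 2 * (1 + a⁻¹) * Real.exp (-(a / 2) * r ^ 2) := by
  have h : r ≤ 2 * (1 + a⁻¹) * (a / 2 * r ^ 2 + 1) := by
    have : 2 * (1 + a⁻¹) * (a / 2 * r ^ 2 + 1) = (a + 1) * r ^ 2 + 2 + 2 * a⁻¹ := by
      field_simp
      ring
    nlinarith [inv_pos.2 ha, mul_nonneg ha.le (sq_nonneg r), sq_nonneg (r - 1)]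
  calc r * Real.exp (-a * r ^ 2)
      ≤ 2 * (1 + a⁻¹) * Real.exp (a / 2 * r ^ 2) * Real.exp (-a * r ^ 2) := by
        gcongr
        exact h.trans (by gcongr; exact Real.add_one_le_exp _)
    _ = 2 * (1 + a⁻¹) * Real.exp (-(a / 2) * r ^ 2) := by
        rw [mul_assoc, ← Real.exp_add]
        congr 2
        ring

lemma exists_norm_mul_heatKer_le {t : ℝ} (ht : 0 < t) :
    ∃ C, ∀ z : E, ‖z‖ * heatKer t z ≤ C * heatKer (2 * t) z := by
  refine ⟨(4 * Real.pi * t) ^ (-(finrank ℝ E / 2 : ℝ)) * (2 * (1 + ((4 * t)⁻¹)⁻¹)) /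
    (4 * Real.pi * (2 * t)) ^ (-(finrank ℝ E / 2 : ℝ)), fun z => ?_⟩
  have h := mul_exp_neg_sq_le (inv_pos.2 (by positivity : 0 < 4 * t)) ‖z‖
  calc ‖z‖ * heatKer t z = (4 * Real.pi * t) ^ (-(finrank ℝ E / 2 : ℝ)) *
        (‖z‖ * Real.exp (-(4 * t)⁻¹ * ‖z‖ ^ 2)) := by rw [heatKer]; ring
    _ ≤ (4 * Real.pi * t) ^ (-(finrank ℝ E / 2 : ℝ)) *
        (2 * (1 + ((4 * t)⁻¹)⁻¹) * Real.exp (-((4 * t)⁻¹ / 2) * ‖z‖ ^ 2)) := by gcongr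
    _ = _ := by
        have : (4 * t)⁻¹ / 2 = (4 * (2 * t))⁻¹ := by field_simp
        rw [heatKer, this]
        field_simp

lemma exists_norm_heatKerGrad_le {t : ℝ} (ht : 0 < t) :
    ∃ C, 0 ≤ C ∧ ∀ z : E, ‖heatKerGrad t z‖ ≤ C := by
  obtain ⟨C, hC⟩ := exists_norm_mul_heatKer_le (E := E) ht
  have hC0 : 0 ≤ C := nonneg_of_mul_nonneg_left
    ((mul_nonneg (norm_nonneg 0) (heatKer_pos ht 0).le).trans (hC 0))
    (heatKer_pos (by positivity) (0 : E))
  refine ⟨(C * (4 * Real.pi * (2 * t)) ^ (-(finrank ℝ E / 2 : ℝ))) / (2 * t), by positivity,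
    fun z => ?_⟩
  have h : ‖heatKerGrad t z‖ = ‖z‖ * heatKer t z / (2 * t) := by
    rw [heatKerGrad, norm_smul, norm_neg, Real.norm_of_nonneg
      (div_nonneg (heatKer_pos ht z).le (by positivity))]
    ring
  rw [h]
  exact div_le_div_of_nonneg_right ((hC z).trans
    (mul_le_mul_of_nonneg_left (heatKer_le (by positivity) z) hC0)) (by positivity)

variable [FiniteDimensional ℝ E] [MeasurableSpace E] [BorelSpace E]

lemma integrable_heatKer {t : ℝ} (ht : 0 < t) : Integrable (heatKer (E := E) t) := by
  have h := GaussianFourier.integrable_cexp_neg_mul_sq_norm_add (V := E)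
    (b := ((4 * t)⁻¹ : ℝ)) (by simpa using ht) 0 0
  refine (h.re.const_mul ((4 * Real.pi * t) ^ (-(finrank ℝ E / 2 : ℝ)))).congr
    (Eventually.of_forall fun z => ?_)
  simp only [heatKer, zero_mul, add_zero, ← Complex.ofReal_neg, ← Complex.ofReal_pow,
    ← Complex.ofReal_mul, ← Complex.ofReal_exp, RCLike.re_eq_complex_re, Complex.ofReal_re]

lemma integral_heatKer {t : ℝ} (ht : 0 < t) : ∫ z : E, heatKer t z = 1 := by
  unfold heatKer
  rw [integral_const_mul, GaussianFourier.integral_rexp_neg_mul_sq_norm (by positivity),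
    div_inv_eq_mul, ← mul_assoc, mul_comm Real.pi, Real.rpow_neg (by positivity),
    inv_mul_cancel₀ (by positivity)]

lemma integrable_norm_mul_heatKer {t : ℝ} (ht : 0 < t) :
    Integrable fun z : E => ‖z‖ * heatKer t z := by
  obtain ⟨C, hC⟩ := exists_norm_mul_heatKer_le (E := E) ht
  refine ((integrable_heatKer (by positivity : 0 < 2 * t)).const_mul C).mono'
    (continuous_norm.mul (continuous_heatKer t)).aestronglyMeasurable
    (Eventually.of_forall fun z => ?_)
  rw [Real.norm_of_nonneg (mul_nonneg (norm_nonneg z) (heatKer_pos ht z).le)]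
  exact hC z

/-- The heat semigroup at time `t > 0`. -/
def heat (t : ℝ) (f : E → ℝ) : E → ℝ :=
  convolution (heatKer t) f (ContinuousLinearMap.lsmul ℝ ℝ) volume

lemma heat_eq_integral_sub (t : ℝ) (f : E → ℝ) (x : E) :
    heat t f x = ∫ z, heatKer t z * f (x - z) := rfl

lemma heat_apply (t : ℝ) (f : E → ℝ) (x : E) :
    heat t f x = ∫ y, heatKer t (x - y) * f y :=
  convolution_eq_swap _

lemma heat_eq_integral_sub_smul {s : ℝ} (hs : 0 < s) (f : E → ℝ) (x : E) :
    heat (s ^ 2) f x = ∫ z, heatKer 1 z * f (x - s • z) := by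
  have h := Measure.integral_comp_smul_of_nonneg (volume : Measure E)
    (fun z => heatKer (s ^ 2) z * f (x - z)) s (hR := hs.le)
  simp_rw [heatKer_sq_smul hs, mul_assoc] at h
  rw [integral_const_mul, smul_eq_mul, ← heat_eq_integral_sub] at h
  exact (mul_left_cancel₀ (by positivity) h).symm

lemma integrable_heatKer_mul {t : ℝ} (ht : 0 < t) {f : E → ℝ} (hf : Integrable f) (x : E) :
    Integrable fun y => heatKer t (x - y) * f y :=
  hf.bdd_mul (c := (4 * Real.pi * t) ^ (-(finrank ℝ E / 2 : ℝ)))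
    ((continuous_heatKer t).comp (continuous_sub_left x)).aestronglyMeasurable
    (Eventually.of_forall fun y => by
      rw [Real.norm_of_nonneg (heatKer_pos ht _).le]; exact heatKer_le ht _)

lemma integrable_heat {t : ℝ} (ht : 0 < t) {f : E → ℝ} (hf : Integrable f) :
    Integrable (heat t f) :=
  (integrable_heatKer ht).integrable_convolution _ hf

lemma abs_heat_le {t : ℝ} (ht : 0 < t) {f : E → ℝ} (hf : Integrable f) (x : E) :
    |heat t f x| ≤ (4 * Real.pi * t) ^ (-(finrank ℝ E / 2 : ℝ)) * ∫ y, |f y| := by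
  rw [heat_apply, ← integral_const_mul]
  refine norm_integral_le_of_norm_le (f := fun y => heatKer t (x - y) * f y)
    (hf.abs.const_mul _) (Eventually.of_forall fun y => ?_)
  rw [norm_mul, Real.norm_of_nonneg (heatKer_pos ht _).le]
  exact mul_le_mul_of_nonneg_right (heatKer_le ht _) (norm_nonneg _)

lemma abs_heat_le_of_abs_le {t M : ℝ} (ht : 0 < t) {f : E → ℝ} (hM : ∀ y, |f y| ≤ M) (x : E) :
    |heat t f x| ≤ M := by
  calc |heat t f x| ≤ ∫ z : E, heatKer t z * M :=
        norm_integral_le_of_norm_le (f := fun z => heatKer t z * f (x - z))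
          ((integrable_heatKer ht).mul_const M) (Eventually.of_forall fun z => by
            rw [norm_mul, Real.norm_of_nonneg (heatKer_pos ht _).le]
            exact mul_le_mul_of_nonneg_left (hM _) (heatKer_pos ht _).le)
    _ = M := by rw [integral_mul_const, integral_heatKer ht, one_mul]

lemma heat_finsetSum {ι : Type*} {t : ℝ} (ht : 0 < t) (s : Finset ι) {f : ι → E → ℝ}
    (hf : ∀ i ∈ s, Integrable (f i)) (x : E) :
    heat t (fun y => ∑ i ∈ s, f i y) x = ∑ i ∈ s, heat t (f i) x := by
  simp_rw [heat_apply, Finset.mul_sum]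
  exact integral_finsetSum _ fun i hi => integrable_heatKer_mul ht (hf i hi) x

lemma heat_pos {t : ℝ} (ht : 0 < t) {f : E → ℝ} (hf : Integrable f) (hf0 : 0 ≤ f)
    (hne : ¬ f =ᵐ[volume] 0) (x : E) : 0 < heat t f x := by
  have h0 : 0 ≤ fun y => heatKer t (x - y) * f y := fun y =>
    mul_nonneg (heatKer_pos ht _).le (hf0 y)
  rw [heat_apply]
  refine (integral_nonneg h0).lt_of_ne' fun h => hne ?_
  filter_upwards [(integral_eq_zero_iff_of_nonneg h0 (integrable_heatKer_mul ht hf x)).1 h]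
    with y hy using (mul_eq_zero.1 hy).resolve_left (heatKer_pos ht _).ne'

lemma integrable_heatKer_mul_prod {t : ℝ} (ht : 0 < t) {f : E → ℝ} (hf : Integrable f) :
    Integrable fun p : E × E => heatKer t (p.1 - p.2) * f p.2 := by
  refine (hf.convolution_integrand (ContinuousLinearMap.lsmul ℝ ℝ).flip
    (integrable_heatKer (E := E) ht)).congr (Eventually.of_forall fun p => ?_)
  simp only [ContinuousLinearMap.flip_apply, ContinuousLinearMap.lsmul_apply, smul_eq_mul]

lemma integral_heatKer_mul_heatKer {s t : ℝ} (hs : 0 < s) (ht : 0 < t) (x y : E) :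
    ∫ w, heatKer s (x - w) * heatKer t (w - y) = heatKer (s + t) (x - y) := by
  have hst : 0 < s * t / (s + t) := by positivity
  have h : ∀ w, heatKer s (x - w) * heatKer t (w - y) = heatKer (s + t) (x - y) *
      heatKer (s * t / (s + t)) (w - (y + (t / (s + t)) • (x - y))) := fun w => by
    rw [← sub_sub w, ← heatKer_mul_heatKer hs ht, sub_sub_sub_cancel_right]
  simp_rw [h]
  rw [integral_const_mul, integral_sub_right_eq_self, integral_heatKer hst, mul_one]

lemma heat_heat {s t : ℝ} (hs : 0 < s) (ht : 0 < t) {f : E → ℝ} (hf : Integrable f) :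
    heat s (heat t f) = heat (s + t) f := by
  ext x
  have hint : Integrable fun p : E × E => heatKer s (x - p.1) * (heatKer t (p.1 - p.2) * f p.2) :=
    (integrable_heatKer_mul_prod ht hf).bdd_mul (c := (4 * Real.pi * s) ^ (-(finrank ℝ E / 2 : ℝ)))
      ((continuous_heatKer s).comp (by fun_prop)).aestronglyMeasurable
      (Eventually.of_forall fun p => by
        rw [Real.norm_of_nonneg (heatKer_pos hs _).le]; exact heatKer_le hs _)
  calc heat s (heat t f) x
      = ∫ w, ∫ y, heatKer s (x - w) * (heatKer t (w - y) * f y) := by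
        simp_rw [heat_apply, integral_const_mul]
    _ = ∫ y, ∫ w, heatKer s (x - w) * (heatKer t (w - y) * f y) := integral_integral_swap hint
    _ = heat (s + t) f x := by
        simp_rw [heat_apply, ← mul_assoc, integral_mul_const,
          integral_heatKer_mul_heatKer hs ht]

lemma integral_heat_mul {t M : ℝ} (ht : 0 < t) {f g : E → ℝ} (hf : Integrable f)
    (hg : AEStronglyMeasurable g) (hM : ∀ y, |g y| ≤ M) :
    ∫ x, heat t f x * g x = ∫ x, f x * heat t g x := by
  have hint : Integrable fun p : E × E => heatKer t (p.1 - p.2) * f p.2 * g p.1 :=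
    (integrable_heatKer_mul_prod ht hf).mul_bdd (c := M) hg.comp_fst
      (Eventually.of_forall fun p => hM _)
  calc ∫ x, heat t f x * g x = ∫ x, ∫ y, heatKer t (x - y) * f y * g x := by
        simp_rw [heat_apply, integral_mul_const]
    _ = ∫ y, ∫ x, heatKer t (x - y) * f y * g x := integral_integral_swap hint
    _ = ∫ y, f y * heat t g y := by
        simp_rw [heat_apply, ← integral_const_mul]
        refine integral_congr_ae (Eventually.of_forall fun y =>
          integral_congr_ae (Eventually.of_forall fun x => ?_))
        simp only [heatKer_sub_comm t x y]
        ring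

end HeatFlow

section HeatGradient

open Filter Topology Module

variable {E : Type*} [NormedAddCommGroup E] [InnerProductSpace ℝ E] [FiniteDimensional ℝ E]
  [MeasurableSpace E] [BorelSpace E]

/-- The gradient of the heat flow `heat t f` in the space variable. -/
def heatGrad (t : ℝ) (f : E → ℝ) (x : E) : E := ∫ y, f y • heatKerGrad t (x - y)

lemma integrable_smul_heatKerGrad {t : ℝ} (ht : 0 < t) {f : E → ℝ} (hf : Integrable f) (x : E) :
    Integrable fun y => f y • heatKerGrad t (x - y) := by
  obtain ⟨C, -, hC⟩ := exists_norm_heatKerGrad_le (E := E) ht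
  exact hf.smul_bdd C
    ((continuous_heatKerGrad t).comp (continuous_sub_left x)).aestronglyMeasurable
    (Eventually.of_forall fun y => hC _)

lemma hasFDerivAt_heat {t : ℝ} (ht : 0 < t) {f : E → ℝ} (hf : Integrable f) (x : E) :
    HasFDerivAt (heat t f) (innerSL ℝ (heatGrad t f x)) x := by
  obtain ⟨C, -, hC⟩ := exists_norm_heatKerGrad_le (E := E) ht
  have hgrad := integrable_smul_heatKerGrad ht hf x
  have h : HasFDerivAt (fun x => ∫ y, heatKer t (x - y) * f y)
      (∫ y, innerSL ℝ (f y • heatKerGrad t (x - y))) x := by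
    refine hasFDerivAt_integral_of_dominated_of_fderiv_le (bound := fun y => |f y| * C)
      (F' := fun x y => innerSL ℝ (f y • heatKerGrad t (x - y))) univ_mem
      (Eventually.of_forall fun x => (integrable_heatKer_mul ht hf x).aestronglyMeasurable)
      (integrable_heatKer_mul ht hf x)
      ((innerSL ℝ).continuous.comp_aestronglyMeasurable hgrad.aestronglyMeasurable)
      (Eventually.of_forall fun y x _ => ?_) (hf.abs.mul_const C)
      (Eventually.of_forall fun y x _ => ?_)
    · rw [innerSL_apply_norm, norm_smul]
      exact mul_le_mul_of_nonneg_left (hC _) (norm_nonneg _)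
    · rw [map_smul]
      exact ((hasFDerivAt_heatKer t (x - y)).comp x ((hasFDerivAt_id x).sub_const y)).mul_const
        (f y)
  rw [ContinuousLinearMap.integral_comp_comm (innerSL ℝ) hgrad] at h
  exact h.congr_of_eventuallyEq (Eventually.of_forall (heat_apply t f))

lemma exists_norm_heatGrad_le {t : ℝ} (ht : 0 < t) {f : E → ℝ} (hf : Integrable f) :
    ∃ C, ∀ x, ‖heatGrad t f x‖ ≤ C := by
  obtain ⟨C, -, hC⟩ := exists_norm_heatKerGrad_le (E := E) ht
  refine ⟨∫ y, |f y| * C, fun x => norm_integral_le_of_norm_le (hf.abs.mul_const C)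
    (Eventually.of_forall fun y => ?_)⟩
  rw [norm_smul]
  exact mul_le_mul_of_nonneg_left (hC _) (norm_nonneg _)

lemma continuous_heat {t : ℝ} (ht : 0 < t) {f : E → ℝ} (hf : Integrable f) :
    Continuous (heat t f) :=
  continuous_iff_continuousAt.2 fun x => (hasFDerivAt_heat ht hf x).continuousAt

lemma measurable_heat (t : ℝ) {f : E → ℝ} (hf : Measurable f) : Measurable (heat t f) := by
  have h : Measurable fun p : E × E => heatKer t (p.1 - p.2) * f p.2 := by
    unfold heatKer
    fun_prop
  simp_rw [funext (heat_apply t f)]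
  exact h.stronglyMeasurable.integral_prod_right'.measurable

lemma exists_lipschitzWith_heat {t : ℝ} (ht : 0 < t) {f : E → ℝ} (hf : Integrable f) :
    ∃ L, LipschitzWith L (heat t f) := by
  obtain ⟨C, hC⟩ := exists_norm_heatGrad_le ht hf
  refine ⟨C.toNNReal, lipschitzWith_of_nnnorm_fderiv_le
    (fun x => (hasFDerivAt_heat ht hf x).differentiableAt) fun x => ?_⟩
  rw [(hasFDerivAt_heat ht hf x).fderiv, ← NNReal.coe_le_coe, coe_nnnorm, innerSL_apply_norm]
  exact (hC x).trans (Real.le_coe_toNNReal C)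

lemma measurable_uncurry_heatGrad {f : E → ℝ} (hf : Measurable f) :
    Measurable fun p : ℝ × E => heatGrad p.1 f p.2 := by
  have h : Measurable fun p : (ℝ × E) × E => f p.2 • heatKerGrad p.1.1 (p.1.2 - p.2) := by
    unfold heatKerGrad heatKer
    fun_prop
  exact h.stronglyMeasurable.integral_prod_right'.measurable

lemma heatGrad_sub {t : ℝ} (ht : 0 < t) {f g : E → ℝ} (hf : Integrable f) (hg : Integrable g)
    (x : E) : heatGrad t (f - g) x = heatGrad t f x - heatGrad t g x := by
  simp_rw [heatGrad, Pi.sub_apply, sub_smul]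
  exact integral_sub (integrable_smul_heatKerGrad ht hf x) (integrable_smul_heatKerGrad ht hg x)

lemma heatGrad_congr_ae {f g : E → ℝ} (h : f =ᵐ[volume] g) (t : ℝ) :
    heatGrad t f = heatGrad t g := by
  ext1 x
  exact integral_congr_ae (h.mono fun y hy => by simp only [hy])

lemma heatGrad_zero (t : ℝ) : heatGrad t (0 : E → ℝ) = 0 := by
  ext1 x
  simp only [heatGrad, Pi.zero_apply, zero_smul, integral_zero]

lemma heatGrad_const_smul (t c : ℝ) (f : E → ℝ) : heatGrad t (c • f) = c • heatGrad t f := by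
  ext1 x
  simp only [heatGrad, Pi.smul_apply, smul_assoc, integral_smul]

variable (E) in
/-- The law at time `1` of the heat flow started at the origin. -/
def heatMeasure : Measure E := volume.withDensity fun z => ENNReal.ofReal (heatKer 1 z)

instance : IsProbabilityMeasure (heatMeasure E) where
  measure_univ := by
    rw [heatMeasure, withDensity_apply _ MeasurableSet.univ, setLIntegral_univ,
      ← ofReal_integral_eq_lintegral_ofReal (integrable_heatKer one_pos)
        (Eventually.of_forall fun z => (heatKer_pos one_pos z).le),
      integral_heatKer one_pos, ENNReal.ofReal_one]

lemma integral_heatMeasure {F : Type*} [NormedAddCommGroup F] [NormedSpace ℝ F] (f : E → F) :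
    ∫ z, f z ∂heatMeasure E = ∫ z, heatKer 1 z • f z := by
  rw [heatMeasure, integral_withDensity_eq_integral_toReal_smul
    (continuous_heatKer 1).measurable.ennreal_ofReal (Eventually.of_forall fun z => ofReal_lt_top)]
  simp_rw [ENNReal.toReal_ofReal (heatKer_pos one_pos _).le]

lemma heat_sq {s : ℝ} (hs : 0 < s) (f : E → ℝ) (x : E) :
    heat (s ^ 2) f x = ∫ z, f (x - s • z) ∂heatMeasure E := by
  simp_rw [integral_heatMeasure, smul_eq_mul, heat_eq_integral_sub_smul hs]

lemma integrable_norm_heatMeasure : Integrable (fun z : E => ‖z‖) (heatMeasure E) := by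
  rw [heatMeasure, integrable_withDensity_iff (continuous_heatKer 1).measurable.ennreal_ofReal
    (Eventually.of_forall fun z => ofReal_lt_top)]
  simp_rw [ENNReal.toReal_ofReal (heatKer_pos one_pos _).le]
  exact integrable_norm_mul_heatKer one_pos

lemma integral_inner_heatMeasure (a : E) : ∫ z, inner ℝ a z ∂heatMeasure E = 0 := by
  have h := integral_neg_eq_self (fun z : E => heatKer 1 z • inner ℝ a z) volume
  simp_rw [heatKer_neg, inner_neg_right, smul_neg, integral_neg] at h
  rw [integral_heatMeasure]
  exact self_eq_neg.1 h.symm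

lemma lintegral_lintegral_heatMeasure {F : E → ℝ≥0∞} (hF : Measurable F) (s : ℝ) :
    ∫⁻ x, ∫⁻ z, F (x - s • z) ∂heatMeasure E = ∫⁻ x, F x := by
  rw [lintegral_lintegral_swap (by fun_prop)]
  simp_rw [lintegral_sub_right_eq_self F]
  rw [lintegral_const, measure_univ, mul_one]

lemma integrable_comp_sub_smul {f : E → ℝ} (hf : Measurable f) {M : ℝ} (hM : ∀ x, |f x| ≤ M)
    (s : ℝ) (x : E) : Integrable (fun z => f (x - s • z)) (heatMeasure E) :=
  .of_bound (hf.comp (by fun_prop)).aestronglyMeasurable M (Eventually.of_forall fun z => hM _)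

lemma lintegral_enorm_heat_rpow_le {p t : ℝ} (hp : 1 ≤ p) (ht : 0 < t) {f : E → ℝ}
    (hf : Measurable f) : ∫⁻ x, ‖heat t f x‖ₑ ^ p ≤ ∫⁻ x, ‖f x‖ₑ ^ p := by
  have hp0 : 0 < p := one_pos.trans_le hp
  have hjensen : ∀ x, ‖heat t f x‖ₑ ^ p ≤ ∫⁻ z, ‖f (x - √t • z)‖ₑ ^ p ∂heatMeasure E := fun x => by
    have hle : ‖heat t f x‖ₑ ≤
        eLpNorm (fun z => f (x - √t • z)) (ENNReal.ofReal p) (heatMeasure E) :=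
      calc ‖heat t f x‖ₑ = ‖∫ z, f (x - √t • z) ∂heatMeasure E‖ₑ := by
            rw [← heat_sq (Real.sqrt_pos.2 ht), Real.sq_sqrt ht.le]
        _ ≤ eLpNorm (fun z => f (x - √t • z)) 1 (heatMeasure E) := by
            rw [eLpNorm_one_eq_lintegral_enorm]
            exact enorm_integral_le_lintegral_enorm _
        _ ≤ _ := eLpNorm_le_eLpNorm_of_exponent_le (one_le_ofReal.2 hp)
            (hf.comp (by fun_prop)).aestronglyMeasurable
    rw [eLpNorm_eq_lintegral_rpow_enorm_toReal (by simpa using hp0) ofReal_ne_top,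
      toReal_ofReal hp0.le, one_div] at hle
    exact (ENNReal.le_rpow_inv_iff hp0).1 hle
  calc ∫⁻ x, ‖heat t f x‖ₑ ^ p ≤ ∫⁻ x, ∫⁻ z, ‖f (x - √t • z)‖ₑ ^ p ∂heatMeasure E :=
        lintegral_mono hjensen
    _ = ∫⁻ x, ‖f x‖ₑ ^ p :=
        lintegral_lintegral_heatMeasure (F := fun x => ‖f x‖ₑ ^ p) (by fun_prop) _

end HeatGradient

section Bellman

lemma add_deriv_add_le_of_two_mul_le_deriv2 {φ φ' φ'' : ℝ → ℝ} {m : ℝ}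
    (h1 : ∀ τ ∈ Icc (0 : ℝ) 1, HasDerivAt φ (φ' τ) τ)
    (h2 : ∀ τ ∈ Icc (0 : ℝ) 1, HasDerivAt φ' (φ'' τ) τ)
    (h3 : ∀ τ ∈ Icc (0 : ℝ) 1, 2 * m ≤ φ'' τ) : φ 0 + φ' 0 + m ≤ φ 1 := by
  have hφ' : MonotoneOn (fun τ => φ' τ - 2 * m * τ) (Icc 0 1) := by
    have hd : ∀ τ ∈ Icc (0 : ℝ) 1, HasDerivAt (fun τ => φ' τ - 2 * m * τ) (φ'' τ - 2 * m * 1) τ :=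
      fun τ hτ => (h2 τ hτ).sub ((hasDerivAt_id τ).const_mul (2 * m))
    refine monotoneOn_of_hasDerivWithinAt_nonneg (f' := fun τ => φ'' τ - 2 * m * 1)
      (convex_Icc 0 1) (fun τ hτ => (hd τ hτ).continuousAt.continuousWithinAt)
      (fun τ hτ => (hd τ (interior_subset hτ)).hasDerivWithinAt) fun τ hτ => ?_
    linarith [h3 τ (interior_subset hτ)]
  have hφ : MonotoneOn (fun τ => φ τ - φ' 0 * τ - m * τ ^ 2) (Icc 0 1) := by
    have hd : ∀ τ ∈ Icc (0 : ℝ) 1, HasDerivAt (fun τ => φ τ - φ' 0 * τ - m * τ ^ 2)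
        (φ' τ - φ' 0 * 1 - m * (2 * τ)) τ := fun τ hτ =>
      ((h1 τ hτ).sub ((hasDerivAt_id τ).const_mul (φ' 0))).sub
        (by simpa using (hasDerivAt_pow 2 τ).const_mul m)
    refine monotoneOn_of_hasDerivWithinAt_nonneg (f' := fun τ => φ' τ - φ' 0 * 1 - m * (2 * τ))
      (convex_Icc 0 1) (fun τ hτ => (hd τ hτ).continuousAt.continuousWithinAt)
      (fun τ hτ => (hd τ (interior_subset hτ)).hasDerivWithinAt) fun τ hτ => ?_
    have hτ' := interior_subset hτ
    have := hφ' (left_mem_Icc.2 zero_le_one) hτ' hτ'.1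
    simp only [mul_zero, sub_zero] at this
    linarith
  have := hφ (left_mem_Icc.2 zero_le_one) (right_mem_Icc.2 zero_le_one) zero_le_one
  simp only [mul_zero, mul_one, sub_zero, ne_eq, OfNat.ofNat_ne_zero, not_false_eq_true, zero_pow,
    one_pow] at this
  linarith

/-- The bump `s ↦ 1 / (1 + s ^ 2)` whose concavity near `0` makes the Bellman function convex. -/
def bump (s : ℝ) : ℝ := (1 + s ^ 2)⁻¹

/-- The first derivative of `bump`. -/
def bumpDeriv (s : ℝ) : ℝ := -(2 * s * bump s ^ 2)

/-- The second derivative of `bump`. -/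
def bumpDeriv2 (s : ℝ) : ℝ := 6 * bump s ^ 2 - 8 * bump s ^ 3

lemma bump_pos (s : ℝ) : 0 < bump s := by
  unfold bump; positivity

lemma bump_le_one (s : ℝ) : bump s ≤ 1 :=
  inv_le_one_of_one_le₀ (le_add_of_nonneg_right (sq_nonneg s))

lemma sq_mul_bump (s : ℝ) : s ^ 2 * bump s = 1 - bump s := by
  unfold bump; field_simp; ring

lemma hasDerivAt_bump (s : ℝ) : HasDerivAt bump (bumpDeriv s) s := by
  have h := ((hasDerivAt_pow 2 s).const_add 1).fun_inv (by positivity)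
  refine h.congr_deriv ?_
  simp only [bumpDeriv, bump, Nat.cast_ofNat, Nat.add_one_sub_one, pow_one]
  field_simp

lemma hasDerivAt_bumpDeriv (s : ℝ) : HasDerivAt bumpDeriv (bumpDeriv2 s) s := by
  have h := (((hasDerivAt_id s).const_mul 2).mul ((hasDerivAt_bump s).pow 2)).neg
  refine h.congr_deriv ?_
  simp only [bumpDeriv, bumpDeriv2, id_eq, Pi.pow_apply, Nat.cast_ofNat, Nat.add_one_sub_one,
    pow_one]
  linear_combination 8 * bump s ^ 2 * sq_mul_bump s

/-- The derivative of `y ^ q * bump (x * y ^ (-(q - 1)))`, divided by `y ^ q`, in the scale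
invariant variables `s = x * y ^ (-(q - 1))`, `σ = a * y ^ (-(q - 1))` and `β = b / y`, where
`(a, b)` is the direction. -/
def scaledDeriv (q s σ β : ℝ) : ℝ := q * β * bump s + bumpDeriv s * (σ - (q - 1) * s * β)

/-- The second derivative matching `scaledDeriv`. -/
def scaledHessian (q s σ β : ℝ) : ℝ :=
  bumpDeriv2 s * (σ - (q - 1) * s * β) ^ 2 + 2 * bumpDeriv s * (σ * β) +
    q * (q - 1) * (bump s - s * bumpDeriv s) * β ^ 2

lemma hasDerivAt_mul_bump {q τ : ℝ} {P s σ β : ℝ → ℝ}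
    (hP : HasDerivAt P (q * β τ * P τ) τ) (hs : HasDerivAt s (σ τ - (q - 1) * s τ * β τ) τ) :
    HasDerivAt (fun τ => P τ * bump (s τ)) (P τ * scaledDeriv q (s τ) (σ τ) (β τ)) τ := by
  refine (hP.mul ((hasDerivAt_bump (s τ)).comp τ hs)).congr_deriv ?_
  simp only [scaledDeriv, Function.comp_apply]
  ring

lemma hasDerivAt_mul_scaledDeriv {q τ : ℝ} {P s σ β : ℝ → ℝ}
    (hP : HasDerivAt P (q * β τ * P τ) τ) (hs : HasDerivAt s (σ τ - (q - 1) * s τ * β τ) τ)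
    (hσ : HasDerivAt σ (-((q - 1) * σ τ * β τ)) τ) (hβ : HasDerivAt β (-(β τ ^ 2)) τ) :
    HasDerivAt (fun τ => P τ * scaledDeriv q (s τ) (σ τ) (β τ))
      (P τ * scaledHessian q (s τ) (σ τ) (β τ)) τ := by
  refine (hP.mul (((hβ.const_mul q).mul ((hasDerivAt_bump (s τ)).comp τ hs)).add
    (((hasDerivAt_bumpDeriv (s τ)).comp τ hs).mul
      (hσ.sub ((hs.const_mul (q - 1)).mul hβ))))).congr_deriv ?_
  simp only [scaledHessian, Function.comp_apply, Pi.mul_apply, Pi.add_apply, Pi.sub_apply]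
  ring

lemma two_mul_abs_mul_abs_le_of_coeff {A X D σ β : ℝ} (hA : 1 ≤ A) (hX : |X| ≤ 4) (hD : 9 ≤ D) :
    2 * (|σ| * |β|) ≤ A * σ ^ 2 + X * (σ * β) + D * β ^ 2 := by
  have hXσβ : -(4 * (|σ| * |β|)) ≤ X * (σ * β) := by
    rw [← abs_mul]
    refine (neg_le_neg (mul_le_mul_of_nonneg_right hX (abs_nonneg _))).trans ?_
    rw [← abs_mul]
    exact neg_abs_le _
  nlinarith [sq_nonneg (|σ| - 3 * |β|), sq_abs σ, sq_abs β,
    mul_le_mul_of_nonneg_right hA (sq_nonneg σ), mul_le_mul_of_nonneg_right hD (sq_nonneg β)]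

lemma one_le_sub_bumpDeriv2 {s A : ℝ} (hs : 0 ≤ s) (hA : 0 ≤ A) (hA' : 1 / 4 ≤ s → 3 / 2 ≤ A) :
    1 ≤ A - bumpDeriv2 s := by
  have h0 := bump_pos s
  unfold bumpDeriv2
  rcases le_or_gt (1 / 4) s with h | h
  · nlinarith [hA' h, mul_nonneg (by linarith : 0 ≤ 4 * bump s + 1) (sq_nonneg (2 * bump s - 1))]
  · have : 16 / 17 ≤ bump s := by nlinarith [sq_mul_bump s]
    nlinarith [mul_nonneg (sq_nonneg (bump s)) (sub_nonneg.2 this)]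

lemma abs_mul_bumpDeriv2_sub_bumpDeriv_le {c s : ℝ} (hc0 : 0 ≤ c) (hc1 : c ≤ 1) (hs : 0 ≤ s) :
    |2 * (c * s * bumpDeriv2 s - bumpDeriv s)| ≤ 4 := by
  have h0 := bump_pos s
  have h1 := bump_le_one s
  have : 0 ≤ s * bump s := mul_nonneg hs h0.le
  have hs1 : s * bump s ≤ 1 / 2 := by
    nlinarith [mul_nonneg (sq_nonneg (s - 1)) h0.le, sq_mul_bump s]
  have hquad : |6 * bump s - 8 * bump s ^ 2| ≤ 2 :=
    abs_le.2 ⟨by nlinarith, by nlinarith [sq_nonneg (bump s - 1 / 2)]⟩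
  calc |2 * (c * s * bumpDeriv2 s - bumpDeriv s)|
      = |2 * c * (s * bump s) * (6 * bump s - 8 * bump s ^ 2) + 4 * (s * bump s) * bump s| := by
        unfold bumpDeriv bumpDeriv2
        ring_nf
    _ ≤ 2 * c * (s * bump s) * |6 * bump s - 8 * bump s ^ 2| + 4 * (s * bump s) * bump s := by
        refine (abs_add_le _ _).trans_eq ?_
        rw [abs_mul, abs_of_nonneg (by positivity : 0 ≤ 2 * c * (s * bump s)),
          abs_of_nonneg (by positivity : 0 ≤ 4 * (s * bump s) * bump s)]
    _ ≤ 2 * 1 * (1 / 2) * 2 + 4 * (1 / 2) * 1 := by gcongr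
    _ = 4 := by norm_num

lemma sq_mul_bumpDeriv2_add_le {q s : ℝ} (hq1 : 1 ≤ q) (hq2 : q ≤ 2) :
    (q - 1) ^ 2 * s ^ 2 * bumpDeriv2 s + q * (q - 1) * (bump s - s * bumpDeriv s) ≤ 5 := by
  have h0 := bump_pos s
  have h1 := bump_le_one s
  have hfst : (1 - bump s) * (6 * bump s - 8 * bump s ^ 2) ≤ 1 := by
    nlinarith [mul_nonneg (sub_nonneg.2 h1) (sq_nonneg (8 * bump s - 3))]
  have hsnd : bump s + 2 * (1 - bump s) * bump s ≤ 2 := by nlinarith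
  calc (q - 1) ^ 2 * s ^ 2 * bumpDeriv2 s + q * (q - 1) * (bump s - s * bumpDeriv s)
      = (q - 1) ^ 2 * ((1 - bump s) * (6 * bump s - 8 * bump s ^ 2)) +
          q * (q - 1) * (bump s + 2 * (1 - bump s) * bump s) := by
        unfold bumpDeriv bumpDeriv2
        linear_combination ((q - 1) ^ 2 * (6 * bump s - 8 * bump s ^ 2) +
          2 * q * (q - 1) * bump s) * sq_mul_bump s
    _ ≤ (q - 1) ^ 2 * 1 + q * (q - 1) * 2 := by
        have : 0 ≤ q * (q - 1) := by nlinarith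
        gcongr
    _ ≤ 5 := by nlinarith

lemma two_mul_abs_mul_abs_le_sub_scaledHessian {q s A D σ β : ℝ} (hq1 : 1 ≤ q) (hq2 : q ≤ 2)
    (hs : 0 ≤ s) (hA : 0 ≤ A) (hA' : 1 / 4 ≤ s → 3 / 2 ≤ A) (hD : 14 ≤ D) :
    2 * (|σ| * |β|) ≤ A * σ ^ 2 + D * β ^ 2 - scaledHessian q s σ β := by
  refine (two_mul_abs_mul_abs_le_of_coeff (one_le_sub_bumpDeriv2 hs hA hA')
    (abs_mul_bumpDeriv2_sub_bumpDeriv_le (sub_nonneg.2 hq1) (by linarith) hs)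
    (D := D - ((q - 1) ^ 2 * s ^ 2 * bumpDeriv2 s + q * (q - 1) * (bump s - s * bumpDeriv s)))
    (by linarith [sq_mul_bumpDeriv2_add_le (s := s) hq1 hq2])).trans_eq ?_
  unfold scaledHessian
  ring

/-- The Bellman function of the bilinear embedding with exponents `p ≥ 2` and `q ≤ 2`, on the open
positive quadrant. -/
def bellman (p q K x y : ℝ) : ℝ := K * x ^ p + K * y ^ q - y ^ q * bump (x * y ^ (-(q - 1)))

/-- The derivative of `bellman p q K` at `(x, y)` in the direction `(a, b)`. -/
def bellmanDeriv (p q K x y a b : ℝ) : ℝ :=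
  K * (p * (a / x) * x ^ p) + K * (q * (b / y) * y ^ q) -
    y ^ q * scaledDeriv q (x * y ^ (-(q - 1))) (a * y ^ (-(q - 1))) (b / y)

/-- The second derivative of `bellman p q K` at `(x, y)` in the direction `(a, b)`. -/
def bellmanHessian (p q K x y a b : ℝ) : ℝ :=
  K * (p * (p - 1) * (a / x) ^ 2 * x ^ p) + K * (q * (q - 1) * (b / y) ^ 2 * y ^ q) -
    y ^ q * scaledHessian q (x * y ^ (-(q - 1))) (a * y ^ (-(q - 1))) (b / y)

lemma measurable_bellman (p q K : ℝ) : Measurable fun v : ℝ × ℝ => bellman p q K v.1 v.2 := by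
  unfold bellman bump; fun_prop

lemma bellman_nonneg {p q K x y : ℝ} (hK : 1 ≤ K) (hx : 0 < x) (hy : 0 < y) :
    0 ≤ bellman p q K x y := by
  have h : y ^ q * bump (x * y ^ (-(q - 1))) ≤ y ^ q :=
    mul_le_of_le_one_right (by positivity) (bump_le_one _)
  unfold bellman
  nlinarith [Real.rpow_pos_of_pos hx p, Real.rpow_pos_of_pos hy q]

lemma bellman_le {p q K x y : ℝ} (hy : 0 < y) : bellman p q K x y ≤ K * (x ^ p + y ^ q) := by
  have : 0 ≤ y ^ q * bump (x * y ^ (-(q - 1))) := mul_nonneg (by positivity) (bump_pos _).le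
  unfold bellman
  linarith

lemma bellmanDeriv_eq (p q K x y a b : ℝ) :
    bellmanDeriv p q K x y a b =
      bellmanDeriv p q K x y 1 0 * a + bellmanDeriv p q K x y 0 1 * b := by
  unfold bellmanDeriv scaledDeriv
  ring

section Line

variable {x y a b τ : ℝ}

lemma hasDerivAt_line (x a τ : ℝ) : HasDerivAt (fun τ => x + τ * a) a τ := by
  simpa using ((hasDerivAt_id τ).mul_const a).const_add x

lemma hasDerivAt_div_line (hy : 0 < y + τ * b) :
    HasDerivAt (fun τ => b / (y + τ * b)) (-((b / (y + τ * b)) ^ 2)) τ :=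
  ((hasDerivAt_const τ b).fun_div (hasDerivAt_line y b τ) hy.ne').congr_deriv (by field_simp; ring)

lemma hasDerivAt_line_rpow (hy : 0 < y + τ * b) (e : ℝ) :
    HasDerivAt (fun τ => (y + τ * b) ^ e) (e * (b / (y + τ * b)) * (y + τ * b) ^ e) τ := by
  refine ((hasDerivAt_line y b τ).rpow_const (p := e) (Or.inl hy.ne')).congr_deriv ?_
  rw [Real.rpow_sub_one hy.ne']
  ring

lemma hasDerivAt_deriv_line_rpow (hy : 0 < y + τ * b) (e : ℝ) :
    HasDerivAt (fun τ => e * (b / (y + τ * b)) * (y + τ * b) ^ e)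
      (e * (e - 1) * (b / (y + τ * b)) ^ 2 * (y + τ * b) ^ e) τ :=
  (((hasDerivAt_div_line hy).const_mul e).mul (hasDerivAt_line_rpow hy e)).congr_deriv (by ring)

lemma hasDerivAt_line_mul_rpow (hy : 0 < y + τ * b) (c : ℝ) :
    HasDerivAt (fun τ => (x + τ * a) * (y + τ * b) ^ (-c))
      (a * (y + τ * b) ^ (-c) - c * ((x + τ * a) * (y + τ * b) ^ (-c)) * (b / (y + τ * b))) τ :=
  ((hasDerivAt_line x a τ).mul (hasDerivAt_line_rpow hy (-c))).congr_deriv (by ring)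

lemma hasDerivAt_bellman_line (p q K : ℝ) (hx : 0 < x + τ * a) (hy : 0 < y + τ * b) :
    HasDerivAt (fun τ => bellman p q K (x + τ * a) (y + τ * b))
      (bellmanDeriv p q K (x + τ * a) (y + τ * b) a b) τ :=
  (((hasDerivAt_line_rpow hx p).const_mul K).add ((hasDerivAt_line_rpow hy q).const_mul K)).sub
    (hasDerivAt_mul_bump (σ := fun τ => a * (y + τ * b) ^ (-(q - 1)))
      (β := fun τ => b / (y + τ * b)) (hasDerivAt_line_rpow hy q)
      (hasDerivAt_line_mul_rpow hy (q - 1)))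

lemma hasDerivAt_bellmanDeriv_line (p q K : ℝ) (hx : 0 < x + τ * a) (hy : 0 < y + τ * b) :
    HasDerivAt (fun τ => bellmanDeriv p q K (x + τ * a) (y + τ * b) a b)
      (bellmanHessian p q K (x + τ * a) (y + τ * b) a b) τ :=
  (((hasDerivAt_deriv_line_rpow hx p).const_mul K).add
    ((hasDerivAt_deriv_line_rpow hy q).const_mul K)).sub
    (hasDerivAt_mul_scaledDeriv (hasDerivAt_line_rpow hy q) (hasDerivAt_line_mul_rpow hy (q - 1))
      (((hasDerivAt_line_rpow hy (-(q - 1))).const_mul a).congr_deriv (by ring))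
      (hasDerivAt_div_line hy))

end Line

lemma bellmanHessian_eq {p q K x y a b : ℝ} (hpq : p.HolderConjugate q) (hx : 0 < x) (hy : 0 < y) :
    bellmanHessian p q K x y a b = y ^ q *
      (K * (p * (p - 1)) * (x * y ^ (-(q - 1))) ^ (p - 2) * (a * y ^ (-(q - 1))) ^ 2 +
        K * (q * (q - 1)) * (b / y) ^ 2 -
        scaledHessian q (x * y ^ (-(q - 1))) (a * y ^ (-(q - 1))) (b / y)) := by
  have hpow : y ^ q * (x * y ^ (-(q - 1))) ^ (p - 2) * (y ^ (-(q - 1))) ^ 2 = x ^ p / x ^ 2 := by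
    rw [Real.mul_rpow hx.le (by positivity), ← Real.rpow_natCast (y ^ (-(q - 1))) 2,
      ← Real.rpow_mul hy.le, ← Real.rpow_mul hy.le, Real.rpow_sub hx, Real.rpow_two,
      mul_left_comm, mul_assoc, ← Real.rpow_add hy, ← Real.rpow_add hy]
    have : q + -(q - 1) * (p - 2) + -(q - 1) * (2 : ℕ) = 0 := by
      push_cast
      linear_combination -hpq.sub_one_mul_conj
    rw [this, Real.rpow_zero, mul_one]
  unfold bellmanHessian
  linear_combination (-(K * (p * (p - 1)) * a ^ 2)) * hpow

/-- The constant for which `bellman p q K` is convex enough. -/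
def bellmanConst (p q : ℝ) : ℝ := 4 ^ (p - 2) + 14 / (q * (q - 1))

lemma two_mul_abs_mul_abs_le_bellmanHessian {p q x y a b : ℝ} (hpq : p.HolderConjugate q)
    (hp : 2 ≤ p) (hx : 0 < x) (hy : 0 < y) :
    2 * (|a| * |b|) ≤ bellmanHessian p q (bellmanConst p q) x y a b := by
  have hq1 := hpq.symm.lt
  have hq2 : q ≤ 2 := by
    nlinarith [hpq.sub_one_mul_conj, mul_nonneg (sub_nonneg.2 hp) (sub_pos.2 hq1).le]
  have hqq : 0 < q * (q - 1) := mul_pos (by linarith) (by linarith)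
  have hs : 0 < x * y ^ (-(q - 1)) := by positivity
  have hpp : 2 ≤ p * (p - 1) := by nlinarith
  have hK : (4 : ℝ) ^ (p - 2) ≤ bellmanConst p q := le_add_of_nonneg_right (by positivity)
  have hKpp : 0 ≤ bellmanConst p q * (p * (p - 1)) :=
    mul_nonneg (le_trans (by positivity) hK) (by linarith)
  have hA : 0 ≤ bellmanConst p q * (p * (p - 1)) * (x * y ^ (-(q - 1))) ^ (p - 2) := by
    positivity
  have hA' : 1 / 4 ≤ x * y ^ (-(q - 1)) →
      3 / 2 ≤ bellmanConst p q * (p * (p - 1)) * (x * y ^ (-(q - 1))) ^ (p - 2) := fun h =>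
    calc (3 / 2 : ℝ) ≤ 4 ^ (p - 2) * 2 * (1 / 4) ^ (p - 2) := by
          rw [mul_right_comm, ← Real.mul_rpow (by norm_num) (by norm_num)]
          norm_num
      _ ≤ _ := by
          gcongr
          exact le_trans (by positivity) hK
  have hD : 14 ≤ bellmanConst p q * (q * (q - 1)) := by
    rw [bellmanConst, add_mul, div_mul_cancel₀ _ hqq.ne']
    exact le_add_of_nonneg_left (by positivity)
  have hab : |a| * |b| = y ^ q * (|a * y ^ (-(q - 1))| * |b / y|) := by
    rw [abs_mul, abs_div, abs_of_pos hy, abs_of_pos (Real.rpow_pos_of_pos hy _), neg_sub,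
      Real.rpow_sub hy, Real.rpow_one]
    field_simp
  rw [bellmanHessian_eq hpq hx hy, hab, mul_left_comm]
  exact mul_le_mul_of_nonneg_left
    (two_mul_abs_mul_abs_le_sub_scaledHessian hq1.le hq2 hs.le hA hA' hD) (by positivity)

lemma bellman_add_bellmanDeriv_add_le {p q x y x' y' : ℝ} (hpq : p.HolderConjugate q) (hp : 2 ≤ p)
    (hx : 0 < x) (hy : 0 < y) (hx' : 0 < x') (hy' : 0 < y') :
    bellman p q (bellmanConst p q) x y +
        bellmanDeriv p q (bellmanConst p q) x y (x' - x) (y' - y) + |x' - x| * |y' - y| ≤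
      bellman p q (bellmanConst p q) x' y' := by
  have hpos : ∀ {z z' τ : ℝ}, 0 < z → 0 < z' → τ ∈ Icc (0 : ℝ) 1 → 0 < z + τ * (z' - z) := by
    intro z z' τ hz hz' hτ
    rcases hτ.2.eq_or_lt with rfl | h
    · linarith
    · nlinarith [mul_pos hz (sub_pos.2 h), mul_nonneg hτ.1 hz'.le]
  have h := add_deriv_add_le_of_two_mul_le_deriv2
    (fun τ hτ => hasDerivAt_bellman_line p q (bellmanConst p q) (hpos hx hx' hτ) (hpos hy hy' hτ))
    (fun τ hτ => hasDerivAt_bellmanDeriv_line p q _ (hpos hx hx' hτ) (hpos hy hy' hτ))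
    (fun τ hτ => two_mul_abs_mul_abs_le_bellmanHessian hpq hp (hpos hx hx' hτ) (hpos hy hy' hτ))
  simpa only [zero_mul, add_zero, one_mul, add_sub_cancel] using h

/-- The properties of a Bellman function on the open positive quadrant that the bilinear embedding
needs: size and a supporting plane with a bilinear gain at every point. -/
structure IsBellman (p q K : ℝ) (B : ℝ → ℝ → ℝ) : Prop where
  measurable : Measurable fun v : ℝ × ℝ => B v.1 v.2
  nonneg : ∀ {x y : ℝ}, 0 < x → 0 < y → 0 ≤ B x y
  le : ∀ {x y : ℝ}, 0 < x → 0 < y → B x y ≤ K * (x ^ p + y ^ q)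
  exists_gain : ∀ {x y : ℝ}, 0 < x → 0 < y → ∃ α γ : ℝ, ∀ {x' y' : ℝ}, 0 < x' → 0 < y' →
    B x y + (α * (x' - x) + γ * (y' - y)) + |x' - x| * |y' - y| ≤ B x' y'

lemma IsBellman.swap {p q K : ℝ} {B : ℝ → ℝ → ℝ} (hB : IsBellman p q K B) :
    IsBellman q p K fun x y => B y x where
  measurable := hB.measurable.comp measurable_swap
  nonneg hx hy := hB.nonneg hy hx
  le hx hy := (hB.le hy hx).trans_eq (by rw [add_comm])
  exists_gain hx hy := by
    obtain ⟨α, γ, h⟩ := hB.exists_gain hy hx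
    exact ⟨γ, α, fun hx' hy' => (le_of_eq (by ring)).trans (h hy' hx')⟩

lemma isBellman_bellman {p q : ℝ} (hpq : p.HolderConjugate q) (hp : 2 ≤ p) :
    IsBellman p q (bellmanConst p q) (bellman p q (bellmanConst p q)) where
  measurable := measurable_bellman p q _
  nonneg hx hy := by
    have hqq : 0 < q * (q - 1) := mul_pos hpq.symm.pos hpq.symm.sub_one_pos
    have h : (1 : ℝ) ≤ 4 ^ (p - 2) := Real.one_le_rpow (by norm_num) (by linarith)
    exact bellman_nonneg (h.trans (le_add_of_nonneg_right (by positivity))) hx hy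
  le _ hy := bellman_le hy
  exists_gain {x y} hx hy := ⟨bellmanDeriv p q (bellmanConst p q) x y 1 0,
    bellmanDeriv p q (bellmanConst p q) x y 0 1, fun {x' y'} hx' hy' => by
      rw [← bellmanDeriv_eq]
      exact bellman_add_bellmanDeriv_add_le hpq hp hx hy hx' hy'⟩

theorem exists_isBellman {p q : ℝ} (hpq : p.HolderConjugate q) : ∃ K B, IsBellman p q K B := by
  rcases le_total 2 p with hp | hp
  · exact ⟨_, _, isBellman_bellman hpq hp⟩
  · have hq : 2 ≤ q := by nlinarith [hpq.sub_one_mul_conj, hpq.sub_one_pos]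
    exact ⟨_, _, (isBellman_bellman hpq.symm hq).swap⟩

end Bellman

section Dissipation

open Filter Topology

lemma integral_pos_of_forall_pos {Ω : Type*} [MeasurableSpace Ω] {μ : Measure Ω} [NeZero μ]
    {w : Ω → ℝ} (hw : Integrable w μ) (hw0 : ∀ ω, 0 < w ω) : 0 < ∫ ω, w ω ∂μ := by
  rw [integral_pos_iff_support_of_nonneg (fun ω => (hw0 ω).le) hw,
    show Function.support w = univ from eq_univ_of_forall fun ω => (hw0 ω).ne']
  exact Measure.measure_univ_pos.2 (NeZero.ne μ)

lemma integral_mul_sub_integral {Ω : Type*} [MeasurableSpace Ω] {μ : Measure Ω}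
    [IsProbabilityMeasure μ] {w : Ω → ℝ} (hw : Integrable w μ) (α : ℝ) :
    ∫ ω, α * (w ω - ∫ ω', w ω' ∂μ) ∂μ = 0 := by
  rw [integral_const_mul, integral_sub hw (integrable_const _), integral_const, probReal_univ,
    one_smul, sub_self, mul_zero]

lemma IsBellman.lintegral_gain_add_le {p q K : ℝ} {B : ℝ → ℝ → ℝ} (hB : IsBellman p q K B)
    {Ω : Type*} [MeasurableSpace Ω] {μ : Measure Ω} [IsProbabilityMeasure μ] {u v : Ω → ℝ}
    (hu : Integrable u μ) (hv : Integrable v μ) (hu0 : ∀ ω, 0 < u ω) (hv0 : ∀ ω, 0 < v ω) :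
    ∫⁻ ω, ‖u ω - ∫ ω', u ω' ∂μ‖ₑ * ‖v ω - ∫ ω', v ω' ∂μ‖ₑ ∂μ +
        ENNReal.ofReal (B (∫ ω, u ω ∂μ) (∫ ω, v ω ∂μ)) ≤
      ∫⁻ ω, ENNReal.ofReal (B (u ω) (v ω)) ∂μ := by
  set m := ∫ ω, u ω ∂μ
  set n := ∫ ω, v ω ∂μ
  have hm : 0 < m := integral_pos_of_forall_pos hu hu0
  have hn : 0 < n := integral_pos_of_forall_pos hv hv0
  obtain ⟨α, γ, hgain⟩ := hB.exists_gain hm hn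
  rcases eq_or_ne (∫⁻ ω, ENNReal.ofReal (B (u ω) (v ω)) ∂μ) ⊤ with htop | htop
  · exact htop ▸ le_top
  have hB0 : 0 ≤ᵐ[μ] fun ω => B (u ω) (v ω) :=
    Eventually.of_forall fun ω => hB.nonneg (hu0 ω) (hv0 ω)
  have hBint : Integrable (fun ω => B (u ω) (v ω)) μ :=
    (lintegral_ofReal_ne_top_iff_integrable
      (hB.measurable.comp_aemeasurable
        (hu.aemeasurable.prodMk hv.aemeasurable)).aestronglyMeasurable hB0).1 htop
  have hlinu : Integrable (fun ω => α * (u ω - m)) μ := (hu.sub (integrable_const m)).const_mul α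
  have hlinv : Integrable (fun ω => γ * (v ω - n)) μ := (hv.sub (integrable_const n)).const_mul γ
  have hlin : Integrable (fun ω => α * (u ω - m) + γ * (v ω - n)) μ := hlinu.add hlinv
  have hrem : ∫ ω, (B (u ω) (v ω) - (α * (u ω - m) + γ * (v ω - n))) ∂μ =
      ∫ ω, B (u ω) (v ω) ∂μ := by
    rw [integral_sub hBint hlin, integral_add hlinu hlinv,
      integral_mul_sub_integral hu, integral_mul_sub_integral hv, add_zero, sub_zero]
  have hle : ∀ ω, |u ω - m| * |v ω - n| + B m n ≤
      B (u ω) (v ω) - (α * (u ω - m) + γ * (v ω - n)) := fun ω => by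
    linarith [hgain (hu0 ω) (hv0 ω)]
  have hBmn : 0 ≤ B m n := hB.nonneg hm hn
  have hrem' : ∫⁻ ω, ENNReal.ofReal (B (u ω) (v ω) - (α * (u ω - m) + γ * (v ω - n))) ∂μ =
      ∫⁻ ω, ENNReal.ofReal (B (u ω) (v ω)) ∂μ := by
    rw [← ofReal_integral_eq_lintegral_ofReal hBint hB0, ← hrem]
    exact (ofReal_integral_eq_lintegral_ofReal (hBint.sub hlin)
      (Eventually.of_forall fun ω => le_trans (by positivity) (hle ω))).symm
  rw [← hrem', ← mul_one (ENNReal.ofReal (B m n)), ← measure_univ (μ := μ), ← lintegral_const,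
    ← lintegral_add_right _ measurable_const]
  refine lintegral_mono fun ω => ?_
  rw [← enorm_mul, Real.enorm_eq_ofReal_abs, abs_mul, ← ENNReal.ofReal_add (by positivity) hBmn]
  exact ofReal_le_ofReal (hle ω)

variable {E : Type*} [NormedAddCommGroup E] [InnerProductSpace ℝ E]

lemma tendsto_slope_sub_smul {u : E → ℝ} {x a : E} (hu : HasFDerivAt u (innerSL ℝ a) x) (z : E) :
    Tendsto (fun s : ℝ => s⁻¹ * (u (x - s • z) - u x)) (𝓝[>] 0) (𝓝 (-inner ℝ a z)) := by
  have h : HasDerivAt (fun s : ℝ => u (x - s • z)) (-inner ℝ a z) 0 := by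
    have hline : HasDerivAt (fun s : ℝ => x - s • z) (-z) 0 := by
      simpa using ((hasDerivAt_id (0 : ℝ)).smul_const z).const_sub x
    have hu' : HasFDerivAt u (innerSL ℝ a) (x - (0 : ℝ) • z) := by rwa [zero_smul, sub_zero]
    refine (hu'.comp_hasDerivAt 0 hline).congr_deriv ?_
    rw [innerSL_apply_apply, inner_neg_right]
  have h' := (hasDerivAt_iff_tendsto_slope.1 h).mono_left
    (nhdsWithin_mono 0 fun s hs => (mem_Ioi.1 hs).ne')
  simpa only [slope_fun_def, sub_zero, zero_smul, smul_eq_mul, vsub_eq_sub] using h'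

variable [FiniteDimensional ℝ E] [MeasurableSpace E] [BorelSpace E]

/-- The expected covariation `|u - heat u| |v - heat v|` of a heat flow of length `s ^ 2`,
integrated over all starting points. -/
def heatCovariation (s : ℝ) (u v : E → ℝ) : ℝ≥0∞ :=
  ∫⁻ x, ∫⁻ z, ‖u (x - s • z) - heat (s ^ 2) u x‖ₑ * ‖v (x - s • z) - heat (s ^ 2) v x‖ₑ
    ∂heatMeasure E

lemma IsBellman.heatCovariation_add_lintegral_heat_le {p q K : ℝ} {B : ℝ → ℝ → ℝ}
    (hB : IsBellman p q K B) {u v : E → ℝ} (hu : Integrable u) (hv : Integrable v)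
    (hum : Measurable u) (hvm : Measurable v) {M N : ℝ} (hM : ∀ x, |u x| ≤ M) (hN : ∀ x, |v x| ≤ N)
    (hu0 : ∀ x, 0 < u x) (hv0 : ∀ x, 0 < v x) {s : ℝ} (hs : 0 < s) :
    heatCovariation s u v + ∫⁻ x, ENNReal.ofReal (B (heat (s ^ 2) u x) (heat (s ^ 2) v x)) ≤
      ∫⁻ x, ENNReal.ofReal (B (u x) (v x)) := by
  have hs2 : 0 < s ^ 2 := by positivity
  have hBm : Measurable fun x => ENNReal.ofReal (B (heat (s ^ 2) u x) (heat (s ^ 2) v x)) :=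
    (hB.measurable.comp ((continuous_heat hs2 hu).measurable.prodMk
      (continuous_heat hs2 hv).measurable)).ennreal_ofReal
  have hmass := lintegral_lintegral_heatMeasure (F := fun x => ENNReal.ofReal (B (u x) (v x)))
    (hB.measurable.comp (hum.prodMk hvm)).ennreal_ofReal s
  rw [heatCovariation, ← lintegral_add_right _ hBm, ← hmass]
  refine lintegral_mono fun x => ?_
  simp_rw [heat_sq hs]
  exact hB.lintegral_gain_add_le (integrable_comp_sub_smul hum hM s x)
    (integrable_comp_sub_smul hvm hN s x) (fun z => hu0 _) fun z => hv0 _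

lemma tendsto_slope_heat {u : E → ℝ} {x a : E} {L : NNReal} {M : ℝ} (hL : LipschitzWith L u)
    (hM : ∀ x, |u x| ≤ M) (hu : HasFDerivAt u (innerSL ℝ a) x) :
    Tendsto (fun s : ℝ => s⁻¹ * (heat (s ^ 2) u x - u x)) (𝓝[>] 0) (𝓝 0) := by
  have h : Tendsto (fun s : ℝ => ∫ z, s⁻¹ * (u (x - s • z) - u x) ∂heatMeasure E) (𝓝[>] 0)
      (𝓝 (∫ z, -inner ℝ a z ∂heatMeasure E)) := by
    refine tendsto_integral_filter_of_dominated_convergence (fun z => L * ‖z‖)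
      (Eventually.of_forall fun s => ?_) ?_ (integrable_norm_heatMeasure.const_mul _)
      (Eventually.of_forall (tendsto_slope_sub_smul hu))
    · exact (continuous_const.mul ((hL.continuous.comp (by fun_prop)).sub
        continuous_const)).aestronglyMeasurable
    · filter_upwards [self_mem_nhdsWithin] with s hs
      refine Eventually.of_forall fun z => ?_
      have hs0 : 0 < s := hs
      have hdist := hL.dist_le_mul (x - s • z) x
      rw [Real.dist_eq, dist_eq_norm, sub_sub_cancel_left, norm_neg, norm_smul,
        Real.norm_of_nonneg hs0.le] at hdist
      rw [norm_mul, norm_inv, Real.norm_of_nonneg hs0.le, inv_mul_le_iff₀ hs0]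
      exact hdist.trans_eq (by ring)
  rw [integral_neg, integral_inner_heatMeasure, neg_zero] at h
  refine h.congr' ?_
  filter_upwards [self_mem_nhdsWithin] with s hs
  rw [integral_const_mul, integral_sub (integrable_comp_sub_smul hL.continuous.measurable hM s x)
    (integrable_const _), ← heat_sq hs]
  simp

lemma tendsto_slope_sub_heat {u : E → ℝ} {x a : E} {L : NNReal} {M : ℝ} (hL : LipschitzWith L u)
    (hM : ∀ x, |u x| ≤ M) (hu : HasFDerivAt u (innerSL ℝ a) x) (z : E) :
    Tendsto (fun s : ℝ => s⁻¹ * (u (x - s • z) - heat (s ^ 2) u x)) (𝓝[>] 0)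
      (𝓝 (-inner ℝ a z)) := by
  have h := (tendsto_slope_sub_smul hu z).sub (tendsto_slope_heat hL hM hu)
  rw [sub_zero] at h
  exact h.congr fun s => by ring

end Dissipation

section GaussianLowerBound

open Metric

variable {E : Type*} [NormedAddCommGroup E] [InnerProductSpace ℝ E]

lemma quarter_le_abs_inner_mul_abs_inner {a b : E} (ha : ‖a‖ = 1) (hb : ‖b‖ = 1)
    (hab : 0 ≤ inner ℝ a b) {z : E} (hz : z ∈ ball (a + b) (1 / 2)) :
    1 / 4 ≤ |inner ℝ a z| * |inner ℝ b z| := by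
  have hz' : ‖z - (a + b)‖ < 1 / 2 := mem_ball_iff_norm.1 hz
  have half_le : ∀ w : E, ‖w‖ = 1 → 1 ≤ inner ℝ w (a + b) → 1 / 2 ≤ |inner ℝ w z| := by
    intro w hw hw1
    have hdev := abs_real_inner_le_norm w (z - (a + b))
    rw [inner_sub_right, hw, one_mul] at hdev
    exact le_trans (by linarith [(abs_le.1 hdev).1]) (le_abs_self _)
  have ha1 : 1 ≤ inner ℝ a (a + b) := by
    rw [inner_add_right, real_inner_self_eq_norm_sq, ha]; linarith
  have hb1 : 1 ≤ inner ℝ b (a + b) := by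
    rw [inner_add_right, real_inner_self_eq_norm_sq, hb, real_inner_comm]; linarith
  nlinarith [half_le a ha ha1, half_le b hb hb1]

lemma exists_forall_norm_mul_norm_le_abs_inner (a b : E) :
    ∃ x : E, ‖x‖ ≤ 2 ∧
      ∀ z ∈ ball x (1 / 2), ‖a‖ * ‖b‖ / 4 ≤ |inner ℝ a z| * |inner ℝ b z| := by
  rcases eq_or_ne a 0 with rfl | ha
  · exact ⟨0, by simp, fun z _ => by simp⟩
  rcases eq_or_ne b 0 with rfl | hb
  · exact ⟨0, by simp, fun z _ => by simp⟩
  wlog hab : 0 ≤ inner ℝ a b generalizing b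
  · have hneg : 0 ≤ inner ℝ a (-b) := by rw [inner_neg_right]; linarith
    simpa only [norm_neg, inner_neg_left, abs_neg] using this (-b) (neg_ne_zero.2 hb) hneg
  have ha' : ‖‖a‖⁻¹ • a‖ = 1 := norm_smul_inv_norm ha
  have hb' : ‖‖b‖⁻¹ • b‖ = 1 := norm_smul_inv_norm hb
  refine ⟨‖a‖⁻¹ • a + ‖b‖⁻¹ • b, (norm_add_le _ _).trans (by linarith), fun z hz => ?_⟩
  have hab' : 0 ≤ inner ℝ (‖a‖⁻¹ • a) (‖b‖⁻¹ • b) := by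
    rw [inner_smul_left, inner_smul_right]; simp only [conj_trivial]; positivity
  have h := quarter_le_abs_inner_mul_abs_inner ha' hb' hab' hz
  have ha0 : 0 < ‖a‖ := norm_pos_iff.2 ha
  have hb0 : 0 < ‖b‖ := norm_pos_iff.2 hb
  simp only [inner_smul_left, conj_trivial, abs_mul, abs_inv, abs_norm] at h
  field_simp at h
  linarith

variable [FiniteDimensional ℝ E] [MeasurableSpace E] [BorelSpace E]

lemma exists_forall_le_heatMeasure_ball (R : ℝ) {ρ : ℝ} (hρ : 0 < ρ) :
    ∃ c : NNReal, 0 < c ∧ ∀ x : E, ‖x‖ ≤ R → c ≤ heatMeasure E (ball x ρ) := by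
  obtain ⟨z₀, -, hz₀⟩ := (isCompact_closedBall (0 : E) (|R| + ρ)).exists_isMinOn
    ⟨0, mem_closedBall_self (by positivity)⟩ (continuous_heatKer 1).continuousOn
  have hvol : volume (ball (0 : E) ρ) ≠ ⊤ := measure_ball_lt_top.ne
  refine ⟨(ENNReal.ofReal (heatKer 1 z₀) * volume (ball (0 : E) ρ)).toNNReal, ?_, fun x hx => ?_⟩
  · exact toNNReal_pos (mul_ne_zero (ofReal_pos.2 (heatKer_pos one_pos _)).ne'
      (measure_ball_pos _ _ hρ).ne') (mul_ne_top ofReal_ne_top hvol)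
  · rw [coe_toNNReal (mul_ne_top ofReal_ne_top hvol), heatMeasure,
      withDensity_apply _ measurableSet_ball, ← Measure.addHaar_ball_center volume x,
      ← setLIntegral_const]
    refine setLIntegral_mono' measurableSet_ball fun z hz => ofReal_le_ofReal (hz₀ ?_)
    rw [mem_closedBall_zero_iff]
    linarith [norm_le_norm_add_norm_sub' z x, (mem_ball_iff_norm.1 hz).le, le_abs_self R]

lemma exists_mul_le_lintegral_inner_mul_inner :
    ∃ c : NNReal, 0 < c ∧ ∀ a b : E, c * (‖a‖ₑ * ‖b‖ₑ) ≤
      ∫⁻ z, ‖(inner ℝ a z : ℝ)‖ₑ * ‖(inner ℝ b z : ℝ)‖ₑ ∂heatMeasure E := by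
  obtain ⟨c, hc, hball⟩ := exists_forall_le_heatMeasure_ball (E := E) 2 (half_pos one_pos)
  refine ⟨c / 4, by positivity, fun a b => ?_⟩
  obtain ⟨x, hx, hle⟩ := exists_forall_norm_mul_norm_le_abs_inner a b
  calc ((c / 4 : NNReal) : ℝ≥0∞) * (‖a‖ₑ * ‖b‖ₑ)
      = ENNReal.ofReal (‖a‖ * ‖b‖ / 4) * c := by
        rw [ENNReal.ofReal_div_of_pos four_pos, ofReal_mul (norm_nonneg a), ofReal_norm,
          ofReal_norm, coe_div four_ne_zero, div_eq_mul_inv, div_eq_mul_inv]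
        simp only [coe_ofNat, ofReal_ofNat]
        ring
    _ ≤ ENNReal.ofReal (‖a‖ * ‖b‖ / 4) * heatMeasure E (ball x (1 / 2)) := by
        gcongr
        exact hball x hx
    _ ≤ ∫⁻ z in ball x (1 / 2), ‖(inner ℝ a z : ℝ)‖ₑ * ‖(inner ℝ b z : ℝ)‖ₑ ∂heatMeasure E := by
        rw [← setLIntegral_const]
        refine setLIntegral_mono' measurableSet_ball fun z hz => ?_
        rw [← enorm_mul, Real.enorm_eq_ofReal_abs, abs_mul]
        exact ofReal_le_ofReal (hle z hz)
    _ ≤ _ := setLIntegral_le_lintegral _ _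

end GaussianLowerBound

section HeatDissipation

open Filter Topology

lemma lintegral_le_ofReal_sub_of_antitoneOn {V : ℝ → ℝ} {D : ℝ → ℝ≥0∞} {a b : ℝ} (hab : a ≤ b)
    (hV : AntitoneOn V (Icc a b))
    (hD : ∀ t ∈ Ioo a b, DifferentiableAt ℝ V t → D t ≤ ENNReal.ofReal (-deriv V t)) :
    ∫⁻ t in Icc a b, D t ≤ ENNReal.ofReal (V a - V b) := by
  obtain ⟨G, hGlim, hG, hGle⟩ := hV.neg.exists_tendsto_deriv_liminf_lintegral_enorm_le hab
  have hae : ∀ᵐ t ∂volume.restrict (Icc a b), D t ≤ ‖deriv (fun t => -V t) t‖ₑ := by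
    rw [← Measure.restrict_congr_set Ioo_ae_eq_Icc, ae_restrict_iff' measurableSet_Ioo]
    filter_upwards [hV.neg.ae_differentiableWithinAt_of_mem] with t ht htab
    have hdiff : DifferentiableAt ℝ V t := by
      simpa using (ht (Ioo_subset_Icc_self htab)).differentiableAt (Icc_mem_nhds htab.1 htab.2)
    rw [deriv.fun_neg]
    exact (hD t htab hdiff).trans (Real.ofReal_le_enorm _)
  calc ∫⁻ t in Icc a b, D t ≤ ∫⁻ t in Icc a b, ‖deriv (fun t => -V t) t‖ₑ := lintegral_mono_ae hae
    _ ≤ liminf (fun n => ∫⁻ t in Icc a b, ‖G n t‖ₑ) atTop :=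
        lintegral_enorm_le_liminf_of_tendsto hGlim fun n => (hG n).aemeasurable.enorm
    _ ≤ ENNReal.ofReal (V a - V b) := hGle.trans_eq (by congr 1; ring)

variable {E : Type*} [NormedAddCommGroup E] [InnerProductSpace ℝ E] [FiniteDimensional ℝ E]
  [MeasurableSpace E] [BorelSpace E]

/-- The rate at which the heat flows of `f` and `g` dissipate their product. -/
def dissipation (t : ℝ) (f g : E → ℝ) : ℝ≥0∞ := ∫⁻ x, ‖heatGrad t f x‖ₑ * ‖heatGrad t g x‖ₑ

lemma tendsto_enorm_mul_enorm_sub_heat {t : ℝ} (ht : 0 < t) {f g : E → ℝ} (hf : Integrable f)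
    (hg : Integrable g) (x z : E) :
    Tendsto (fun s : ℝ => ENNReal.ofReal (s ^ 2)⁻¹ *
        (‖heat t f (x - s • z) - heat (s ^ 2) (heat t f) x‖ₑ *
          ‖heat t g (x - s • z) - heat (s ^ 2) (heat t g) x‖ₑ)) (𝓝[>] 0)
      (𝓝 (‖inner ℝ (heatGrad t f x) z‖ₑ * ‖inner ℝ (heatGrad t g x) z‖ₑ)) := by
  obtain ⟨L, hL⟩ := exists_lipschitzWith_heat ht hf
  obtain ⟨L', hL'⟩ := exists_lipschitzWith_heat ht hg
  have h := ((tendsto_slope_sub_heat hL (abs_heat_le ht hf) (hasFDerivAt_heat ht hf x) z).mul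
    (tendsto_slope_sub_heat hL' (abs_heat_le ht hg) (hasFDerivAt_heat ht hg x) z)).enorm
  rw [neg_mul_neg, enorm_mul] at h
  refine h.congr fun s => ?_
  rw [← enorm_mul, Real.enorm_eq_ofReal_abs, Real.enorm_eq_ofReal_abs, ← ofReal_mul (by positivity),
    mul_mul_mul_comm, abs_mul, ← sq, inv_pow, abs_of_nonneg (a := (s ^ 2)⁻¹) (by positivity)]

lemma mul_dissipation_le_liminf_heatCovariation {c : NNReal}
    (hc : ∀ a b : E, c * (‖a‖ₑ * ‖b‖ₑ) ≤
      ∫⁻ z, ‖(inner ℝ a z : ℝ)‖ₑ * ‖(inner ℝ b z : ℝ)‖ₑ ∂heatMeasure E)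
    {t : ℝ} (ht : 0 < t) {f g : E → ℝ} (hf : Integrable f) (hg : Integrable g) :
    c * dissipation t f g ≤ liminf (fun s : ℝ =>
      ENNReal.ofReal (s ^ 2)⁻¹ * heatCovariation s (heat t f) (heat t g)) (𝓝[>] 0) := by
  set W : ℝ → E × E → ℝ≥0∞ := fun s p => ENNReal.ofReal (s ^ 2)⁻¹ *
    (‖heat t f (p.1 - s • p.2) - heat (s ^ 2) (heat t f) p.1‖ₑ *
      ‖heat t g (p.1 - s • p.2) - heat (s ^ 2) (heat t g) p.1‖ₑ)
  have hW : ∀ s, Measurable (W s) := fun s => by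
    have hf' := (continuous_heat ht hf).measurable
    have hg' := (continuous_heat ht hg).measurable
    have hf'' := measurable_heat (s ^ 2) hf'
    have hg'' := measurable_heat (s ^ 2) hg'
    fun_prop
  calc c * dissipation t f g
      = ∫⁻ x, c * (‖heatGrad t f x‖ₑ * ‖heatGrad t g x‖ₑ) :=
        (lintegral_const_mul' _ _ coe_ne_top).symm
    _ ≤ ∫⁻ x, ∫⁻ z, liminf (fun s => W s (x, z)) (𝓝[>] 0) ∂heatMeasure E :=
        lintegral_mono fun x => (hc _ _).trans (lintegral_mono fun z =>
          (tendsto_enorm_mul_enorm_sub_heat ht hf hg x z).liminf_eq.ge)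
    _ ≤ ∫⁻ x, liminf (fun s => ∫⁻ z, W s (x, z) ∂heatMeasure E) (𝓝[>] 0) :=
        lintegral_mono fun x => lintegral_liminf_le fun s => (hW s).comp measurable_prodMk_left
    _ ≤ liminf (fun s => ∫⁻ x, ∫⁻ z, W s (x, z) ∂heatMeasure E) (𝓝[>] 0) :=
        lintegral_liminf_le fun s => (hW s).lintegral_prod_right'
    _ = _ := by
        simp only [W, heatCovariation, lintegral_const_mul' _ _ ofReal_ne_top]

end HeatDissipation

section BilinearEmbedding

open Filter Topology

lemma tendsto_inv_sq_mul_sub {V : ℝ → ℝ} {V' t : ℝ} (hV : HasDerivAt V V' t) :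
    Tendsto (fun s : ℝ => (s ^ 2)⁻¹ * (V t - V (s ^ 2 + t))) (𝓝[>] 0) (𝓝 (-V')) := by
  have hsq : Tendsto (fun s : ℝ => s ^ 2 + t) (𝓝[>] 0) (𝓝[≠] t) := by
    refine tendsto_nhdsWithin_iff.2 ⟨?_, ?_⟩
    · have h : Continuous fun s : ℝ => s ^ 2 + t := by fun_prop
      simpa using (h.tendsto 0).mono_left nhdsWithin_le_nhds
    · filter_upwards [self_mem_nhdsWithin] with s hs
      simpa using (mem_Ioi.1 hs).ne'
  refine ((hasDerivAt_iff_tendsto_slope.1 hV).comp hsq).neg.congr fun s => ?_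
  rw [Function.comp_apply, slope_def_field, add_sub_cancel_right]
  ring

variable {E : Type*} [NormedAddCommGroup E] [InnerProductSpace ℝ E] [FiniteDimensional ℝ E]
  [MeasurableSpace E] [BorelSpace E] {p q K t : ℝ} {B : ℝ → ℝ → ℝ} {f g : E → ℝ}

/-- The Bellman functional, which decreases along the heat flows of `f` and `g`. -/
def bellmanMass (B : ℝ → ℝ → ℝ) (f g : E → ℝ) (t : ℝ) : ℝ≥0∞ :=
  ∫⁻ x, ENNReal.ofReal (B (heat t f x) (heat t g x))

lemma IsBellman.bellmanMass_le (hB : IsBellman p q K B) (hp : 1 ≤ p) (hq : 1 ≤ q)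
    (hf : Measurable f) (hg : Measurable g) (ht : 0 < t) (hf0 : ∀ x, 0 < heat t f x)
    (hg0 : ∀ x, 0 < heat t g x) :
    bellmanMass B f g t ≤
      ENNReal.ofReal K * ((∫⁻ x, ‖f x‖ₑ ^ p) + ∫⁻ x, ‖g x‖ₑ ^ q) := by
  calc bellmanMass B f g t
      ≤ ∫⁻ x, ENNReal.ofReal K * (‖heat t f x‖ₑ ^ p + ‖heat t g x‖ₑ ^ q) := by
        refine lintegral_mono fun x => (ofReal_le_ofReal (hB.le (hf0 x) (hg0 x))).trans_eq ?_
        have hfx := (hf0 x).le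
        have hgx := (hg0 x).le
        rw [ofReal_mul' (by positivity), ofReal_add (by positivity) (by positivity),
          Real.enorm_of_nonneg hfx, Real.enorm_of_nonneg hgx,
          ofReal_rpow_of_nonneg hfx (by linarith), ofReal_rpow_of_nonneg hgx (by linarith)]
    _ = ENNReal.ofReal K * ((∫⁻ x, ‖heat t f x‖ₑ ^ p) + ∫⁻ x, ‖heat t g x‖ₑ ^ q) := by
        rw [lintegral_const_mul' _ _ ofReal_ne_top,
          lintegral_add_left ((measurable_heat t hf).enorm.pow_const p)]
    _ ≤ _ := mul_le_mul' le_rfl (add_le_add (lintegral_enorm_heat_rpow_le hp ht hf)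
        (lintegral_enorm_heat_rpow_le hq ht hg))

lemma IsBellman.heatCovariation_add_bellmanMass_le (hB : IsBellman p q K B)
    (hf : Integrable f) (hg : Integrable g) (hf0 : ∀ t > 0, ∀ x, 0 < heat t f x)
    (hg0 : ∀ t > 0, ∀ x, 0 < heat t g x) {s : ℝ} (hs : 0 < s) (ht : 0 < t) :
    heatCovariation s (heat t f) (heat t g) + bellmanMass B f g (s ^ 2 + t) ≤
      bellmanMass B f g t := by
  have hs2 : 0 < s ^ 2 := by positivity
  rw [bellmanMass, ← heat_heat hs2 ht hf, ← heat_heat hs2 ht hg]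
  exact hB.heatCovariation_add_lintegral_heat_le (integrable_heat ht hf) (integrable_heat ht hg)
    (continuous_heat ht hf).measurable (continuous_heat ht hg).measurable (abs_heat_le ht hf)
    (abs_heat_le ht hg) (hf0 t ht) (hg0 t ht) hs

lemma IsBellman.antitoneOn_bellmanMass (hB : IsBellman p q K B) (hf : Integrable f)
    (hg : Integrable g) (hf0 : ∀ t > 0, ∀ x, 0 < heat t f x)
    (hg0 : ∀ t > 0, ∀ x, 0 < heat t g x) :
    AntitoneOn (bellmanMass B f g) (Ioi 0) := by
  intro a ha b _ hab
  rcases hab.eq_or_lt with rfl | hlt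
  · exact le_rfl
  · have h := hB.heatCovariation_add_bellmanMass_le hf hg hf0 hg0
      (Real.sqrt_pos.2 (sub_pos.2 hlt)) ha
    rw [Real.sq_sqrt (sub_nonneg.2 hab), sub_add_cancel] at h
    exact le_add_self.trans h

lemma IsBellman.mul_dissipation_le_neg_deriv (hB : IsBellman p q K B) (hf : Integrable f)
    (hg : Integrable g) (hf0 : ∀ t > 0, ∀ x, 0 < heat t f x)
    (hg0 : ∀ t > 0, ∀ x, 0 < heat t g x) {c : NNReal}
    (hc : ∀ a b : E, c * (‖a‖ₑ * ‖b‖ₑ) ≤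
      ∫⁻ z, ‖(inner ℝ a z : ℝ)‖ₑ * ‖(inner ℝ b z : ℝ)‖ₑ ∂heatMeasure E)
    (ht : 0 < t) (htop : bellmanMass B f g t ≠ ⊤)
    (hdiff : DifferentiableAt ℝ (fun t => (bellmanMass B f g t).toReal) t) :
    c * dissipation t f g ≤
      ENNReal.ofReal (-deriv (fun t => (bellmanMass B f g t).toReal) t) := by
  refine (mul_dissipation_le_liminf_heatCovariation hc ht hf hg).trans ?_
  have hlim := ENNReal.tendsto_ofReal (tendsto_inv_sq_mul_sub hdiff.hasDerivAt)
  rw [← hlim.liminf_eq]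
  refine liminf_le_liminf ?_
  filter_upwards [self_mem_nhdsWithin] with s hs
  have hle := hB.heatCovariation_add_bellmanMass_le hf hg hf0 hg0 hs ht
  have htop' : bellmanMass B f g (s ^ 2 + t) ≠ ⊤ := ne_top_of_le_ne_top htop (le_add_self.trans hle)
  rw [ofReal_mul (by positivity), ofReal_sub _ toReal_nonneg, ofReal_toReal htop,
    ofReal_toReal htop']
  gcongr
  exact ENNReal.le_sub_of_add_le_right htop' hle

lemma IsBellman.mul_lintegral_dissipation_le_bellmanMass (hB : IsBellman p q K B)
    (hf : Integrable f) (hg : Integrable g) (hf0 : ∀ t > 0, ∀ x, 0 < heat t f x)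
    (hg0 : ∀ t > 0, ∀ x, 0 < heat t g x) {c : NNReal}
    (hc : ∀ a b : E, c * (‖a‖ₑ * ‖b‖ₑ) ≤
      ∫⁻ z, ‖(inner ℝ a z : ℝ)‖ₑ * ‖(inner ℝ b z : ℝ)‖ₑ ∂heatMeasure E)
    {a b : ℝ} (ha : 0 < a) :
    c * ∫⁻ t in Icc a b, dissipation t f g ≤ bellmanMass B f g a := by
  rcases lt_or_ge b a with hab | hab
  · simp [Icc_eq_empty_of_lt hab]
  rcases eq_or_ne (bellmanMass B f g a) ⊤ with htop | htop
  · exact htop ▸ le_top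
  have hpos : ∀ t ∈ Icc a b, 0 < t := fun t ht => ha.trans_le ht.1
  have hanti := hB.antitoneOn_bellmanMass hf hg hf0 hg0
  have hfin : ∀ t ∈ Icc a b, bellmanMass B f g t ≠ ⊤ := fun t ht =>
    ne_top_of_le_ne_top htop (hanti ha (hpos t ht) ht.1)
  have hanti' : AntitoneOn (fun t => (bellmanMass B f g t).toReal) (Icc a b) := fun x hx y hy hxy =>
    toReal_mono (hfin x hx) (hanti (hpos x hx) (hpos y hy) hxy)
  rw [← lintegral_const_mul' _ _ coe_ne_top]
  refine (lintegral_le_ofReal_sub_of_antitoneOn hab hanti' fun t ht hdiff =>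
    hB.mul_dissipation_le_neg_deriv hf hg hf0 hg0 hc (ha.trans ht.1)
      (hfin t (Ioo_subset_Icc_self ht)) hdiff).trans ?_
  exact (ofReal_le_ofReal (sub_le_self _ toReal_nonneg)).trans_eq (ofReal_toReal htop)

end BilinearEmbedding

section DissipationEstimate

open Filter

variable {E : Type*} [NormedAddCommGroup E] [InnerProductSpace ℝ E] [FiniteDimensional ℝ E]
  [MeasurableSpace E] [BorelSpace E] {t p q : ℝ} {f g : E → ℝ} {S : Set ℝ}

lemma dissipation_comm (t : ℝ) (f g : E → ℝ) : dissipation t f g = dissipation t g f := by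
  simp_rw [dissipation, mul_comm]

lemma dissipation_eq_zero (hf : f =ᵐ[volume] 0) (t : ℝ) (g : E → ℝ) : dissipation t f g = 0 := by
  simp only [dissipation, heatGrad_congr_ae hf, heatGrad_zero, Pi.zero_apply, enorm_zero, zero_mul,
    lintegral_zero]

lemma dissipation_const_smul (t α β : ℝ) (f g : E → ℝ) :
    dissipation t (α • f) (β • g) = ‖α‖ₑ * ‖β‖ₑ * dissipation t f g := by
  rw [dissipation, dissipation, ← lintegral_const_mul' _ _ (mul_ne_top enorm_ne_top enorm_ne_top)]
  refine lintegral_congr fun x => ?_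
  rw [heatGrad_const_smul, heatGrad_const_smul, Pi.smul_apply, Pi.smul_apply, enorm_smul,
    enorm_smul, mul_mul_mul_comm]

lemma measurable_dissipation (hf : Measurable f) (hg : Measurable g) :
    Measurable fun t => dissipation t f g := by
  have hf' := measurable_uncurry_heatGrad hf
  have hg' := measurable_uncurry_heatGrad hg
  exact (hf'.enorm.mul hg'.enorm).lintegral_prod_right'

lemma dissipation_sub_le {f' : E → ℝ} (ht : 0 < t) (hf : Integrable f) (hf' : Integrable f')
    (hfm : Measurable f) (hgm : Measurable g) :
    dissipation t (f - f') g ≤ dissipation t f g + dissipation t f' g := by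
  have hmeas : Measurable fun x => ‖heatGrad t f x‖ₑ * ‖heatGrad t g x‖ₑ :=
    (((measurable_uncurry_heatGrad hfm).comp measurable_prodMk_left).enorm).mul
      ((measurable_uncurry_heatGrad hgm).comp measurable_prodMk_left).enorm
  rw [dissipation, dissipation, dissipation, ← lintegral_add_left hmeas]
  refine lintegral_mono fun x => ?_
  rw [← add_mul, heatGrad_sub ht hf hf']
  gcongr
  exact enorm_sub_le

lemma lintegral_dissipation_le_posPart_add (hS : MeasurableSet S) (hS0 : S ⊆ Ioi 0)
    (hf : Integrable f) (hfm : Measurable f) (hgm : Measurable g) :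
    ∫⁻ t in S, dissipation t f g ≤
      (∫⁻ t in S, dissipation t f⁺ g) + ∫⁻ t in S, dissipation t (-f)⁺ g := by
  have hpos : Measurable f⁺ := hfm.sup_const 0
  rw [posPart_neg, ← lintegral_add_left (measurable_dissipation hpos hgm)]
  refine setLIntegral_mono' hS fun t ht => ?_
  conv_lhs => rw [← posPart_sub_negPart f]
  exact dissipation_sub_le (hS0 ht) hf.pos_part hf.neg_part hpos hgm

lemma eLpNorm_posPart_le (f : E → ℝ) (r : ℝ≥0∞) : eLpNorm f⁺ r volume ≤ eLpNorm f r volume :=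
  eLpNorm_mono fun x => by
    rw [Pi.posPart_apply, Real.norm_of_nonneg (posPart_nonneg _)]
    exact sup_le (le_abs_self _) (abs_nonneg _)

lemma exists_forall_nonneg_lintegral_dissipation_le_add (hpq : p.HolderConjugate q) :
    ∃ C : NNReal, ∀ (f g : E → ℝ), Integrable f → Integrable g → Measurable f → Measurable g →
      0 ≤ f → 0 ≤ g → ∀ {a b : ℝ}, 0 < a →
        ∫⁻ t in Icc a b, dissipation t f g ≤ C * ((∫⁻ x, ‖f x‖ₑ ^ p) + ∫⁻ x, ‖g x‖ₑ ^ q) := by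
  obtain ⟨K, B, hB⟩ := exists_isBellman hpq
  obtain ⟨c, hc, hcle⟩ := exists_mul_le_lintegral_inner_mul_inner (E := E)
  refine ⟨K.toNNReal / c, fun f g hf hg hfm hgm hf0 hg0 {a b} ha => ?_⟩
  by_cases hfz : f =ᵐ[volume] 0
  · simp [dissipation_eq_zero hfz]
  by_cases hgz : g =ᵐ[volume] 0
  · simp [dissipation_comm _ f, dissipation_eq_zero hgz]
  have hfpos : ∀ t > 0, ∀ x, 0 < heat t f x := fun t ht => heat_pos ht hf hf0 hfz
  have hgpos : ∀ t > 0, ∀ x, 0 < heat t g x := fun t ht => heat_pos ht hg hg0 hgz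
  have h := (hB.mul_lintegral_dissipation_le_bellmanMass hf hg hfpos hgpos hcle ha (b := b)).trans
    (hB.bellmanMass_le hpq.lt.le hpq.symm.lt.le hfm hgm ha (hfpos a ha) (hgpos a ha))
  rw [coe_div hc.ne', div_eq_mul_inv, mul_right_comm, ← div_eq_mul_inv]
  exact (ENNReal.le_div_iff_mul_le (.inl (coe_ne_zero.2 hc.ne')) (.inl coe_ne_top)).2
    ((mul_comm _ _).trans_le h)

lemma lintegral_enorm_inv_eLpNorm_smul_rpow (hp : 0 < p)
    (h0 : eLpNorm f (ENNReal.ofReal p) volume ≠ 0)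
    (htop : eLpNorm f (ENNReal.ofReal p) volume ≠ ⊤) :
    ∫⁻ x, ‖((eLpNorm f (ENNReal.ofReal p) volume).toReal⁻¹ • f) x‖ₑ ^ p = 1 := by
  have h : eLpNorm ((eLpNorm f (ENNReal.ofReal p) volume).toReal⁻¹ • f) (ENNReal.ofReal p) volume
      = 1 := by
    rw [eLpNorm_const_smul, Real.enorm_of_nonneg (by positivity), ofReal_inv_of_pos
      (toReal_pos h0 htop), ofReal_toReal htop, ENNReal.inv_mul_cancel h0 htop]
  generalize (eLpNorm f (ENNReal.ofReal p) volume).toReal⁻¹ = c at h ⊢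
  rw [eLpNorm_eq_eLpNorm' (by simpa using hp) ofReal_ne_top, toReal_ofReal hp.le] at h
  rw [lintegral_rpow_enorm_eq_rpow_eLpNorm' hp, h, ENNReal.one_rpow]

theorem exists_forall_nonneg_lintegral_dissipation_le_mul (hpq : p.HolderConjugate q) :
    ∃ C : NNReal, ∀ (f g : E → ℝ), Integrable f → Integrable g → Measurable f → Measurable g →
      0 ≤ f → 0 ≤ g → eLpNorm f (ENNReal.ofReal p) volume ≠ ⊤ →
      eLpNorm g (ENNReal.ofReal q) volume ≠ ⊤ → ∀ {a b : ℝ}, 0 < a →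
        ∫⁻ t in Icc a b, dissipation t f g ≤
          C * (eLpNorm f (ENNReal.ofReal p) volume * eLpNorm g (ENNReal.ofReal q) volume) := by
  obtain ⟨C, hC⟩ := exists_forall_nonneg_lintegral_dissipation_le_add (E := E) hpq
  refine ⟨C * 2, fun f g hf hg hfm hgm hf0 hg0 hftop hgtop {a b} ha => ?_⟩
  set A := eLpNorm f (ENNReal.ofReal p) volume
  set B := eLpNorm g (ENNReal.ofReal q) volume
  have hp0 : 0 < p := hpq.pos
  have hq0 : 0 < q := hpq.symm.pos
  rcases eq_or_ne A 0 with hA0 | hA0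
  · have hfz := (eLpNorm_eq_zero_iff hfm.aestronglyMeasurable (by simpa using hp0)).1 hA0
    simp [dissipation_eq_zero hfz]
  rcases eq_or_ne B 0 with hB0 | hB0
  · have hgz := (eLpNorm_eq_zero_iff hgm.aestronglyMeasurable (by simpa using hq0)).1 hB0
    simp [dissipation_comm _ f, dissipation_eq_zero hgz]
  have h := hC (A.toReal⁻¹ • f) (B.toReal⁻¹ • g) (hf.smul _) (hg.smul _) (hfm.const_smul _)
    (hgm.const_smul _) (smul_nonneg (by positivity) hf0) (smul_nonneg (by positivity) hg0) ha
    (b := b)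
  rw [lintegral_enorm_inv_eLpNorm_smul_rpow hp0 hA0 hftop,
    lintegral_enorm_inv_eLpNorm_smul_rpow hq0 hB0 hgtop, one_add_one_eq_two] at h
  simp_rw [dissipation_const_smul] at h
  rw [lintegral_const_mul' _ _ (mul_ne_top enorm_ne_top enorm_ne_top),
    Real.enorm_of_nonneg (by positivity), Real.enorm_of_nonneg (by positivity), ofReal_inv_of_pos
    (toReal_pos hA0 hftop), ofReal_inv_of_pos (toReal_pos hB0 hgtop), ofReal_toReal hftop,
    ofReal_toReal hgtop, ← ENNReal.mul_inv (.inl hA0) (.inl hftop), mul_comm, ← div_eq_mul_inv,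
    ENNReal.div_le_iff (mul_ne_zero hA0 hB0) (mul_ne_top hftop hgtop)] at h
  exact_mod_cast h

theorem exists_lintegral_dissipation_le (hpq : p.HolderConjugate q) :
    ∃ C : NNReal, ∀ (f g : E → ℝ), Integrable f → Integrable g → Measurable f → Measurable g →
      eLpNorm f (ENNReal.ofReal p) volume ≠ ⊤ → eLpNorm g (ENNReal.ofReal q) volume ≠ ⊤ →
      ∀ {a b : ℝ}, 0 < a → ∫⁻ t in Icc a b, dissipation t f g ≤
        C * (eLpNorm f (ENNReal.ofReal p) volume * eLpNorm g (ENNReal.ofReal q) volume) := by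
  obtain ⟨C, hC⟩ := exists_forall_nonneg_lintegral_dissipation_le_mul (E := E) hpq
  refine ⟨4 * C, fun f g hf hg hfm hgm hftop hgtop {a b} ha => ?_⟩
  have hS0 : Icc a b ⊆ Ioi 0 := fun t ht => ha.trans_le ht.1
  have hle : ∀ {f' g' : E → ℝ}, Integrable f' → Integrable g' → Measurable f' → Measurable g' →
      eLpNorm f' (ENNReal.ofReal p) volume = eLpNorm f (ENNReal.ofReal p) volume →
      eLpNorm g' (ENNReal.ofReal q) volume = eLpNorm g (ENNReal.ofReal q) volume →
      ∫⁻ t in Icc a b, dissipation t f'⁺ g'⁺ ≤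
        C * (eLpNorm f (ENNReal.ofReal p) volume * eLpNorm g (ENNReal.ofReal q) volume) := by
    intro f' g' hf' hg' hfm' hgm' hfn hgn
    have hfle := (eLpNorm_posPart_le f' (ENNReal.ofReal p)).trans_eq hfn
    have hgle := (eLpNorm_posPart_le g' (ENNReal.ofReal q)).trans_eq hgn
    refine (hC _ _ hf'.pos_part hg'.pos_part (hfm'.sup_const 0) (hgm'.sup_const 0)
      (posPart_nonneg _) (posPart_nonneg _) (ne_top_of_le_ne_top hftop hfle)
      (ne_top_of_le_ne_top hgtop hgle) ha).trans ?_
    gcongr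
    exacts [hfle, hgle]
  have hsplit : ∀ {f' : E → ℝ}, Integrable f' → Measurable f' →
      eLpNorm f' (ENNReal.ofReal p) volume = eLpNorm f (ENNReal.ofReal p) volume →
      ∫⁻ t in Icc a b, dissipation t f'⁺ g ≤
        2 * (C * (eLpNorm f (ENNReal.ofReal p) volume * eLpNorm g (ENNReal.ofReal q) volume)) := by
    intro f' hf' hfm' hfn
    simp_rw [dissipation_comm _ f'⁺]
    refine (lintegral_dissipation_le_posPart_add measurableSet_Icc hS0 hg hgm
      (hfm'.sup_const 0)).trans ?_
    simp_rw [dissipation_comm _ g⁺, dissipation_comm _ (-g)⁺, two_mul]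
    exact add_le_add (hle hf' hg hfm' hgm hfn rfl)
      (hle hf' hg.neg hfm' hgm.neg hfn (eLpNorm_neg ..))
  calc ∫⁻ t in Icc a b, dissipation t f g
      ≤ (∫⁻ t in Icc a b, dissipation t f⁺ g) + ∫⁻ t in Icc a b, dissipation t (-f)⁺ g :=
        lintegral_dissipation_le_posPart_add measurableSet_Icc hS0 hf hfm hgm
    _ ≤ _ := add_le_add (hsplit hf hfm rfl) (hsplit hf.neg hfm.neg (eLpNorm_neg ..))
    _ = _ := by push_cast; ring

end DissipationEstimate

section SchwartzDerivative

open scoped SchwartzMap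

variable {E F : Type*} [NormedAddCommGroup E] [NormedSpace ℝ E] [NormedAddCommGroup F]
  [NormedSpace ℝ F]

lemma exists_forall_norm_fderiv_le (f : 𝓢(E, F)) : ∃ M, ∀ x, ‖fderiv ℝ f x‖ ≤ M :=
  ⟨_, (SchwartzMap.fderivCLM ℝ E F f).norm_le_seminorm ℝ⟩

lemma hasFDerivAt_comp_sub_smul (f : 𝓢(E, F)) (x : E) (s : ℝ) (z : E) :
    HasFDerivAt (fun z => f (x - s • z)) (-(s • fderiv ℝ f (x - s • z))) z := by
  have h := (f.hasFDerivAt (x - s • z)).comp z (((hasFDerivAt_id z).const_smul s).const_sub x)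
  refine h.congr_fderiv (ContinuousLinearMap.ext fun v => ?_)
  simp

end SchwartzDerivative

section HeatEquation

open Filter Topology
open scoped SchwartzMap LineDeriv Laplacian

variable {E : Type*} [NormedAddCommGroup E] [InnerProductSpace ℝ E] [FiniteDimensional ℝ E]
  [MeasurableSpace E] [BorelSpace E]

lemma integral_mul_inner_heatMeasure {φ : E → ℝ} (hφ : ContDiff ℝ 1 φ) {M N : ℝ}
    (hM : ∀ z, |φ z| ≤ M) (hN : ∀ z, ‖fderiv ℝ φ z‖ ≤ N) (v : E) :
    ∫ z, φ z * inner ℝ z v ∂heatMeasure E = 2 * ∫ z, fderiv ℝ φ z v ∂heatMeasure E := by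
  have hker : ∀ z : E, fderiv ℝ (heatKer 1) z v = -(2⁻¹ * (heatKer 1 z * inner ℝ z v)) :=
    fun z => by
      rw [(hasFDerivAt_heatKer 1 z).fderiv, innerSL_apply_apply, heatKerGrad,
        inner_smul_left]
      simp only [RCLike.conj_to_real]
      ring
  have hinner : Integrable fun z : E => heatKer 1 z * inner ℝ z v :=
    ((integrable_norm_mul_heatKer one_pos).mul_const ‖v‖).mono'
      (((continuous_heatKer 1).mul (by fun_prop)).aestronglyMeasurable)
      (Eventually.of_forall fun z => by
        rw [norm_mul, Real.norm_of_nonneg (heatKer_pos one_pos z).le]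
        nlinarith [norm_inner_le_norm (𝕜 := ℝ) z v, heatKer_pos one_pos z])
  have hcont : Continuous fun z => fderiv ℝ φ z v :=
    (hφ.continuous_fderiv one_ne_zero).clm_apply continuous_const
  have hparts := integral_mul_fderiv_eq_neg_fderiv_mul_of_integrable (μ := volume) (f := φ)
    (g := heatKer 1) (v := v)
    ((integrable_heatKer one_pos).bdd_mul (c := N * ‖v‖) hcont.aestronglyMeasurable
      (Eventually.of_forall fun z => (fderiv ℝ φ z).le_of_opNorm_le (hN z) v))
    (by
      simp_rw [hker]
      exact (hinner.const_mul _).neg.bdd_mul hφ.continuous.aestronglyMeasurable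
        (Eventually.of_forall hM))
    ((integrable_heatKer one_pos).bdd_mul hφ.continuous.aestronglyMeasurable
      (Eventually.of_forall hM))
    (fun z _ => hφ.differentiable one_ne_zero z)
    fun z _ => (hasFDerivAt_heatKer 1 z).differentiableAt
  simp_rw [hker, mul_neg, integral_neg, neg_inj, mul_left_comm _ (2⁻¹ : ℝ),
    integral_const_mul] at hparts
  simp_rw [integral_heatMeasure, smul_eq_mul, mul_left_comm (heatKer 1 _),
    mul_comm (heatKer 1 _) (fderiv ℝ φ _ v), ← hparts]
  ring

lemma integral_comp_sub_smul_mul_inner_heatMeasure (f : 𝓢(E, ℝ)) (v x : E) (s : ℝ) :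
    ∫ z, f (x - s • z) * inner ℝ z v ∂heatMeasure E =
      -(2 * s * ∫ z, ∂_{v} f (x - s • z) ∂heatMeasure E) := by
  obtain ⟨N, hN⟩ := exists_forall_norm_fderiv_le f
  rw [integral_mul_inner_heatMeasure (φ := fun z => f (x - s • z))
    ((f.smooth 1).comp (by fun_prop)) (fun z => f.norm_le_seminorm ℝ _) (N := |s| * N)
    fun z => ?_]
  · simp_rw [(hasFDerivAt_comp_sub_smul f x s _).fderiv, SchwartzMap.lineDerivOp_apply_eq_fderiv,
      _root_.neg_apply, _root_.smul_apply, smul_eq_mul, integral_neg,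
      integral_const_mul]
    ring
  · rw [(hasFDerivAt_comp_sub_smul f x s z).fderiv, norm_neg, norm_smul, Real.norm_eq_abs]
    exact mul_le_mul_of_nonneg_left (hN _) (abs_nonneg s)

lemma integral_fderiv_sub_smul_apply_heatMeasure (f : 𝓢(E, ℝ)) (x : E) (s : ℝ) :
    ∫ z, fderiv ℝ f (x - s • z) z ∂heatMeasure E =
      -(2 * s * ∫ z, Δ f (x - s • z) ∂heatMeasure E) := by
  set b := stdOrthonormalBasis ℝ E
  have hsum : ∀ z, fderiv ℝ f (x - s • z) z = ∑ i, ∂_{b i} f (x - s • z) * inner ℝ z (b i) :=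
    fun z => by
      nth_rw 2 [← b.sum_repr' z]
      simp_rw [map_sum, map_smul, smul_eq_mul, SchwartzMap.lineDerivOp_apply_eq_fderiv]
      exact Finset.sum_congr rfl fun i _ => by rw [mul_comm, real_inner_comm]
  have hint : ∀ (g : 𝓢(E, ℝ)), Integrable (fun z => g (x - s • z)) (heatMeasure E) := fun g =>
    integrable_comp_sub_smul g.continuous.measurable (g.norm_le_seminorm ℝ) s x
  have hint' : ∀ i, Integrable (fun z => ∂_{b i} f (x - s • z) * inner ℝ z (b i))
      (heatMeasure E) := fun i =>
    (integrable_norm_heatMeasure.mono' (by fun_prop) (Eventually.of_forall fun z => by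
      simpa using norm_inner_le_norm (𝕜 := ℝ) z (b i))).bdd_mul
      ((∂_{b i} f).continuous.comp (by fun_prop)).aestronglyMeasurable
      (Eventually.of_forall fun z => (∂_{b i} f).norm_le_seminorm ℝ _)
  simp_rw [hsum, SchwartzMap.laplacian_eq_sum b, _root_.sum_apply]
  rw [integral_finsetSum _ fun i _ => hint' i, integral_finsetSum _ fun i _ => hint _,
    Finset.mul_sum, ← Finset.sum_neg_distrib]
  simp_rw [integral_comp_sub_smul_mul_inner_heatMeasure]

lemma hasDerivAt_integral_comp_sub_smul_heatMeasure (f : 𝓢(E, ℝ)) (x : E) (s : ℝ) :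
    HasDerivAt (fun s => ∫ z, f (x - s • z) ∂heatMeasure E)
      (2 * s * ∫ z, Δ f (x - s • z) ∂heatMeasure E) s := by
  obtain ⟨N, hN⟩ := exists_forall_norm_fderiv_le f
  have h := hasDerivAt_integral_of_dominated_loc_of_deriv_le (μ := heatMeasure E)
    (F := fun s z => f (x - s • z)) (F' := fun s z => -fderiv ℝ f (x - s • z) z) (x₀ := s)
    (bound := fun z => N * ‖z‖) univ_mem
    (Eventually.of_forall fun s => (f.continuous.comp (by fun_prop)).aestronglyMeasurable)
    (integrable_comp_sub_smul f.continuous.measurable (f.norm_le_seminorm ℝ) s x)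
    (((((f.smooth 1).continuous_fderiv one_ne_zero).comp (by fun_prop)).clm_apply
      continuous_id).neg.aestronglyMeasurable)
    (Eventually.of_forall fun z s _ => by
      rw [norm_neg]
      exact (fderiv ℝ f (x - s • z)).le_of_opNorm_le (hN _) z)
    (integrable_norm_heatMeasure.const_mul N)
    (Eventually.of_forall fun z s _ => by
      simpa [Function.comp_def] using (f.hasFDerivAt (x - s • z)).comp_hasDerivAt s
        (((hasDerivAt_id s).smul_const z).const_sub x))
  refine h.2.congr_deriv ?_
  rw [integral_neg, integral_fderiv_sub_smul_apply_heatMeasure, neg_neg]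

lemma heat_eq_integral_heatMeasure {t : ℝ} (ht : 0 < t) (f : E → ℝ) (x : E) :
    heat t f x = ∫ z, f (x - √t • z) ∂heatMeasure E := by
  rw [← heat_sq (Real.sqrt_pos.2 ht), Real.sq_sqrt ht.le]

lemma hasDerivAt_heat (f : 𝓢(E, ℝ)) (x : E) {t : ℝ} (ht : 0 < t) :
    HasDerivAt (fun t => heat t f x) (heat t (Δ f : 𝓢(E, ℝ)) x) t := by
  have h := (hasDerivAt_integral_comp_sub_smul_heatMeasure f x √t).comp t
    (Real.hasDerivAt_sqrt ht.ne')
  refine (h.congr_of_eventuallyEq ?_).congr_deriv ?_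
  · filter_upwards [eventually_gt_nhds ht] with t ht
    exact heat_eq_integral_heatMeasure ht f x
  · rw [heat_eq_integral_heatMeasure ht]
    field_simp [(Real.sqrt_pos.2 ht).ne']

lemma tendsto_heat_nhdsGT_zero (f : 𝓢(E, ℝ)) (x : E) :
    Tendsto (fun t => heat t f x) (𝓝[>] 0) (𝓝 (f x)) := by
  have h := (hasDerivAt_integral_comp_sub_smul_heatMeasure f x 0).continuousAt.tendsto.comp
    (tendsto_nhdsWithin_of_tendsto_nhds (s := Ioi 0)
      (Real.continuous_sqrt.tendsto' 0 0 Real.sqrt_zero))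
  simp only [zero_smul, sub_zero, integral_const, probReal_univ, one_smul] at h
  refine h.congr' ?_
  filter_upwards [self_mem_nhdsWithin] with t ht
  exact (heat_eq_integral_heatMeasure ht f x).symm

lemma tendsto_heat_atTop [Nontrivial E] {f : E → ℝ} (hf : Integrable f) (x : E) :
    Tendsto (fun t => heat t f x) atTop (𝓝 0) := by
  have hd : (0 : ℝ) < Module.finrank ℝ E / 2 := by
    have := Module.finrank_pos (R := ℝ) (M := E)
    positivity
  have h := ((tendsto_rpow_neg_atTop hd).comp
    (tendsto_id.const_mul_atTop (by positivity : 0 < 4 * Real.pi))).mul_const (∫ y, |f y|)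
  rw [zero_mul] at h
  refine squeeze_zero_norm' ?_ h
  filter_upwards [eventually_gt_atTop 0] with t ht using abs_heat_le ht hf x

lemma heat_lineDeriv {t : ℝ} (ht : 0 < t) (f : 𝓢(E, ℝ)) (v x : E) :
    heat t (∂_{v} f : 𝓢(E, ℝ)) x = inner ℝ (heatGrad t f x) v := by
  have hk : ∀ y, HasFDerivAt (fun y => heatKer t (x - y)) (-innerSL ℝ (heatKerGrad t (x - y))) y :=
    fun y => by
      simpa [Function.comp_def] using
        (hasFDerivAt_heatKer t (x - y)).comp y ((hasFDerivAt_id y).const_sub x)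
  have hderiv : ∀ y, fderiv ℝ (fun y => heatKer t (x - y)) y v * f y =
      -inner ℝ v (f y • heatKerGrad t (x - y)) := fun y => by
    rw [(hk y).fderiv, _root_.neg_apply, innerSL_apply_apply, real_inner_comm, inner_smul_right]
    ring
  have hparts := integral_mul_fderiv_eq_neg_fderiv_mul_of_integrable (μ := volume)
    (f := fun y => heatKer t (x - y)) (g := f) (v := v)
    (((integrable_smul_heatKerGrad ht f.integrable x).const_inner v).neg.congr
      (Eventually.of_forall fun y => (hderiv y).symm))
    (integrable_heatKer_mul ht (∂_{v} f).integrable x)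
    (integrable_heatKer_mul ht f.integrable x)
    (fun y _ => (hk y).differentiableAt) fun y _ => f.differentiableAt
  simp_rw [hderiv, integral_neg, neg_neg] at hparts
  rw [heat_apply, real_inner_comm, heatGrad, ← integral_inner
    (integrable_smul_heatKerGrad ht f.integrable x)]
  exact hparts

end HeatEquation

section HeatPairing

open Filter Topology
open scoped SchwartzMap LineDeriv Laplacian

variable {E : Type*} [NormedAddCommGroup E] [InnerProductSpace ℝ E] [FiniteDimensional ℝ E]
  [MeasurableSpace E] [BorelSpace E] {h : E → ℝ}

lemma norm_heat_mul_le (f : 𝓢(E, ℝ)) (h : E → ℝ) {t : ℝ} (ht : 0 < t) (x : E) :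
    ‖heat t f x * h x‖ ≤ SchwartzMap.seminorm ℝ 0 0 f * ‖h x‖ := by
  rw [norm_mul]
  exact mul_le_mul_of_nonneg_right
    (abs_heat_le_of_abs_le ht (f.norm_le_seminorm ℝ) x) (norm_nonneg _)

lemma integrable_heat_mul (f : 𝓢(E, ℝ)) (hh : Integrable h) {t : ℝ} (ht : 0 < t) :
    Integrable fun x => heat t f x * h x :=
  hh.bdd_mul (continuous_heat ht f.integrable).aestronglyMeasurable
    (Eventually.of_forall (abs_heat_le_of_abs_le ht (f.norm_le_seminorm ℝ)))

lemma hasDerivAt_integral_heat_mul (f : 𝓢(E, ℝ)) (hh : Integrable h) {t : ℝ} (ht : 0 < t) :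
    HasDerivAt (fun t => ∫ x, heat t f x * h x) (∫ x, heat t (Δ f : 𝓢(E, ℝ)) x * h x) t := by
  refine (hasDerivAt_integral_of_dominated_loc_of_deriv_le
    (bound := fun x => SchwartzMap.seminorm ℝ 0 0 (Δ f) * ‖h x‖) (Ioi_mem_nhds ht) ?_
    (integrable_heat_mul f hh ht) (integrable_heat_mul (Δ f) hh ht).aestronglyMeasurable
    (Eventually.of_forall fun x s hs => ?_) (hh.norm.const_mul _)
    (Eventually.of_forall fun x s hs => (hasDerivAt_heat f x hs).mul_const (h x))).2
  · filter_upwards [eventually_gt_nhds ht] with s hs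
    exact (integrable_heat_mul f hh hs).aestronglyMeasurable
  · exact norm_heat_mul_le (Δ f) h hs x

lemma tendsto_integral_heat_mul_nhdsGT_zero (f : 𝓢(E, ℝ)) (hh : Integrable h) :
    Tendsto (fun t => ∫ x, heat t f x * h x) (𝓝[>] 0) (𝓝 (∫ x, f x * h x)) := by
  refine tendsto_integral_filter_of_dominated_convergence
    (fun x => SchwartzMap.seminorm ℝ 0 0 f * ‖h x‖) ?_ ?_ (hh.norm.const_mul _)
    (Eventually.of_forall fun x => (tendsto_heat_nhdsGT_zero f x).mul_const (h x))
  · filter_upwards [self_mem_nhdsWithin] with t ht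
    exact (integrable_heat_mul f hh ht).aestronglyMeasurable
  · filter_upwards [self_mem_nhdsWithin] with t ht
      using Eventually.of_forall (norm_heat_mul_le f h ht)

lemma tendsto_integral_heat_mul_atTop [Nontrivial E] (f : 𝓢(E, ℝ)) (hh : Integrable h) :
    Tendsto (fun t => ∫ x, heat t f x * h x) atTop (𝓝 0) := by
  rw [← integral_zero E ℝ (μ := volume)]
  refine tendsto_integral_filter_of_dominated_convergence
    (fun x => SchwartzMap.seminorm ℝ 0 0 f * ‖h x‖) ?_ ?_ (hh.norm.const_mul _)
    (Eventually.of_forall fun x => ?_)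
  · filter_upwards [eventually_gt_atTop 0] with t ht
    exact (integrable_heat_mul f hh ht).aestronglyMeasurable
  · filter_upwards [eventually_gt_atTop 0] with t ht
      using Eventually.of_forall (norm_heat_mul_le f h ht)
  · simpa using (tendsto_heat_atTop f.integrable x).mul_const (h x)

lemma integral_heat_two_mul_mul (f : 𝓢(E, ℝ)) (hh : Integrable h) {t : ℝ} (ht : 0 < t) :
    ∫ x, heat (2 * t) f x * h x = ∫ x, heat t f x * heat t h x := by
  rw [two_mul, ← heat_heat ht ht f.integrable]
  simp_rw [mul_comm _ (h _), mul_comm (heat t f _)]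
  exact (integral_heat_mul ht hh (continuous_heat ht f.integrable).aestronglyMeasurable
    (abs_heat_le_of_abs_le ht (f.norm_le_seminorm ℝ))).symm

lemma integral_heat_lineDeriv_mul_heat (f : 𝓢(E, ℝ)) (hh : Integrable h) (v : E) {t : ℝ}
    (ht : 0 < t) : ∫ x, heat t (∂_{v} f : 𝓢(E, ℝ)) x * heat t h x =
      -∫ x, heat t f x * inner ℝ (heatGrad t h x) v := by
  obtain ⟨C, hC⟩ := exists_norm_heatGrad_le ht hh
  have hfderiv : ∀ x, fderiv ℝ (heat t f) x v = heat t (∂_{v} f : 𝓢(E, ℝ)) x := fun x => by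
    rw [(hasFDerivAt_heat ht f.integrable x).fderiv, innerSL_apply_apply, heat_lineDeriv ht]
  have hderiv : ∀ x, fderiv ℝ (heat t h) x v = inner ℝ (heatGrad t h x) v := fun x => by
    rw [(hasFDerivAt_heat ht hh x).fderiv, innerSL_apply_apply]
  have hmeas : AEStronglyMeasurable fun x => inner ℝ (heatGrad t h x) v := by
    simp_rw [← hderiv]
    exact (measurable_fderiv_apply_const ℝ (heat t h) v).aestronglyMeasurable
  have hbdd : ∀ x, ‖heat t f x‖ ≤ SchwartzMap.seminorm ℝ 0 0 f :=
    abs_heat_le_of_abs_le ht (f.norm_le_seminorm ℝ)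
  have hbdd' : ∀ x, ‖heat t (∂_{v} f : 𝓢(E, ℝ)) x‖ ≤ SchwartzMap.seminorm ℝ 0 0 (∂_{v} f) :=
    abs_heat_le_of_abs_le ht ((∂_{v} f).norm_le_seminorm ℝ)
  have hparts := integral_mul_fderiv_eq_neg_fderiv_mul_of_integrable (μ := volume)
    (f := heat t f) (g := heat t h) (v := v)
    (by
      simp_rw [hfderiv]
      exact (integrable_heat ht hh).bdd_mul
        (continuous_heat ht (∂_{v} f).integrable).aestronglyMeasurable (Eventually.of_forall hbdd'))
    (by
      simp_rw [hderiv]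
      exact (integrable_heat ht f.integrable).mul_bdd (c := C * ‖v‖) hmeas
        (Eventually.of_forall fun x => (norm_inner_le_norm _ _).trans
          (mul_le_mul_of_nonneg_right (hC x) (norm_nonneg v))))
    ((integrable_heat ht hh).bdd_mul (continuous_heat ht f.integrable).aestronglyMeasurable
      (Eventually.of_forall hbdd))
    (fun x _ => (hasFDerivAt_heat ht f.integrable x).differentiableAt)
    fun x _ => (hasFDerivAt_heat ht hh x).differentiableAt
  simp_rw [hfderiv, hderiv] at hparts
  rw [hparts, neg_neg]

lemma enorm_integral_heat_lineDeriv_lineDeriv_mul_le (g : 𝓢(E, ℝ)) (hh : Integrable h) (v w : E)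
    {t : ℝ} (ht : 0 < t) :
    ‖∫ x, heat (2 * t) (∂_{v} (∂_{w} g) : 𝓢(E, ℝ)) x * h x‖ₑ ≤
      ‖v‖ₑ * ‖w‖ₑ * dissipation t g h := by
  have hinner : ∀ a b : E, ‖inner ℝ a b‖ₑ ≤ ‖a‖ₑ * ‖b‖ₑ := fun a b => by
    simp_rw [← ofReal_norm, ← ENNReal.ofReal_mul (norm_nonneg a)]
    exact ENNReal.ofReal_le_ofReal (norm_inner_le_norm a b)
  rw [integral_heat_two_mul_mul _ hh ht, integral_heat_lineDeriv_mul_heat _ hh v ht, enorm_neg,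
    dissipation, ← lintegral_const_mul' _ _ (ENNReal.mul_ne_top enorm_ne_top enorm_ne_top)]
  refine (enorm_integral_le_lintegral_enorm _).trans (lintegral_mono fun x => ?_)
  rw [heat_lineDeriv ht, enorm_mul]
  calc _ ≤ ‖heatGrad t g x‖ₑ * ‖w‖ₑ * (‖heatGrad t h x‖ₑ * ‖v‖ₑ) :=
        mul_le_mul' (hinner _ _) (hinner _ _)
    _ = _ := by ring

lemma enorm_integral_heat_mul_sub_le (f : 𝓢(E, ℝ)) (hh : Integrable h) {a b : ℝ} (ha : 0 < a)
    (hab : a ≤ b) :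
    ‖(∫ x, heat (2 * b) f x * h x) - ∫ x, heat (2 * a) f x * h x‖ₑ ≤
      2 * ∫⁻ t in Icc a b, ‖∫ x, heat (2 * t) (Δ f : 𝓢(E, ℝ)) x * h x‖ₑ := by
  have hderiv : ∀ (f : 𝓢(E, ℝ)), ∀ t ∈ uIcc a b, HasDerivAt (fun t => ∫ x, heat (2 * t) f x * h x)
      (2 * ∫ x, heat (2 * t) (Δ f : 𝓢(E, ℝ)) x * h x) t := fun f t ht => by
    have ht0 : 0 < 2 * t := by
      rw [uIcc_of_le hab] at ht
      linarith [ht.1]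
    simpa [Function.comp_def, mul_comm] using
      (hasDerivAt_integral_heat_mul f hh ht0).comp t ((hasDerivAt_id t).const_mul 2)
  have hint : IntervalIntegrable (fun t => 2 * ∫ x, heat (2 * t) (Δ f : 𝓢(E, ℝ)) x * h x)
      volume a b :=
    ContinuousOn.intervalIntegrable fun t ht =>
      ((hderiv (Δ f) t ht).continuousAt.const_mul 2).continuousWithinAt
  rw [← intervalIntegral.integral_eq_sub_of_hasDerivAt (hderiv f) hint,
    intervalIntegral.integral_of_le hab, ← lintegral_const_mul' _ _ ofNat_ne_top]
  refine (enorm_integral_le_lintegral_enorm _).trans ?_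
  simp_rw [enorm_mul, Real.enorm_of_nonneg zero_le_two, ENNReal.ofReal_ofNat]
  exact lintegral_mono_set Ioc_subset_Icc_self

lemma enorm_integral_mul_le_of_forall_lintegral_le [Nontrivial E] (f : 𝓢(E, ℝ)) (hh : Integrable h)
    {B : ℝ≥0∞} (hB : ∀ a b, 0 < a →
      ∫⁻ t in Icc a b, ‖∫ x, heat (2 * t) (Δ f : 𝓢(E, ℝ)) x * h x‖ₑ ≤ B) :
    ‖∫ x, f x * h x‖ₑ ≤ 2 * B := by
  have hdiff : ∀ a b, 0 < a → a ≤ b →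
      ‖(∫ x, heat (2 * b) f x * h x) - ∫ x, heat (2 * a) f x * h x‖ₑ ≤ 2 * B := fun a b ha hab =>
    (enorm_integral_heat_mul_sub_le f hh ha hab).trans (by gcongr; exact hB a b ha)
  have hzero : ∀ a, 0 < a → ‖∫ x, heat (2 * a) f x * h x‖ₑ ≤ 2 * B := fun a ha => by
    have hlim := ((tendsto_integral_heat_mul_atTop f hh).comp
      (tendsto_id.const_mul_atTop two_pos)).sub_const (∫ x, heat (2 * a) f x * h x)
    rw [zero_sub] at hlim
    rw [← enorm_neg]
    refine le_of_tendsto hlim.enorm ?_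
    filter_upwards [eventually_ge_atTop a] with b hab using hdiff a b ha hab
  have hlim : Tendsto (fun t : ℝ => 2 * t) (𝓝[>] 0) (𝓝[>] 0) :=
    tendsto_nhdsWithin_iff.2 ⟨tendsto_nhdsWithin_of_tendsto_nhds
      ((continuous_const_mul 2).tendsto' 0 0 (mul_zero 2)), by
        filter_upwards [self_mem_nhdsWithin] with t ht using mem_Ioi.2 (mul_pos two_pos ht)⟩
  refine le_of_tendsto ((tendsto_integral_heat_mul_nhdsGT_zero f hh).comp hlim).enorm ?_
  filter_upwards [self_mem_nhdsWithin] with a ha using hzero a ha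

lemma enorm_integral_heat_laplacian_mul_le {ι : Type*} {s : Finset ι} {f : 𝓢(E, ℝ)} {v w : ι → E}
    {g : ι → 𝓢(E, ℝ)} (hf : Δ f = ∑ i ∈ s, ∂_{v i} (∂_{w i} (g i))) (hh : Integrable h) {t : ℝ}
    (ht : 0 < t) : ‖∫ x, heat (2 * t) (Δ f : 𝓢(E, ℝ)) x * h x‖ₑ ≤
      ∑ i ∈ s, ‖v i‖ₑ * ‖w i‖ₑ * dissipation t (g i) h := by
  have hsum : ∫ x, heat (2 * t) (Δ f : 𝓢(E, ℝ)) x * h x =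
      ∑ i ∈ s, ∫ x, heat (2 * t) (∂_{v i} (∂_{w i} (g i)) : 𝓢(E, ℝ)) x * h x := by
    have h2t : 0 < 2 * t := by positivity
    rw [← integral_finsetSum _ fun i _ => integrable_heat_mul _ hh h2t, hf]
    refine integral_congr_ae (Eventually.of_forall fun x => ?_)
    simp only [← Finset.sum_mul, ← heat_finsetSum h2t s fun i _ =>
      (∂_{v i} (∂_{w i} (g i))).integrable, ← _root_.sum_apply]
  rw [hsum]
  exact (enorm_sum_le _ _).trans (Finset.sum_le_sum fun i _ =>
    enorm_integral_heat_lineDeriv_lineDeriv_mul_le (g i) hh (v i) (w i) ht)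

theorem exists_enorm_integral_mul_le_of_laplacian_eq_sum [Nontrivial E] {p q : ℝ}
    (hpq : p.HolderConjugate q) : ∃ C : NNReal, ∀ {ι : Type*} (s : Finset ι) (f : 𝓢(E, ℝ))
      (v w : ι → E) (g : ι → 𝓢(E, ℝ)), Δ f = ∑ i ∈ s, ∂_{v i} (∂_{w i} (g i)) →
      ∀ h : E → ℝ, Integrable h → Measurable h → eLpNorm h (ENNReal.ofReal q) volume ≠ ⊤ →
      ‖∫ x, f x * h x‖ₑ ≤
        C * (∑ i ∈ s, ‖v i‖ₑ * ‖w i‖ₑ * eLpNorm (g i) (ENNReal.ofReal p) volume) *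
          eLpNorm h (ENNReal.ofReal q) volume := by
  obtain ⟨C, hC⟩ := exists_lintegral_dissipation_le (E := E) hpq
  refine ⟨2 * C, fun s f v w g hf h hh hmeas hq => ?_⟩
  calc ‖∫ x, f x * h x‖ₑ ≤ 2 * ∑ i ∈ s, ‖v i‖ₑ * ‖w i‖ₑ *
        (C * (eLpNorm (g i) (ENNReal.ofReal p) volume * eLpNorm h (ENNReal.ofReal q) volume)) := by
        refine enorm_integral_mul_le_of_forall_lintegral_le f hh fun a b ha => ?_
        refine (setLIntegral_mono' measurableSet_Icc fun t ht =>
          enorm_integral_heat_laplacian_mul_le hf hh (ha.trans_le ht.1)).trans ?_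
        rw [lintegral_finsetSum s fun i _ =>
          (measurable_dissipation (g i).continuous.measurable hmeas).const_mul _]
        refine Finset.sum_le_sum fun i _ => ?_
        rw [lintegral_const_mul' _ _ (ENNReal.mul_ne_top enorm_ne_top enorm_ne_top)]
        gcongr
        exact hC _ h (g i).integrable hh (g i).continuous.measurable hmeas
          ((g i).eLpNorm_lt_top _ _).ne hq ha
    _ = _ := by
      rw [Finset.mul_sum, Finset.mul_sum, Finset.sum_mul]
      push_cast
      exact Finset.sum_congr rfl fun i _ => by ring

end HeatPairing

section CalderonZygmund

open Filter Topology
open scoped SchwartzMap LineDeriv Laplacian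

variable {E : Type*} [NormedAddCommGroup E] [InnerProductSpace ℝ E] [FiniteDimensional ℝ E]
  [MeasurableSpace E] [BorelSpace E]

/-- The dual function `|f|^(p-2) f` of `f` truncated to `s`; it vanishes at the zeros of `f`
whatever the value of `0 ^ (p - 2)`. -/
def truncatedDual {α : Type*} (p : ℝ) (s : Set α) (f : α → ℝ) : α → ℝ :=
  s.indicator fun x => |f x| ^ (p - 2) * f x

lemma abs_rpow_sub_two_mul_self {p : ℝ} (hp : 1 < p) (a : ℝ) :
    |(|a| ^ (p - 2) * a)| = |a| ^ (p - 1) := by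
  rcases eq_or_ne a 0 with rfl | ha
  · simp [Real.zero_rpow (sub_pos.2 hp).ne']
  · rw [abs_mul, abs_of_nonneg (by positivity), ← Real.rpow_add_one (abs_ne_zero.2 ha)]
    congr 1
    ring

lemma self_mul_abs_rpow_sub_two_mul_self {p : ℝ} (hp : 1 < p) (a : ℝ) :
    a * (|a| ^ (p - 2) * a) = |a| ^ p := by
  rcases eq_or_ne a 0 with rfl | ha
  · simp [Real.zero_rpow (one_pos.trans hp).ne']
  · rw [mul_left_comm, ← sq, ← sq_abs, ← Real.rpow_two, ← Real.rpow_add (abs_pos.2 ha)]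
    congr 1
    ring

variable {α : Type*} {p q : ℝ} {f : α → ℝ} {s : Set α}

lemma mul_truncatedDual (hp : 1 < p) (f : α → ℝ) (s : Set α) (x : α) :
    f x * truncatedDual p s f x = s.indicator (fun x => |f x| ^ p) x := by
  by_cases hx : x ∈ s
  · simp only [truncatedDual, indicator_of_mem hx, self_mul_abs_rpow_sub_two_mul_self hp]
  · simp only [truncatedDual, indicator_of_notMem hx, mul_zero]

lemma enorm_truncatedDual_rpow (hpq : p.HolderConjugate q) (f : α → ℝ) (s : Set α) (x : α) :
    ‖truncatedDual p s f x‖ₑ ^ q = s.indicator (fun x => ‖f x‖ₑ ^ p) x := by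
  by_cases hx : x ∈ s
  · simp only [truncatedDual, indicator_of_mem hx]
    rw [← Real.enorm_abs, abs_rpow_sub_two_mul_self hpq.lt, Real.enorm_rpow_of_nonneg
      (abs_nonneg _) hpq.sub_one_pos.le, Real.enorm_abs, ← ENNReal.rpow_mul, hpq.sub_one_mul_conj]
  · simp only [truncatedDual, indicator_of_notMem hx, enorm_zero,
      ENNReal.zero_rpow_of_pos hpq.symm.pos]

variable [MeasurableSpace α] {μ : Measure α}

lemma measurable_truncatedDual (hf : Measurable f) (hs : MeasurableSet s) :
    Measurable (truncatedDual p s f) :=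
  Measurable.indicator (by fun_prop) hs

lemma integrable_truncatedDual (hp : 1 < p) (hf : Measurable f) (hs : MeasurableSet s)
    (hμs : μ s ≠ ⊤) {M : ℝ} (hM : ∀ x ∈ s, |f x| ≤ M) : Integrable (truncatedDual p s f) μ := by
  refine (integrable_indicator_iff hs).2 (Measure.integrableOn_of_bounded hμs
    (by fun_prop) (M := M ^ (p - 1)) ?_)
  filter_upwards [ae_restrict_mem hs] with x hx
  rw [Real.norm_eq_abs, abs_rpow_sub_two_mul_self hp]
  exact Real.rpow_le_rpow (abs_nonneg _) (hM x hx) (sub_pos.2 hp).le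

lemma eLpNorm_truncatedDual (hpq : p.HolderConjugate q) (hs : MeasurableSet s) :
    eLpNorm (truncatedDual p s f) (ENNReal.ofReal q) μ =
      (∫⁻ x in s, ‖f x‖ₑ ^ p ∂μ) ^ (1 / q) := by
  rw [eLpNorm_eq_lintegral_rpow_enorm_toReal (ENNReal.ofReal_pos.2 hpq.symm.pos).ne' ofReal_ne_top,
    ENNReal.toReal_ofReal hpq.symm.nonneg]
  simp_rw [enorm_truncatedDual_rpow hpq, lintegral_indicator hs]

lemma enorm_integral_mul_truncatedDual (hp : 1 < p) (hf : Measurable f) (hs : MeasurableSet s)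
    (hfin : ∫⁻ x in s, ‖f x‖ₑ ^ p ∂μ ≠ ⊤) :
    ‖∫ x, f x * truncatedDual p s f x ∂μ‖ₑ = ∫⁻ x in s, ‖f x‖ₑ ^ p ∂μ := by
  have hpow : ∀ x, ENNReal.ofReal (|f x| ^ p) = ‖f x‖ₑ ^ p := fun x => by
    rw [← Real.norm_eq_abs, ← ENNReal.ofReal_rpow_of_nonneg (norm_nonneg _) (by linarith),
      ofReal_norm]
  simp_rw [mul_truncatedDual hp, integral_indicator hs]
  rw [Real.enorm_of_nonneg (by positivity), integral_eq_lintegral_of_nonneg_ae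
    (Eventually.of_forall fun x => by positivity) (hf.abs.pow_const p).aestronglyMeasurable]
  simp_rw [hpow]
  exact ENNReal.ofReal_toReal hfin

lemma eLpNorm_restrict_le_of_enorm_integral_mul_le (hpq : p.HolderConjugate q)
    (hf : Measurable f) (hs : MeasurableSet s) (hμs : μ s ≠ ⊤) {M : ℝ}
    (hM : ∀ x ∈ s, |f x| ≤ M) {B : ℝ≥0∞}
    (hB : ∀ h : α → ℝ, Integrable h μ → Measurable h → eLpNorm h (ENNReal.ofReal q) μ ≠ ⊤ →
      ‖∫ x, f x * h x ∂μ‖ₑ ≤ B * eLpNorm h (ENNReal.ofReal q) μ) :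
    eLpNorm f (ENNReal.ofReal p) (μ.restrict s) ≤ B := by
  set A := ∫⁻ x in s, ‖f x‖ₑ ^ p ∂μ with hA
  have hA_top : A ≠ ⊤ := by
    have hle : A ≤ ∫⁻ _ in s, ENNReal.ofReal M ^ p ∂μ :=
      setLIntegral_mono' hs fun x hx => by
        rw [← ofReal_norm]
        exact ENNReal.rpow_le_rpow (ENNReal.ofReal_le_ofReal (hM x hx)) hpq.nonneg
    rw [setLIntegral_const] at hle
    exact ne_top_of_le_ne_top (ENNReal.mul_ne_top
      (ENNReal.rpow_ne_top_of_nonneg hpq.nonneg ofReal_ne_top) hμs) hle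
  have hdual := hB (truncatedDual p s f) (integrable_truncatedDual hpq.lt hf hs hμs hM)
    (measurable_truncatedDual hf hs) (by
      rw [eLpNorm_truncatedDual hpq hs]
      exact ENNReal.rpow_ne_top_of_nonneg (one_div_nonneg.2 hpq.symm.nonneg) hA_top)
  rw [enorm_integral_mul_truncatedDual hpq.lt hf hs hA_top, eLpNorm_truncatedDual hpq hs,
    ← hA] at hdual
  rw [eLpNorm_eq_lintegral_rpow_enorm_toReal (ENNReal.ofReal_pos.2 hpq.pos).ne' ofReal_ne_top,
    ENNReal.toReal_ofReal hpq.nonneg, ← hA]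
  rcases eq_or_ne A 0 with hA0 | hA0
  · simp [hA0, hpq.pos]
  · calc A ^ (1 / p) = A ^ (1 - 1 / q) := by rw [one_div, one_div, hpq.symm.one_sub_inv]
      _ = A / A ^ (1 / q) := by rw [ENNReal.rpow_sub _ _ hA0 hA_top, ENNReal.rpow_one]
      _ ≤ B := ENNReal.div_le_of_le_mul hdual

lemma eLpNorm_le_of_enorm_integral_mul_le (hpq : p.HolderConjugate q) {f : E → ℝ}
    (hf : Continuous f) {B : ℝ≥0∞}
    (hB : ∀ h : E → ℝ, Integrable h → Measurable h → eLpNorm h (ENNReal.ofReal q) volume ≠ ⊤ →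
      ‖∫ x, f x * h x‖ₑ ≤ B * eLpNorm h (ENNReal.ofReal q) volume) :
    eLpNorm f (ENNReal.ofReal p) volume ≤ B := by
  have hball : ∀ n : ℕ, eLpNorm f (ENNReal.ofReal p)
      (volume.restrict (Metric.closedBall (0 : E) n)) ≤ B := fun n => by
    obtain ⟨M, hM⟩ := (isCompact_closedBall (0 : E) n).exists_bound_of_continuousOn hf.continuousOn
    exact eLpNorm_restrict_le_of_enorm_integral_mul_le hpq hf.measurable
      measurableSet_closedBall measure_closedBall_lt_top.ne hM hB
  have hlim := (aecover_closedBall (μ := (volume : Measure E)) (x := 0)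
    tendsto_natCast_atTop_atTop).lintegral_tendsto_of_countably_generated
      (hf.measurable.enorm.pow_const p).aemeasurable
  simp_rw [eLpNorm_eq_lintegral_rpow_enorm_toReal (ENNReal.ofReal_pos.2 hpq.pos).ne' ofReal_ne_top,
    ENNReal.toReal_ofReal hpq.nonneg] at hball ⊢
  exact le_of_tendsto (hlim.ennrpow_const _) (Eventually.of_forall hball)

theorem exists_eLpNorm_le_of_laplacian_eq_sum [Nontrivial E] {p : ℝ} (hp : 1 < p) :
    ∃ C : NNReal, ∀ {ι : Type*} (s : Finset ι) (f : 𝓢(E, ℝ)) (v w : ι → E) (g : ι → 𝓢(E, ℝ)),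
      Δ f = ∑ i ∈ s, ∂_{v i} (∂_{w i} (g i)) →
      eLpNorm f (ENNReal.ofReal p) volume ≤
        C * ∑ i ∈ s, ‖v i‖ₑ * ‖w i‖ₑ * eLpNorm (g i) (ENNReal.ofReal p) volume := by
  have hpq := Real.HolderConjugate.conjExponent hp
  obtain ⟨C, hC⟩ := exists_enorm_integral_mul_le_of_laplacian_eq_sum (E := E) hpq
  exact ⟨C, fun s f v w g hf =>
    eLpNorm_le_of_enorm_integral_mul_le hpq f.continuous (hC s f v w g hf)⟩

end CalderonZygmund

section LineDeriv

open scoped SchwartzMap LineDeriv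

variable {E F G : Type*} [NormedAddCommGroup E] [NormedSpace ℝ E] [NormedAddCommGroup F]
  [NormedSpace ℝ F] [NormedAddCommGroup G] [NormedSpace ℝ G]

lemma lineDerivOp_lineDerivOp_apply (f : 𝓢(E, F)) (v w x : E) :
    ∂_{v} (∂_{w} f) x = fderiv ℝ (fderiv ℝ f) x v w := by
  have hderiv : HasFDerivAt (fun y => fderiv ℝ f y w) ((fderiv ℝ (fderiv ℝ f) x).flip w) x := by
    simpa using (((f.smooth 2).fderiv_right (m := 1) le_rfl).differentiable one_ne_zero
      x).hasFDerivAt.clm_apply (hasFDerivAt_const w x)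
  rw [SchwartzMap.lineDerivOp_apply_eq_fderiv]
  exact DFunLike.congr_fun hderiv.fderiv v

lemma lineDerivOp_comm (f : 𝓢(E, F)) (v w : E) : ∂_{v} (∂_{w} f) = ∂_{w} (∂_{v} f) := by
  ext x
  rw [lineDerivOp_lineDerivOp_apply, lineDerivOp_lineDerivOp_apply]
  exact ((f.smooth 2).contDiffAt.isSymmSndFDerivAt (by simp)).eq v w

lemma lineDerivOp_sub (v : E) (f g : 𝓢(E, F)) : ∂_{v} (f - g) = ∂_{v} f - ∂_{v} g :=
  map_sub (LineDeriv.lineDerivOpCLM ℝ 𝓢(E, F) v) f g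

lemma lineDerivOp_postcompCLM (L : F →L[ℝ] G) (f : 𝓢(E, F)) (v : E) :
    ∂_{v} (f.postcompCLM L) = (∂_{v} f).postcompCLM L := by
  ext x
  rw [SchwartzMap.lineDerivOp_apply_eq_fderiv, SchwartzMap.postcompCLM_apply,
    SchwartzMap.lineDerivOp_apply_eq_fderiv]
  exact DFunLike.congr_fun (L.hasFDerivAt.comp x (f.differentiable x).hasFDerivAt).fderiv v

end LineDeriv

section OrthonormalCoordinates

open scoped SchwartzMap LineDeriv InnerProductSpace

variable {E F : Type*} [NormedAddCommGroup E] [InnerProductSpace ℝ E] [NormedAddCommGroup F]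
  [NormedSpace ℝ F] {ι : Type*} [Fintype ι]

lemma norm_le_sum_abs_inner (e : OrthonormalBasis ι ℝ E) (x : E) : ‖x‖ ≤ ∑ i, |⟪e i, x⟫_ℝ| := by
  conv_lhs => rw [← e.sum_repr' x]
  exact (norm_sum_le _ _).trans_eq (by simp [norm_smul])

lemma opNorm_le_sum_orthonormalBasis (e : OrthonormalBasis ι ℝ E) (L : E →L[ℝ] F) :
    ‖L‖ ≤ ∑ i, ‖L (e i)‖ := by
  refine L.opNorm_le_bound (by positivity) fun v => ?_
  calc ‖L v‖ = ‖∑ i, ⟪e i, v⟫_ℝ • L (e i)‖ := by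
        conv_lhs => rw [← e.sum_repr' v, map_sum]
        simp only [map_smul]
    _ ≤ ∑ i, ‖⟪e i, v⟫_ℝ • L (e i)‖ := norm_sum_le _ _
    _ ≤ ∑ i, ‖L (e i)‖ * ‖v‖ := by
        refine Finset.sum_le_sum fun i _ => ?_
        rw [norm_smul, mul_comm]
        gcongr
        simpa using norm_inner_le_norm (𝕜 := ℝ) (e i) v
    _ = (∑ i, ‖L (e i)‖) * ‖v‖ := (Finset.sum_mul _ _ _).symm

variable [MeasurableSpace E] [BorelSpace E] {μ : Measure E}

lemma eLpNorm_fderiv_le_sum_lineDeriv (e : OrthonormalBasis ι ℝ E) (f : 𝓢(E, F))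
    {p : ℝ≥0∞} (hp : 1 ≤ p) :
    eLpNorm (fderiv ℝ f) p μ ≤ ∑ i, eLpNorm (∂_{e i} f : 𝓢(E, F)) p μ := by
  calc eLpNorm (fderiv ℝ f) p μ
      ≤ eLpNorm (∑ i, fun x => ‖(∂_{e i} f : 𝓢(E, F)) x‖) p μ :=
        eLpNorm_mono_real fun x => by
          simpa [SchwartzMap.lineDerivOp_apply_eq_fderiv] using
            opNorm_le_sum_orthonormalBasis e (fderiv ℝ f x)
    _ ≤ ∑ i, eLpNorm (fun x => ‖(∂_{e i} f : 𝓢(E, F)) x‖) p μ :=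
        eLpNorm_sum_le
          (fun i _ => (∂_{e i} f : 𝓢(E, F)).continuous.norm.aestronglyMeasurable) hp
    _ = ∑ i, eLpNorm (∂_{e i} f : 𝓢(E, F)) p μ := by simp_rw [eLpNorm_norm]

lemma eLpNorm_iteratedFDeriv_two_le_sum_fderiv_lineDeriv
    (e : OrthonormalBasis ι ℝ E) (f : 𝓢(E, F)) {p : ℝ≥0∞} (hp : 1 ≤ p) :
    eLpNorm (iteratedFDeriv ℝ 2 f) p μ ≤
      ∑ i, eLpNorm (fderiv ℝ (∂_{e i} f : 𝓢(E, F))) p μ := by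
  calc eLpNorm (iteratedFDeriv ℝ 2 f) p μ
      ≤ eLpNorm (∑ i, fun x => ‖fderiv ℝ (∂_{e i} f : 𝓢(E, F)) x‖) p μ :=
        eLpNorm_mono_real fun x => by
          rw [← norm_iteratedFDeriv_fderiv, norm_iteratedFDeriv_one, Finset.sum_apply]
          refine (opNorm_le_sum_orthonormalBasis e _).trans (Finset.sum_le_sum fun i _ => ?_)
          refine ContinuousLinearMap.opNorm_le_bound _ (norm_nonneg _) fun v => ?_
          rw [← lineDerivOp_lineDerivOp_apply, lineDerivOp_comm,
            SchwartzMap.lineDerivOp_apply_eq_fderiv]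
          exact ContinuousLinearMap.le_opNorm _ _
    _ ≤ ∑ i, eLpNorm (fun x => ‖fderiv ℝ (∂_{e i} f : 𝓢(E, F)) x‖) p μ :=
        eLpNorm_sum_le (fun i _ =>
          (((∂_{e i} f : 𝓢(E, F)).smooth 1).continuous_fderiv
            one_ne_zero).norm.aestronglyMeasurable) hp
    _ = ∑ i, eLpNorm (fderiv ℝ (∂_{e i} f : 𝓢(E, F))) p μ := by simp_rw [eLpNorm_norm]

end OrthonormalCoordinates

section DivCurl

open scoped SchwartzMap LineDeriv Laplacian InnerProductSpace

variable {E : Type*} [NormedAddCommGroup E] [InnerProductSpace ℝ E] {ι : Type*} [Fintype ι]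

/-- The `i`-th coordinate of a Schwartz vector field in the orthonormal basis `e`. -/
def coordField (e : OrthonormalBasis ι ℝ E) (b : 𝓢(E, E)) (i : ι) : 𝓢(E, ℝ) :=
  b.postcompCLM (innerSL ℝ (e i))

/-- The entry `∂ₖ bₗ - ∂ₗ bₖ` of the antisymmetric matrix representing the curl of the field `b`
in the orthonormal basis `e`. -/
def curlEntry (e : OrthonormalBasis ι ℝ E) (b : 𝓢(E, E)) (k l : ι) : 𝓢(E, ℝ) :=
  ∂_{e k} (coordField e b l) - ∂_{e l} (coordField e b k)

lemma coordField_apply (e : OrthonormalBasis ι ℝ E) (b : 𝓢(E, E)) (i : ι) (x : E) :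
    coordField e b i x = ⟪e i, b x⟫_ℝ := rfl

lemma coordField_lineDeriv (e : OrthonormalBasis ι ℝ E) (b : 𝓢(E, E)) (v : E) (i : ι) :
    coordField e (∂_{v} b) i = ∂_{v} (coordField e b i) :=
  (lineDerivOp_postcompCLM _ _ _).symm

lemma eLpNorm_le_sum_coordField (e : OrthonormalBasis ι ℝ E) (b : 𝓢(E, E))
    [MeasurableSpace E] [BorelSpace E] {μ : Measure E} {p : ℝ≥0∞} (hp : 1 ≤ p) :
    eLpNorm b p μ ≤ ∑ j, eLpNorm (coordField e b j) p μ := by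
  calc eLpNorm b p μ ≤ eLpNorm (∑ j, fun x => ‖coordField e b j x‖) p μ :=
        eLpNorm_mono_real fun x => by
          simpa [coordField_apply] using norm_le_sum_abs_inner e (b x)
    _ ≤ ∑ j, eLpNorm (fun x => ‖coordField e b j x‖) p μ :=
        eLpNorm_sum_le (fun j _ => (coordField e b j).continuous.norm.aestronglyMeasurable) hp
    _ = ∑ j, eLpNorm (coordField e b j) p μ := by simp_rw [eLpNorm_norm]

lemma curlEntry_lineDeriv (e : OrthonormalBasis ι ℝ E) (b : 𝓢(E, E)) (v : E) (k l : ι) :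
    curlEntry e (∂_{v} b) k l = ∂_{v} (curlEntry e b k l) := by
  simp only [curlEntry, coordField_lineDeriv, lineDerivOp_comm _ v, lineDerivOp_sub]

lemma sum_lineDeriv_coordField_lineDeriv (e : OrthonormalBasis ι ℝ E) {b : 𝓢(E, E)}
    (hdiv : ∑ i, ∂_{e i} (coordField e b i) = 0) (v : E) :
    ∑ i, ∂_{e i} (coordField e (∂_{v} b) i) = 0 := by
  simp_rw [coordField_lineDeriv, fun i => lineDerivOp_comm (coordField e b i) (e i) v,
    ← LineDeriv.lineDerivOp_sum, hdiv, LineDeriv.lineDerivOp_zero]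

variable [FiniteDimensional ℝ E]

lemma laplacian_coordField_eq_sum_curlEntry (e : OrthonormalBasis ι ℝ E) {b : 𝓢(E, E)}
    (hdiv : ∑ i, ∂_{e i} (coordField e b i) = 0) (j : ι) :
    Δ (coordField e b j) = ∑ k, ∂_{e k} (curlEntry e b k j) := by
  have hzero : ∑ k, ∂_{e k} (∂_{e j} (coordField e b k)) = 0 := by
    simpa only [coordField_lineDeriv] using sum_lineDeriv_coordField_lineDeriv e hdiv (e j)
  simp_rw [SchwartzMap.laplacian_eq_sum e, curlEntry, lineDerivOp_sub, Finset.sum_sub_distrib,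
    hzero, sub_zero]

lemma laplacian_lineDeriv_coordField_eq_sum_curlEntry (e : OrthonormalBasis ι ℝ E) {b : 𝓢(E, E)}
    (hdiv : ∑ i, ∂_{e i} (coordField e b i) = 0) (v : E) (j : ι) :
    Δ (∂_{v} (coordField e b j)) = ∑ k, ∂_{v} (∂_{e k} (curlEntry e b k j)) := by
  rw [← coordField_lineDeriv, laplacian_coordField_eq_sum_curlEntry e
    (sum_lineDeriv_coordField_lineDeriv e hdiv v)]
  simp_rw [curlEntry_lineDeriv, fun k => lineDerivOp_comm (curlEntry e b k j) (e k) v]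

variable [MeasurableSpace E] [BorelSpace E] [Nontrivial E]

theorem exists_eLpNorm_fderiv_le_sum_curlEntry (e : OrthonormalBasis ι ℝ E) {p : ℝ}
    (hp : 1 < p) : ∃ C : NNReal, ∀ b : 𝓢(E, E), ∑ i, ∂_{e i} (coordField e b i) = 0 →
      eLpNorm (fderiv ℝ b) (ENNReal.ofReal p) volume ≤
        C * ∑ j, ∑ k, eLpNorm (curlEntry e b k j) (ENNReal.ofReal p) volume := by
  obtain ⟨C, hC⟩ := exists_eLpNorm_le_of_laplacian_eq_sum (E := E) hp
  have hp' : 1 ≤ ENNReal.ofReal p := ENNReal.one_le_ofReal.2 hp.le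
  refine ⟨Fintype.card ι * C, fun b hdiv => ?_⟩
  have hentry : ∀ i j, eLpNorm (∂_{e i} (coordField e b j) : 𝓢(E, ℝ)) (ENNReal.ofReal p) volume ≤
      C * ∑ k, eLpNorm (curlEntry e b k j) (ENNReal.ofReal p) volume := fun i j => by
    simpa using hC Finset.univ _ (fun _ => e i) e _
      (laplacian_lineDeriv_coordField_eq_sum_curlEntry e hdiv (e i) j)
  calc eLpNorm (fderiv ℝ b) (ENNReal.ofReal p) volume
      ≤ ∑ i, ∑ j, eLpNorm (∂_{e i} (coordField e b j) : 𝓢(E, ℝ)) (ENNReal.ofReal p) volume := by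
        simp_rw [← coordField_lineDeriv]
        exact (eLpNorm_fderiv_le_sum_lineDeriv e b hp').trans
          (Finset.sum_le_sum fun i _ => eLpNorm_le_sum_coordField e _ hp')
    _ ≤ ∑ _i : ι, ∑ j, C * ∑ k, eLpNorm (curlEntry e b k j) (ENNReal.ofReal p) volume := by
        gcongr
        exact hentry _ _
    _ = _ := by simp [Finset.mul_sum, mul_assoc]

theorem exists_eLpNorm_iteratedFDeriv_two_le_sum_curlEntry (e : OrthonormalBasis ι ℝ E) {p : ℝ}
    (hp : 1 < p) : ∃ C : NNReal, ∀ b : 𝓢(E, E), ∑ i, ∂_{e i} (coordField e b i) = 0 →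
      eLpNorm (iteratedFDeriv ℝ 2 b) (ENNReal.ofReal p) volume ≤
        C * ∑ i, ∑ j, ∑ k, eLpNorm (∂_{e i} (curlEntry e b k j) : 𝓢(E, ℝ))
          (ENNReal.ofReal p) volume := by
  obtain ⟨C, hC⟩ := exists_eLpNorm_fderiv_le_sum_curlEntry e hp
  refine ⟨C, fun b hdiv => (eLpNorm_iteratedFDeriv_two_le_sum_fderiv_lineDeriv e b
    (ENNReal.one_le_ofReal.2 hp.le)).trans ?_⟩
  rw [Finset.mul_sum]
  refine Finset.sum_le_sum fun i _ => ?_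
  simpa only [curlEntry_lineDeriv] using
    hC (∂_{e i} b) (sum_lineDeriv_coordField_lineDeriv e hdiv (e i))

end DivCurl

section MirrorPart

open scoped SchwartzMap

lemma rad_nonneg (x : E3) : 0 ≤ rad x := Real.sqrt_nonneg _

lemma rad_eq_zero {x : E3} : rad x = 0 ↔ x 0 = 0 ∧ x 1 = 0 := by
  rw [rad, Real.sqrt_eq_zero (by positivity), add_eq_zero_iff_of_nonneg (sq_nonneg _) (sq_nonneg _),
    sq_eq_zero_iff, sq_eq_zero_iff]

lemma continuous_rad : Continuous rad := by unfold rad; fun_prop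

lemma ae_rad_ne_zero : ∀ᵐ x : E3, rad x ≠ 0 := by
  have hker : (EuclideanSpace.proj 0 : E3 →L[ℝ] ℝ).ker ≠ ⊤ := fun h => by
    have hmem : EuclideanSpace.single (0 : Fin 3) (1 : ℝ) ∈
      (EuclideanSpace.proj 0 : E3 →L[ℝ] ℝ).ker := h ▸ Submodule.mem_top
    simp at hmem
  refine measure_mono_null (fun x hx => ?_) (Measure.addHaar_submodule volume _ hker)
  simpa using (rad_eq_zero.1 (not_not.1 hx)).1

namespace AxisymVec

variable {u : E3 → E3} {ur uθ uz : ℝ → ℝ → ℝ}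

lemma apply_two_eq (h : AxisymVec u ur uθ uz) (hu : Continuous u)
    (huz : Continuous fun v : ℝ × ℝ => uz v.1 v.2) (x : E3) : u x 2 = uz (rad x) (x 2) := by
  have hleft : Continuous fun x => u x 2 := by fun_prop
  have hright : Continuous fun x : E3 => uz (rad x) (x 2) :=
    huz.comp (continuous_rad.prodMk (by fun_prop))
  exact congrFun ((hleft.ae_eq_iff_eq volume hright).1
    (ae_rad_ne_zero.mono fun x hx => (h x hx).2.2)) x

-- The horizontal components change sign under the half turn about the axis.
lemma apply_zero_eq_zero_of_rad_eq_zero (h : AxisymVec u ur uθ uz) (hu : Continuous u) {x : E3}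
    (hx : rad x = 0) : u x 0 = 0 := by
  have hsum : Continuous fun x : E3 => u x 0 + u !₂[-x 0, -x 1, x 2] 0 := by fun_prop
  have hodd := congrFun ((hsum.ae_eq_iff_eq volume continuous_zero).1
    (ae_rad_ne_zero.mono fun x hx => ?_)) x
  · obtain ⟨h0, h1⟩ := rad_eq_zero.1 hx
    have hfix : !₂[-x 0, -x 1, x 2] = x := by ext i; fin_cases i <;> simp [h0, h1]
    simpa [hfix] using hodd
  · have hrad : rad !₂[-x 0, -x 1, x 2] = rad x := by simp [rad]
    have hturn := (h !₂[-x 0, -x 1, x 2] (by rwa [hrad])).1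
    have hcoord : u !₂[-x 0, -x 1, x 2] 0 =
        ur (rad x) (x 2) * (-x 0 / rad x) - uθ (rad x) (x 2) * (-x 1 / rad x) := hrad ▸ hturn
    change u x 0 + u !₂[-x 0, -x 1, x 2] 0 = 0
    rw [(h x hx).1, hcoord]
    ring

end AxisymVec

/-- The reflection `x₂ ↦ -x₂` across a plane through the axis of symmetry. -/
def mirror : E3 ≃ₗᵢ[ℝ] E3 :=
  LinearIsometryEquiv.piLpCongrRight 2 fun i : Fin 3 =>
    if i = 1 then LinearIsometryEquiv.neg ℝ else LinearIsometryEquiv.refl ℝ ℝ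

lemma mirror_apply_zero (x : E3) : mirror x 0 = x 0 := rfl

lemma mirror_apply_one (x : E3) : mirror x 1 = -x 1 := rfl

lemma mirror_apply_two (x : E3) : mirror x 2 = x 2 := rfl

lemma mirror_mirror (x : E3) : mirror (mirror x) = x := by
  ext i
  fin_cases i
  · rfl
  · exact neg_neg (x 1)
  · rfl

lemma rad_mirror (x : E3) : rad (mirror x) = rad x := by
  simp only [rad, mirror_apply_zero, mirror_apply_one, neg_sq]

/-- The mirror-symmetric part of a vector field; for an axially symmetric field this removes
exactly the swirl. -/
def mirrorPart (u : E3 → E3) (x : E3) : E3 := (1 / 2 : ℝ) • (u x + mirror (u (mirror x)))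

lemma exists_schwartzMap_eq_mirrorPart (u : 𝓢(E3, E3)) : ∃ b : 𝓢(E3, E3), ⇑b = mirrorPart u :=
  ⟨(1 / 2 : ℝ) • (u + SchwartzMap.postcompCLM (mirror : E3 →L[ℝ] E3)
    (SchwartzMap.compCLMOfContinuousLinearEquiv ℝ mirror.toContinuousLinearEquiv u)), rfl⟩

lemma pd_apply_eq_fderiv_apply {u : E3 → E3} {x : E3} (hu : DifferentiableAt ℝ u x)
    (i j : Fin 3) : pd i (fun y => u y j) x = fderiv ℝ u x (EuclideanSpace.single i 1) j :=
  DFunLike.congr_fun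
    ((EuclideanSpace.proj j : E3 →L[ℝ] ℝ).hasFDerivAt.comp x hu.hasFDerivAt).fderiv _

lemma sum_pd_eq_trace_fderiv {u : E3 → E3} {x : E3} (hu : DifferentiableAt ℝ u x) :
    ∑ i, pd i (fun y => u y i) x = LinearMap.trace ℝ E3 (fderiv ℝ u x).toLinearMap := by
  rw [LinearMap.trace_eq_sum_inner _ (EuclideanSpace.basisFun (Fin 3) ℝ)]
  refine Finset.sum_congr rfl fun i _ => ?_
  simp [pd_apply_eq_fderiv_apply hu, EuclideanSpace.inner_single_left]

lemma sum_pd_mirrorPart {u : E3 → E3} (hu : Differentiable ℝ u) (x : E3) :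
    ∑ i, pd i (fun y => mirrorPart u y i) x =
      1 / 2 * (∑ i, pd i (fun y => u y i) x + ∑ i, pd i (fun y => u y i) (mirror x)) := by
  let M : E3 →L[ℝ] E3 := mirror.toContinuousLinearEquiv.toContinuousLinearMap
  have hM : M.toLinearMap * M.toLinearMap = 1 := LinearMap.ext mirror_mirror
  have hconj : HasFDerivAt (fun y => mirror (u (mirror y)))
      (M ∘L fderiv ℝ u (mirror x) ∘L M) x :=
    M.hasFDerivAt.comp x ((hu (mirror x)).hasFDerivAt.comp x M.hasFDerivAt)
  have hmirror : HasFDerivAt (mirrorPart u)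
      ((1 / 2 : ℝ) • (fderiv ℝ u x + M ∘L fderiv ℝ u (mirror x) ∘L M)) x :=
    ((hu x).hasFDerivAt.fun_add hconj).const_smul (1 / 2 : ℝ)
  have htrace : LinearMap.trace ℝ E3 (M ∘L fderiv ℝ u (mirror x) ∘L M).toLinearMap =
      LinearMap.trace ℝ E3 (fderiv ℝ u (mirror x)).toLinearMap := by
    change LinearMap.trace ℝ E3 (M.toLinearMap * ((fderiv ℝ u (mirror x)).toLinearMap *
      M.toLinearMap)) = _
    rw [LinearMap.trace_mul_comm, mul_assoc, hM, mul_one]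
  rw [sum_pd_eq_trace_fderiv (hu x), sum_pd_eq_trace_fderiv (hu (mirror x)),
    sum_pd_eq_trace_fderiv hmirror.differentiableAt, hmirror.fderiv, ← htrace, ← map_add,
    ← smul_eq_mul, ← map_smul]
  rfl

lemma swirlFreePart_eq_mirrorPart_of_rad_ne_zero {u : E3 → E3} {ur uθ uz : ℝ → ℝ → ℝ}
    (h : AxisymVec u ur uθ uz) {x : E3} (hx : rad x ≠ 0) :
    swirlFreePart ur uz x = mirrorPart u x := by
  obtain ⟨h0, h1, h2⟩ := h x hx
  obtain ⟨hm0, hm1, hm2⟩ := h (mirror x) (by rwa [rad_mirror])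
  simp only [rad_mirror, mirror_apply_zero, mirror_apply_one, mirror_apply_two] at hm0 hm1 hm2
  ext j
  fin_cases j
  · change ur (rad x) (x 2) * (x 0 / rad x) = 1 / 2 * (u x 0 + mirror (u (mirror x)) 0)
    rw [mirror_apply_zero, h0, hm0]
    ring
  · change ur (rad x) (x 2) * (x 1 / rad x) = 1 / 2 * (u x 1 + mirror (u (mirror x)) 1)
    rw [mirror_apply_one, h1, hm1]
    ring
  · change uz (rad x) (x 2) = 1 / 2 * (u x 2 + mirror (u (mirror x)) 2)
    rw [mirror_apply_two, h2, hm2]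
    ring

lemma swirlFreePart_eq_mirrorPart_of_rad_eq_zero {u : E3 → E3} {ur uθ uz : ℝ → ℝ → ℝ}
    (hu : Continuous u) (huz : Continuous fun v : ℝ × ℝ => uz v.1 v.2)
    (h : AxisymVec u ur uθ uz) {x : E3} (hx : rad x = 0) :
    swirlFreePart ur uz x = mirrorPart u x := by
  have hmirror : mirror x = x := by
    ext i
    fin_cases i
    · exact mirror_apply_zero x
    · exact (mirror_apply_one x).trans (neg_eq_self.2 (rad_eq_zero.1 hx).2)
    · exact mirror_apply_two x
  ext j
  fin_cases j
  · change ur (rad x) (x 2) * (x 0 / rad x) = 1 / 2 * (u x 0 + mirror (u (mirror x)) 0)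
    rw [hmirror, mirror_apply_zero, h.apply_zero_eq_zero_of_rad_eq_zero hu hx, hx]
    simp
  · change ur (rad x) (x 2) * (x 1 / rad x) = 1 / 2 * (u x 1 + mirror (u (mirror x)) 1)
    rw [hmirror, mirror_apply_one, hx]
    simp
  · change uz (rad x) (x 2) = 1 / 2 * (u x 2 + mirror (u (mirror x)) 2)
    rw [hmirror, mirror_apply_two, h.apply_two_eq hu huz]
    ring

lemma swirlFreePart_eq_mirrorPart {u : E3 → E3} {ur uθ uz : ℝ → ℝ → ℝ} (hu : Continuous u)
    (huz : Continuous fun v : ℝ × ℝ => uz v.1 v.2) (h : AxisymVec u ur uθ uz) :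
    swirlFreePart ur uz = mirrorPart u := by
  ext1 x
  rcases eq_or_ne (rad x) 0 with hx | hx
  · exact swirlFreePart_eq_mirrorPart_of_rad_eq_zero hu huz h hx
  · exact swirlFreePart_eq_mirrorPart_of_rad_ne_zero h hx

end MirrorPart

section CylindricalDerivatives

/-- The differential of the distance to the axis, that is, pairing with `e_r`. -/
def radGrad (x : E3) : E3 →L[ℝ] ℝ :=
  (x 0 / rad x) • EuclideanSpace.proj 0 + (x 1 / rad x) • EuclideanSpace.proj 1

lemma hasFDerivAt_coord (i : Fin 3) (x : E3) :
    HasFDerivAt (fun y : E3 => y i) (EuclideanSpace.proj i : E3 →L[ℝ] ℝ) x :=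
  (EuclideanSpace.proj i : E3 →L[ℝ] ℝ).hasFDerivAt

lemma hasFDerivAt_rad {x : E3} (hx : rad x ≠ 0) : HasFDerivAt rad (radGrad x) x := by
  have hsum : x 0 ^ 2 + x 1 ^ 2 ≠ 0 := fun h => hx (by rw [rad, h, Real.sqrt_zero])
  refine ((((hasFDerivAt_coord 0 x).pow 2).fun_add
    ((hasFDerivAt_coord 1 x).pow 2)).sqrt hsum).congr_fderiv ?_
  change (1 / (2 * rad x)) • _ = radGrad x
  ext v
  simp only [radGrad, one_div, mul_inv_rev, Nat.add_one_sub_one, pow_one, nsmul_eq_mul,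
    Nat.cast_ofNat, smul_add, add_apply, smul_apply, PiLp.proj_apply, smul_eq_mul]
  field_simp

lemma hasFDerivAt_coord_div_rad (a : Fin 3) {x : E3} (hx : rad x ≠ 0) :
    HasFDerivAt (fun y : E3 => y a / rad y)
      ((rad x)⁻¹ • (EuclideanSpace.proj a - (x a / rad x) • radGrad x)) x := by
  have h : HasFDerivAt (fun y : E3 => y a / rad y) _ x := (hasFDerivAt_coord a x).mul
    ((hasDerivAt_inv hx).comp_hasFDerivAt x (hasFDerivAt_rad hx))
  refine h.congr_fderiv ?_
  ext v
  simp only [neg_smul, smul_neg, add_apply, neg_apply, smul_apply, smul_eq_mul, PiLp.proj_apply,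
    sub_apply]
  field_simp
  ring

lemma pdr_eq_fderiv {U : ℝ → ℝ → ℝ} (hU : Differentiable ℝ fun v : ℝ × ℝ => U v.1 v.2) (r z : ℝ) :
    pdr U r z = fderiv ℝ (fun v : ℝ × ℝ => U v.1 v.2) (r, z) (1, 0) :=
  ((hU (r, z)).hasFDerivAt.comp_hasDerivAt_of_eq r
    ((hasDerivAt_id r).prodMk (hasDerivAt_const r z)) rfl).deriv

lemma pdz_eq_fderiv {U : ℝ → ℝ → ℝ} (hU : Differentiable ℝ fun v : ℝ × ℝ => U v.1 v.2) (r z : ℝ) :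
    pdz U r z = fderiv ℝ (fun v : ℝ × ℝ => U v.1 v.2) (r, z) (0, 1) :=
  ((hU (r, z)).hasFDerivAt.comp_hasDerivAt_of_eq z
    ((hasDerivAt_const z r).prodMk (hasDerivAt_id z)) rfl).deriv

lemma hasFDerivAt_comp_rad {U : ℝ → ℝ → ℝ} (hU : Differentiable ℝ fun v : ℝ × ℝ => U v.1 v.2)
    {x : E3} (hx : rad x ≠ 0) :
    HasFDerivAt (fun y : E3 => U (rad y) (y 2))
      (pdr U (rad x) (x 2) • radGrad x + pdz U (rad x) (x 2) • EuclideanSpace.proj 2) x := by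
  refine ((hU (rad x, x 2)).hasFDerivAt.comp x
    ((hasFDerivAt_rad hx).prodMk (hasFDerivAt_coord 2 x))).congr_fderiv ?_
  ext v
  have hsplit : ((radGrad x v, v 2) : ℝ × ℝ) = radGrad x v • (1, 0) + v 2 • (0, 1) := by simp
  change fderiv ℝ (fun v : ℝ × ℝ => U v.1 v.2) (rad x, x 2) (radGrad x v, v 2) = _
  rw [pdr_eq_fderiv hU, pdz_eq_fderiv hU, hsplit, map_add, map_smul, map_smul]
  simp [mul_comm]

lemma contDiff_pdz_sub_pdr {ur uz : ℝ → ℝ → ℝ} (hur : ContDiff ℝ 2 fun v : ℝ × ℝ => ur v.1 v.2)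
    (huz : ContDiff ℝ 2 fun v : ℝ × ℝ => uz v.1 v.2) :
    ContDiff ℝ 1 fun v : ℝ × ℝ => pdz ur v.1 v.2 - pdr uz v.1 v.2 := by
  simp_rw [pdz_eq_fderiv (hur.differentiable two_ne_zero),
    pdr_eq_fderiv (huz.differentiable two_ne_zero)]
  exact ((hur.fderiv_right le_rfl).clm_apply contDiff_const).sub
    ((huz.fderiv_right le_rfl).clm_apply contDiff_const)

lemma continuous_wTheta {ur uz : ℝ → ℝ → ℝ} (hur : ContDiff ℝ 2 fun v : ℝ × ℝ => ur v.1 v.2)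
    (huz : ContDiff ℝ 2 fun v : ℝ × ℝ => uz v.1 v.2) : Continuous (wTheta ur uz) :=
  (contDiff_pdz_sub_pdr hur huz).continuous.comp
    (continuous_rad.prodMk (by fun_prop : Continuous fun x : E3 => x 2))

lemma differentiableAt_wTheta {ur uz : ℝ → ℝ → ℝ} (hur : ContDiff ℝ 2 fun v : ℝ × ℝ => ur v.1 v.2)
    (huz : ContDiff ℝ 2 fun v : ℝ × ℝ => uz v.1 v.2) {x : E3} (hx : rad x ≠ 0) :
    DifferentiableAt ℝ (wTheta ur uz) x :=
  (hasFDerivAt_comp_rad (U := fun r z => pdz ur r z - pdr uz r z)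
    ((contDiff_pdz_sub_pdr hur huz).differentiable one_ne_zero) hx).differentiableAt

/-- Off-axis differentiable factors which, like the components of `e_r`, have size at most `1` and
gradient `O(1 / r)`. -/
def IsAngular (φ : E3 → ℝ) : Prop :=
  ∀ x, rad x ≠ 0 → ‖φ x‖ ≤ 1 ∧ DifferentiableAt ℝ φ x ∧ ‖fderiv ℝ φ x‖ ≤ 3 / rad x

lemma norm_coord_div_rad_le {a : Fin 3} (ha : a ≠ 2) (x : E3) : ‖x a / rad x‖ ≤ 1 := by
  rw [norm_div, Real.norm_of_nonneg (rad_nonneg x)]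
  refine div_le_one_of_le₀ (Real.abs_le_sqrt ?_) (rad_nonneg x)
  fin_cases a
  · exact le_add_of_nonneg_right (sq_nonneg _)
  · exact le_add_of_nonneg_left (sq_nonneg _)
  · exact absurd rfl ha

lemma norm_proj_le (a : Fin 3) : ‖(EuclideanSpace.proj a : E3 →L[ℝ] ℝ)‖ ≤ 1 :=
  ContinuousLinearMap.opNorm_le_bound _ zero_le_one fun v => by
    simpa using PiLp.norm_apply_le v a

lemma norm_radGrad_le (x : E3) : ‖radGrad x‖ ≤ 2 := by
  refine (norm_add_le _ _).trans ?_
  rw [norm_smul, norm_smul]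
  exact (add_le_add
    (mul_le_one₀ (norm_coord_div_rad_le (by decide) x) (norm_nonneg _) (norm_proj_le 0))
    (mul_le_one₀ (norm_coord_div_rad_le (by decide) x) (norm_nonneg _)
      (norm_proj_le 1))).trans_eq one_add_one_eq_two

lemma isAngular_coord_div_rad {a : Fin 3} (ha : a ≠ 2) : IsAngular fun x => x a / rad x := by
  intro x hx
  have hderiv := hasFDerivAt_coord_div_rad a hx
  refine ⟨norm_coord_div_rad_le ha x, hderiv.differentiableAt, ?_⟩
  have hsub : ‖(EuclideanSpace.proj a : E3 →L[ℝ] ℝ) - (x a / rad x) • radGrad x‖ ≤ 3 := by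
    refine (norm_sub_le _ _).trans ?_
    rw [norm_smul]
    linarith [norm_proj_le a, norm_radGrad_le x,
      mul_le_of_le_one_left (norm_nonneg (radGrad x)) (norm_coord_div_rad_le ha x)]
  rw [hderiv.fderiv, norm_smul, norm_inv, Real.norm_of_nonneg (rad_nonneg x),
    inv_mul_eq_div]
  exact div_le_div_of_nonneg_right hsub (rad_nonneg x)

lemma isAngular_zero : IsAngular 0 := fun x _ =>
  ⟨by simp, differentiableAt_const 0, by
    rw [fderiv_zero, Pi.zero_apply, norm_zero]
    exact div_nonneg zero_le_three (rad_nonneg x)⟩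

lemma IsAngular.neg {φ : E3 → ℝ} (h : IsAngular φ) : IsAngular (-φ) := fun x hx => by
  rw [fderiv_neg, norm_neg, Pi.neg_apply, norm_neg]
  exact ⟨(h x hx).1, (h x hx).2.1.neg, (h x hx).2.2⟩

end CylindricalDerivatives

section AxisymmetricCurl

open scoped SchwartzMap LineDeriv

variable {ur uz : ℝ → ℝ → ℝ}

lemma pd_swirlFreePart_sub_pd_swirlFreePart
    (hur : Differentiable ℝ fun v : ℝ × ℝ => ur v.1 v.2)
    (huz : Differentiable ℝ fun v : ℝ × ℝ => uz v.1 v.2) {x : E3} (hx : rad x ≠ 0) :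
    pd 0 (fun y => swirlFreePart ur uz y 1) x = pd 1 (fun y => swirlFreePart ur uz y 0) x ∧
    pd 2 (fun y => swirlFreePart ur uz y 0) x - pd 0 (fun y => swirlFreePart ur uz y 2) x =
      wTheta ur uz x * (x 0 / rad x) ∧
    pd 2 (fun y => swirlFreePart ur uz y 1) x - pd 1 (fun y => swirlFreePart ur uz y 2) x =
      wTheta ur uz x * (x 1 / rad x) := by
  have hr := hasFDerivAt_comp_rad hur hx
  have h0 : HasFDerivAt (fun y => swirlFreePart ur uz y 0) _ x :=
    hr.mul (hasFDerivAt_coord_div_rad 0 hx)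
  have h1 : HasFDerivAt (fun y => swirlFreePart ur uz y 1) _ x :=
    hr.mul (hasFDerivAt_coord_div_rad 1 hx)
  have h2 : HasFDerivAt (fun y => swirlFreePart ur uz y 2) _ x := hasFDerivAt_comp_rad huz hx
  simp only [pd, h0.fderiv, h1.fderiv, h2.fderiv, radGrad, wTheta, add_apply, sub_apply, smul_apply,
    smul_eq_mul, PiLp.proj_apply, PiLp.single_apply, Fin.reduceEq, reduceIte]
  exact ⟨by ring, by ring, by ring⟩

variable {b : 𝓢(E3, E3)}

lemma lineDeriv_coordField_eq_pd (hb : ⇑b = swirlFreePart ur uz) (i j : Fin 3) (x : E3) :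
    ∂_{EuclideanSpace.basisFun (Fin 3) ℝ i}
      (coordField (EuclideanSpace.basisFun (Fin 3) ℝ) b j) x =
        pd i (fun y => swirlFreePart ur uz y j) x := by
  have hcoord : ⇑(coordField (EuclideanSpace.basisFun (Fin 3) ℝ) b j) =
      fun y => swirlFreePart ur uz y j := by
    ext y
    simp [coordField_apply, hb, EuclideanSpace.inner_single_left]
  rw [SchwartzMap.lineDerivOp_apply_eq_fderiv, hcoord, EuclideanSpace.basisFun_apply, pd]

lemma sum_lineDeriv_coordField_eq_zero (hb : ⇑b = swirlFreePart ur uz)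
    (hdiv : ∀ x, ∑ i, pd i (fun y => swirlFreePart ur uz y i) x = 0) :
    ∑ i, ∂_{EuclideanSpace.basisFun (Fin 3) ℝ i}
      (coordField (EuclideanSpace.basisFun (Fin 3) ℝ) b i) = 0 := by
  ext x
  simp_rw [_root_.sum_apply, lineDeriv_coordField_eq_pd hb, hdiv, _root_.zero_apply]

lemma exists_isAngular_curlEntry_eq (hur : Differentiable ℝ fun v : ℝ × ℝ => ur v.1 v.2)
    (huz : Differentiable ℝ fun v : ℝ × ℝ => uz v.1 v.2) (hb : ⇑b = swirlFreePart ur uz)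
    (k l : Fin 3) : ∃ φ, IsAngular φ ∧ ∀ x, rad x ≠ 0 →
      curlEntry (EuclideanSpace.basisFun (Fin 3) ℝ) b k l x = wTheta ur uz x * φ x := by
  have hcurl : ∀ k l x, curlEntry (EuclideanSpace.basisFun (Fin 3) ℝ) b k l x =
      pd k (fun y => swirlFreePart ur uz y l) x - pd l (fun y => swirlFreePart ur uz y k) x :=
    fun k l x => by rw [curlEntry, _root_.sub_apply, lineDeriv_coordField_eq_pd hb,
      lineDeriv_coordField_eq_pd hb]
  have hpd := fun x hx => pd_swirlFreePart_sub_pd_swirlFreePart hur huz (x := x) hx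
  have h0 : IsAngular fun x => x 0 / rad x := isAngular_coord_div_rad (by decide)
  have h1 : IsAngular fun x => x 1 / rad x := isAngular_coord_div_rad (by decide)
  fin_cases k <;> fin_cases l <;> simp only [hcurl]
  · exact ⟨0, isAngular_zero, fun x _ => by simp⟩
  · exact ⟨0, isAngular_zero, fun x hx => by simpa [sub_eq_zero] using (hpd x hx).1⟩
  · exact ⟨_, h0.neg, fun x hx => by simpa using congrArg Neg.neg (hpd x hx).2.1⟩
  · exact ⟨0, isAngular_zero, fun x hx => by simpa [sub_eq_zero] using (hpd x hx).1.symm⟩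
  · exact ⟨0, isAngular_zero, fun x _ => by simp⟩
  · exact ⟨_, h1.neg, fun x hx => by simpa using congrArg Neg.neg (hpd x hx).2.2⟩
  · exact ⟨_, h0, fun x hx => (hpd x hx).2.1⟩
  · exact ⟨_, h1, fun x hx => (hpd x hx).2.2⟩
  · exact ⟨0, isAngular_zero, fun x _ => by simp⟩

end AxisymmetricCurl

section Estimates

open scoped SchwartzMap LineDeriv

variable {ur uz : ℝ → ℝ → ℝ} {b : 𝓢(E3, E3)}

lemma eLpNorm_curlEntry_le (hur : Differentiable ℝ fun v : ℝ × ℝ => ur v.1 v.2)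
    (huz : Differentiable ℝ fun v : ℝ × ℝ => uz v.1 v.2) (hb : ⇑b = swirlFreePart ur uz)
    (p : ℝ≥0∞) (k l : Fin 3) :
    eLpNorm (curlEntry (EuclideanSpace.basisFun (Fin 3) ℝ) b k l) p volume ≤
      eLpNorm (wTheta ur uz) p volume := by
  obtain ⟨φ, hφ, hcurl⟩ := exists_isAngular_curlEntry_eq hur huz hb k l
  refine eLpNorm_mono_ae (ae_rad_ne_zero.mono fun x hx => ?_)
  rw [hcurl x hx, norm_mul]
  exact mul_le_of_le_one_right (norm_nonneg _) (hφ x hx).1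

lemma IsAngular.norm_fderiv_mul_le {w φ : E3 → ℝ} {x : E3} (hφ : IsAngular φ) (hx : rad x ≠ 0)
    (hw : DifferentiableAt ℝ w x) :
    ‖fderiv ℝ (fun y => w y * φ y) x‖ ≤ ‖fderiv ℝ w x‖ + 3 * ‖w x / rad x‖ := by
  obtain ⟨hle_one, hdiff, hgrad⟩ := hφ x hx
  rw [fderiv_fun_mul hw hdiff, add_comm]
  refine (norm_add_le _ _).trans ?_
  rw [norm_smul, norm_smul]
  refine add_le_add (mul_le_of_le_one_left (norm_nonneg _) hle_one) ?_
  calc ‖w x‖ * ‖fderiv ℝ φ x‖ ≤ ‖w x‖ * (3 / rad x) := by gcongr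
    _ = 3 * ‖w x / rad x‖ := by rw [norm_div, Real.norm_of_nonneg (rad_nonneg x)]; ring

lemma norm_fderiv_curlEntry_le (hur : ContDiff ℝ 2 fun v : ℝ × ℝ => ur v.1 v.2)
    (huz : ContDiff ℝ 2 fun v : ℝ × ℝ => uz v.1 v.2) (hb : ⇑b = swirlFreePart ur uz)
    (k l : Fin 3) {x : E3} (hx : rad x ≠ 0) :
    ‖fderiv ℝ (curlEntry (EuclideanSpace.basisFun (Fin 3) ℝ) b k l) x‖ ≤
      ‖fderiv ℝ (wTheta ur uz) x‖ + 3 * ‖wTheta ur uz x / rad x‖ := by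
  obtain ⟨φ, hφ, hcurl⟩ := exists_isAngular_curlEntry_eq (hur.differentiable two_ne_zero)
    (huz.differentiable two_ne_zero) hb k l
  have hev : curlEntry (EuclideanSpace.basisFun (Fin 3) ℝ) b k l =ᶠ[nhds x]
      fun y => wTheta ur uz y * φ y :=
    (continuous_rad.continuousAt.eventually_ne hx).mono fun y hy => hcurl y hy
  rw [hev.fderiv_eq]
  exact hφ.norm_fderiv_mul_le hx (differentiableAt_wTheta hur huz hx)

lemma eLpNorm_lineDeriv_curlEntry_le (hur : ContDiff ℝ 2 fun v : ℝ × ℝ => ur v.1 v.2)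
    (huz : ContDiff ℝ 2 fun v : ℝ × ℝ => uz v.1 v.2) (hb : ⇑b = swirlFreePart ur uz)
    {p : ℝ≥0∞} (hp : 1 ≤ p) (n k l : Fin 3) :
    eLpNorm (∂_{EuclideanSpace.basisFun (Fin 3) ℝ n}
        (curlEntry (EuclideanSpace.basisFun (Fin 3) ℝ) b k l) : 𝓢(E3, ℝ)) p volume ≤
      3 * (eLpNorm (fun x => fderiv ℝ (wTheta ur uz) x) p volume +
        eLpNorm (fun x => wTheta ur uz x / rad x) p volume) := by
  set w := wTheta ur uz
  have hw_grad : AEStronglyMeasurable (fun x => ‖fderiv ℝ w x‖) :=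
    (measurable_fderiv ℝ w).norm.aestronglyMeasurable
  have hw_div : AEStronglyMeasurable (fun x => (3 : ℝ) * ‖w x / rad x‖) :=
    (((continuous_wTheta hur huz).measurable.div
      continuous_rad.measurable).norm.const_mul 3).aestronglyMeasurable
  calc _ ≤ eLpNorm ((fun x => ‖fderiv ℝ w x‖) + fun x => 3 * ‖w x / rad x‖) p volume :=
        eLpNorm_mono_ae_real <| ae_rad_ne_zero.mono fun x hx => by
          rw [SchwartzMap.lineDerivOp_apply_eq_fderiv]
          refine (ContinuousLinearMap.unit_le_opNorm _ _ (by simp)).trans ?_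
          exact norm_fderiv_curlEntry_le hur huz hb k l hx
    _ ≤ eLpNorm (fun x => ‖fderiv ℝ w x‖) p volume +
          eLpNorm (fun x => (3 : ℝ) * ‖w x / rad x‖) p volume := eLpNorm_add_le hw_grad hw_div hp
    _ = eLpNorm (fun x => fderiv ℝ w x) p volume +
          3 * eLpNorm (fun x => w x / rad x) p volume := by
        have hsmul := eLpNorm_const_smul (3 : ℝ) (fun x => ‖w x / rad x‖) p (volume : Measure E3)
        rw [eLpNorm_norm, ← ofReal_norm, Real.norm_ofNat, ENNReal.ofReal_ofNat] at hsmul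
        rw [eLpNorm_norm, ← hsmul]
        rfl
    _ ≤ _ := by
        rw [mul_add]
        gcongr
        exact le_mul_of_one_le_left' (by norm_num)

theorem exists_eLpNorm_fderiv_swirlFreePart_le {p : ℝ} (hp : 1 < p) :
    ∃ C : NNReal, ∀ (ur uz : ℝ → ℝ → ℝ) (b : 𝓢(E3, E3)),
      Differentiable ℝ (fun v : ℝ × ℝ => ur v.1 v.2) →
      Differentiable ℝ (fun v : ℝ × ℝ => uz v.1 v.2) → ⇑b = swirlFreePart ur uz →
      (∀ x, ∑ i, pd i (fun y => swirlFreePart ur uz y i) x = 0) →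
      eLpNorm (fderiv ℝ (swirlFreePart ur uz)) (ENNReal.ofReal p) volume ≤
        C * eLpNorm (wTheta ur uz) (ENNReal.ofReal p) volume := by
  obtain ⟨C, hC⟩ := exists_eLpNorm_fderiv_le_sum_curlEntry (EuclideanSpace.basisFun (Fin 3) ℝ) hp
  refine ⟨C * 9, fun ur uz b hur huz hb hdiv => ?_⟩
  rw [← hb]
  refine (hC b (sum_lineDeriv_coordField_eq_zero hb hdiv)).trans ?_
  refine (mul_le_mul_right (Finset.sum_le_sum fun j _ => Finset.sum_le_sum fun k _ =>
    eLpNorm_curlEntry_le hur huz hb (ENNReal.ofReal p) k j) _).trans_eq ?_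
  simp only [Finset.sum_const, Finset.card_univ, Fintype.card_fin, nsmul_eq_mul, ENNReal.coe_mul,
    ENNReal.coe_ofNat, Nat.cast_ofNat]
  ring

theorem exists_eLpNorm_iteratedFDeriv_two_swirlFreePart_le {p : ℝ} (hp : 1 < p) :
    ∃ C : NNReal, ∀ (ur uz : ℝ → ℝ → ℝ) (b : 𝓢(E3, E3)),
      ContDiff ℝ 2 (fun v : ℝ × ℝ => ur v.1 v.2) → ContDiff ℝ 2 (fun v : ℝ × ℝ => uz v.1 v.2) →
      ⇑b = swirlFreePart ur uz → (∀ x, ∑ i, pd i (fun y => swirlFreePart ur uz y i) x = 0) →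
      eLpNorm (iteratedFDeriv ℝ 2 (swirlFreePart ur uz)) (ENNReal.ofReal p) volume ≤
        C * (eLpNorm (fun x => fderiv ℝ (wTheta ur uz) x) (ENNReal.ofReal p) volume +
          eLpNorm (fun x => wTheta ur uz x / rad x) (ENNReal.ofReal p) volume) := by
  obtain ⟨C, hC⟩ :=
    exists_eLpNorm_iteratedFDeriv_two_le_sum_curlEntry (EuclideanSpace.basisFun (Fin 3) ℝ) hp
  refine ⟨C * 81, fun ur uz b hur huz hb hdiv => ?_⟩
  rw [← hb]
  refine (hC b (sum_lineDeriv_coordField_eq_zero hb hdiv)).trans ?_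
  refine (mul_le_mul_right (Finset.sum_le_sum fun i _ => Finset.sum_le_sum fun j _ =>
    Finset.sum_le_sum fun k _ => eLpNorm_lineDeriv_curlEntry_le hur huz hb
      (ENNReal.one_le_ofReal.2 hp.le) i k j) _).trans_eq ?_
  simp only [Finset.sum_const, Finset.card_univ, Fintype.card_fin, nsmul_eq_mul, ENNReal.coe_mul,
    ENNReal.coe_ofNat, Nat.cast_ofNat]
  ring

lemma exists_schwartzMap_eq_swirlFreePart {u : 𝓢(E3, E3)} {uθ : ℝ → ℝ → ℝ}
    (huz : Continuous fun v : ℝ × ℝ => uz v.1 v.2) (hax : AxisymVec u ur uθ uz)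
    (hdiv : ∀ x, ∑ i, pd i (fun y => u y i) x = 0) :
    ∃ b : 𝓢(E3, E3), ⇑b = swirlFreePart ur uz ∧
      ∀ x, ∑ i, pd i (fun y => swirlFreePart ur uz y i) x = 0 := by
  rw [swirlFreePart_eq_mirrorPart u.continuous huz hax]
  obtain ⟨b, hb⟩ := exists_schwartzMap_eq_mirrorPart u
  refine ⟨b, hb, fun x => ?_⟩
  rw [sum_pd_mirrorPart u.differentiable, hdiv, hdiv, add_zero, mul_zero]

theorem axisym_swirl_free_gradient_estimates_general {p : ℝ} (hp : 1 < p) :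
    ∃ C : ℝ, 0 < C ∧
      ∀ (u : 𝓢(E3, E3)) (ur uθ uz : ℝ → ℝ → ℝ),
        ContDiff ℝ 2 (fun v : ℝ × ℝ => ur v.1 v.2) →
        ContDiff ℝ 2 (fun v : ℝ × ℝ => uz v.1 v.2) →
        AxisymVec u ur uθ uz →
        (∀ x, ∑ i, pd i (fun y => u y i) x = 0) →
        eLpNorm (fun x => fderiv ℝ (swirlFreePart ur uz) x) (ENNReal.ofReal p) volume ≤
            ENNReal.ofReal C * eLpNorm (wTheta ur uz) (ENNReal.ofReal p) volume ∧
        eLpNorm (iteratedFDeriv ℝ 2 (swirlFreePart ur uz)) (ENNReal.ofReal p) volume ≤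
            ENNReal.ofReal C *
              (eLpNorm (fun x => fderiv ℝ (wTheta ur uz) x) (ENNReal.ofReal p) volume +
                eLpNorm (fun x => wTheta ur uz x / rad x) (ENNReal.ofReal p) volume) := by
  obtain ⟨C₁, hC₁⟩ := exists_eLpNorm_fderiv_swirlFreePart_le hp
  obtain ⟨C₂, hC₂⟩ := exists_eLpNorm_iteratedFDeriv_two_swirlFreePart_le hp
  refine ⟨(max C₁ C₂ + 1 : NNReal), NNReal.coe_pos.2 (by positivity), ?_⟩
  intro u ur uθ uz hur huz hax hdiv
  obtain ⟨b, hb, hbdiv⟩ := exists_schwartzMap_eq_swirlFreePart huz.continuous hax hdiv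
  rw [ENNReal.ofReal_coe_nnreal]
  constructor
  · refine (hC₁ ur uz b (hur.differentiable two_ne_zero) (huz.differentiable two_ne_zero)
      hb hbdiv).trans ?_
    gcongr
    exact (le_max_left C₁ C₂).trans le_self_add
  · refine (hC₂ ur uz b hur huz hb hbdiv).trans ?_
    gcongr
    exact (le_max_right C₁ C₂).trans le_self_add

end Estimates

/-- For `1 < p < ∞` there is `C_p > 0` such that for every smooth
divergence-free axially symmetric vector field `u = u^r e_r + u^θ e_θ + u^z e_z`
on `ℝ³` with sufficient decay, the swirl-free part `b = u^r e_r + u^z e_z`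
satisfies `‖∇b‖_{L^p} ≤ C_p ‖w^θ‖_{L^p}` and
`‖∇²b‖_{L^p} ≤ C_p (‖∇w^θ‖_{L^p} + ‖w^θ/r‖_{L^p})`. -/
theorem axisym_swirl_free_gradient_estimates (p : ℝ) (hp : 1 < p) :
    ∃ C : ℝ, 0 < C ∧
      ∀ (u : E3 → E3) (ur uθ uz : ℝ → ℝ → ℝ),
        ContDiff ℝ (⊤ : ℕ∞) u → HasCompactSupport u →
        ContDiff ℝ (⊤ : ℕ∞) (fun v : ℝ × ℝ => ur v.1 v.2) →
        ContDiff ℝ (⊤ : ℕ∞) (fun v : ℝ × ℝ => uθ v.1 v.2) →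
        ContDiff ℝ (⊤ : ℕ∞) (fun v : ℝ × ℝ => uz v.1 v.2) →
        AxisymVec u ur uθ uz →
        (∀ x : E3, (∑ i : Fin 3, pd i (fun y => u y i) x) = 0) →
        eLpNorm (fun x => fderiv ℝ (swirlFreePart ur uz) x) (ENNReal.ofReal p) volume
            ≤ ENNReal.ofReal C * eLpNorm (wTheta ur uz) (ENNReal.ofReal p) volume
          ∧
        eLpNorm (iteratedFDeriv ℝ 2 (swirlFreePart ur uz)) (ENNReal.ofReal p) volume
            ≤ ENNReal.ofReal C
              * (eLpNorm (fun x => fderiv ℝ (wTheta ur uz) x) (ENNReal.ofReal p) volume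
                 + eLpNorm (fun x => wTheta ur uz x / rad x) (ENNReal.ofReal p) volume) := by
  obtain ⟨C, hC, h⟩ := axisym_swirl_free_gradient_estimates_general hp
  exact ⟨C, hC, fun u ur uθ uz hu hsupp hur _ huz =>
    h (hsupp.toSchwartzMap hu) ur uθ uz (contDiff_infty.1 hur 2) (contDiff_infty.1 huz 2)⟩
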